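/- arXiv:1808.01605 — 4 statements merged into one kernel-verified Lean document; each statement's English description precedes it below -/
import Mathlib

section
/- For every real number x ≥ 1 there exists a positive number k(x) such that every finite simple graph G with χ_f(G) ≥ k(x) contains a triangle-free subgraph H with χ_f(H) ≥ x. -/
open scoped Classical

/-- The fractional chromatic number of a finite simple graph `G`: the infimum of
`∑_I y I` over nonnegative weightings `y` of the independent sets of `G` such that
every vertex is covered with total weight at least `1`. -/
noncomputable def fracChrom {V : Type} [Fintype V] (G : SimpleGraph V) : ℝ :=
  sInf { c : ℝ |
    ∃ y : Finset V → ℝ,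
      (∀ I, 0 ≤ y I) ∧
      (∀ I : Finset V, y I ≠ 0 → ∀ u ∈ I, ∀ v ∈ I, ¬ G.Adj u v) ∧
      (∀ v : V, 1 ≤ ∑ I ∈ Finset.univ.filter (fun I : Finset V => v ∈ I), y I) ∧
      c = ∑ I : Finset V, y I }
theorem four_ineq (a0 a1 G0 G1 C : ℝ) (h0 : 0 ≤ a0) (h1 : 0 ≤ a1) (g0 : 0 ≤ G0) (g1 : 0 ≤ G1)
    (hp : a0 * G0 ≤ C) (hq : a1 * G1 ≤ C) (hr : a1 * G0 ≤ 2 * C) (hs : a0 * G1 ≤ 2 * C) :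
    (a0 + a1) * (G0 + G1) ≤ 9 / 2 * C := by
  have hC : 0 ≤ C := le_trans (mul_nonneg h0 g0) hp
  have hprod : (a1 * G0) * (a0 * G1) ≤ C * C := by
    calc (a1 * G0) * (a0 * G1) = (a0 * G0) * (a1 * G1) := by ring
      _ ≤ C * C := mul_le_mul hp hq (mul_nonneg h1 g1) hC
  have hr0 : 0 ≤ a1 * G0 := mul_nonneg h1 g0
  have hs0 : 0 ≤ a0 * G1 := mul_nonneg h0 g1
  have key : a1 * G0 + a0 * G1 ≤ 5 / 2 * C := by
    generalize a1 * G0 = r at *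
    generalize a0 * G1 = s at *
    by_contra hcon
    push Not at hcon
    nlinarith [mul_nonneg (sub_nonneg.2 hr) (sub_nonneg.2 hs)]
  nlinarith

theorem cube_exists (d : ℕ) : ∃ (X : Type) (_ : Fintype X) (ag : X → X → ℕ),
    Fintype.card X = 2 ^ d ∧ (∀ x y, ag x y = ag y x) ∧ (∀ x, ag x x = d) ∧
    (∀ x y z, d ≤ ag x y + ag y z + ag x z) ∧
    (∀ (A : Finset X) (g : X → ℝ), (∀ x, 0 ≤ g x) → (∀ a ∈ A, ∀ x, g x ≤ 2 ^ (ag x a)) →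
      (A.card : ℝ) * ∑ x, g x ≤ (9 / 2) ^ d) := by
  induction d with
  | zero =>
    refine ⟨Unit, inferInstance, fun _ _ => 0, by simp, by simp, by simp, by simp, ?_⟩
    intro A g hg hA
    by_cases hne : A.Nonempty
    · obtain ⟨a, ha⟩ := hne
      have h1 := hA a ha ()
      have h2 : (A.card : ℝ) ≤ 1 := by
        exact_mod_cast (Finset.card_le_univ A).trans (by simp)
      have := hg ()
      simp at h1 ⊢
      nlinarith
    · rw [Finset.not_nonempty_iff_eq_empty] at hne
      simp [hne]
  | succ d ih =>
    obtain ⟨X, iX, ag, hcard, hsymm, hrefl, htri, hmain⟩ := ih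
    refine ⟨Bool × X, inferInstance,
      fun p q => (if p.1 = q.1 then 1 else 0) + ag p.2 q.2, ?_, ?_, ?_, ?_, ?_⟩
    · simp [hcard, pow_succ, mul_comm]
    · intro p q
      simp only [hsymm p.2 q.2, eq_comm]
    · intro p
      simp [hrefl, add_comm]
    · rintro ⟨a, x⟩ ⟨b, y⟩ ⟨c, z⟩
      have := htri x y z
      cases a <;> cases b <;> cases c <;> simp <;> omega
    · intro A g hg hA
      have hsum : ∑ p, g p = ∑ x, g (true, x) + ∑ x, g (false, x) := by
        rw [Fintype.sum_prod_type]
        simp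
      let S : Bool → Finset X := fun b => Finset.univ.filter (fun x => (b, x) ∈ A)
      have hAcard : (A.card : ℝ) = (S true).card + (S false).card := by
        have : A.card = (S true).card + (S false).card := by
          have h := Finset.card_eq_sum_card_fiberwise (s := A) (t := Finset.univ) (f := Prod.fst)
            (fun _ _ => Finset.mem_coe.2 (Finset.mem_univ _))
          rw [h]
          simp only [Fintype.univ_bool, Finset.mem_singleton, Bool.true_eq_false, not_false_eq_true, Finset.sum_insert, Finset.sum_singleton]
          have hS : ∀ b, (A.filter (fun p => p.1 = b)).card = (S b).card := by
            intro b
            symm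
            refine Finset.card_bij (fun x _ => (b, x)) ?_ ?_ ?_
            · intro x hx
              simp only [S, Finset.mem_filter, Finset.mem_univ, true_and] at hx
              exact Finset.mem_filter.2 ⟨hx, rfl⟩
            · intro x _ y _ h
              exact (Prod.mk.inj h).2
            · rintro ⟨b', x⟩ h
              simp only [Finset.mem_filter] at h
              obtain ⟨h1, rfl⟩ := h
              exact ⟨x, by simp [S, h1], rfl⟩
          rw [← hS, ← hS]
        exact_mod_cast this
      have key1 : ∀ b, ((S b).card : ℝ) * ∑ x, g (b, x) ≤ 2 * (9 / 2) ^ d := by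
        intro b
        have := hmain (S b) (fun x => g (b, x) / 2) (fun x => by have := hg (b, x); positivity) (by
          intro a ha x
          simp only [S, Finset.mem_filter, Finset.mem_univ, true_and] at ha
          have := hA _ ha (b, x)
          simp only [if_true, pow_add, pow_one] at this
          linarith)
        rw [← Finset.sum_div] at this
        linarith
      have key2 : ∀ b, ((S (!b)).card : ℝ) * ∑ x, g (b, x) ≤ (9 / 2) ^ d := by
        intro b
        refine hmain (S (!b)) (fun x => g (b, x)) (fun x => hg _) ?_
        intro a ha x
        simp only [S, Finset.mem_filter, Finset.mem_univ, true_and] at ha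
        have := hA _ ha (b, x)
        simpa using this
      rw [hsum, hAcard, pow_succ]
      have := four_ineq (S false).card (S true).card (∑ x, g (true, x)) (∑ x, g (false, x)) ((9/2)^d)
        (by positivity) (by positivity) (Finset.sum_nonneg fun _ _ => hg _) (Finset.sum_nonneg fun _ _ => hg _)
        (by simpa using key2 true) (by simpa using key2 false) (key1 true) (key1 false)
      linarith

theorem gamma_exists (K : ℕ) (hK : 1 ≤ K) : ∃ (X : Type) (_ : Fintype X) (Γ : SimpleGraph X),
    Nonempty X ∧ (∀ x y z, Γ.Adj x y → Γ.Adj y z → Γ.Adj x z → False) ∧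
    (∀ A B : Finset X, (∀ a ∈ A, ∀ b ∈ B, ¬ Γ.Adj a b) →
      K * A.card ≤ Fintype.card X ∨ K * B.card ≤ Fintype.card X) := by
  obtain ⟨t, ht⟩ := exists_pow_lt_of_lt_one (y := (729 / 1024 : ℝ)) (x := 1 / (K : ℝ) ^ 2)
    (by positivity) (by norm_num)
  obtain ⟨X, iX, ag, hcard, hsymm, hrefl, htri, hmain⟩ := cube_exists (3 * t + 1)
  refine ⟨X, iX, ⟨fun x y => ag x y ≤ t, ⟨fun x y h => by rw [hsymm]; exact h⟩, ⟨fun x h => by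
    rw [hrefl] at h; omega⟩⟩, ?_, ?_, ?_⟩
  · apply Fintype.card_pos_iff.1
    rw [hcard]; positivity
  · intro x y z h1 h2 h3
    have := htri x y z
    simp only at h1 h2 h3
    omega
  · intro A B hAB
    by_contra hcon
    push Not at hcon
    obtain ⟨h1, h2⟩ := hcon
    have h := hmain A (fun x => if x ∈ B then 2 ^ (t + 1) else 0) (by intro x; positivity) (by
      intro a ha x
      split_ifs with hx
      · apply pow_le_pow_right₀ (by norm_num)
        have := hAB a ha x hx
        simp only [not_le] at this
        rw [hsymm]; omega
      · positivity)
    have hs : ∑ x : X, (if x ∈ B then (2 : ℝ) ^ (t + 1) else 0) = B.card * 2 ^ (t + 1) := by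
      simp [Finset.sum_ite_mem]
    rw [hs] at h
    rw [hcard] at h1 h2
    have h1' : (2 : ℝ) ^ (3 * t + 1) < K * A.card := by exact_mod_cast h1
    have h2' : (2 : ℝ) ^ (3 * t + 1) < K * B.card := by exact_mod_cast h2
    have h3 : (2 : ℝ) ^ (3 * t + 1) * 2 ^ (3 * t + 1) < (K * A.card) * (K * B.card) := by
      apply mul_lt_mul'' h1' h2' <;> positivity
    have hKpos : (0 : ℝ) < K := by exact_mod_cast hK
    have h4 : (2 : ℝ) ^ (3 * t + 1) * 2 ^ (3 * t + 1) * 2 ^ (t + 1) < K ^ 2 * (9 / 2) ^ (3 * t + 1) := by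
      have h5 : (2 : ℝ) ^ (3 * t + 1) * 2 ^ (3 * t + 1) * 2 ^ (t + 1) <
        (K * A.card) * (K * B.card) * 2 ^ (t + 1) := by
        apply mul_lt_mul_of_pos_right h3; positivity
      have h6 : (K : ℝ) ^ 2 * (A.card * (B.card * 2 ^ (t + 1))) ≤ K ^ 2 * (9 / 2) ^ (3 * t + 1) :=
        mul_le_mul_of_nonneg_left h (by positivity)
      nlinarith
    have e1 : (2 : ℝ) ^ (3 * t + 1) * 2 ^ (3 * t + 1) * 2 ^ (t + 1) = 8 * 128 ^ t := by
      rw [show (128 : ℝ) = 2 ^ 7 by norm_num, ← pow_mul, ← pow_add, ← pow_add,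
        show (8 : ℝ) = 2 ^ 3 by norm_num, ← pow_add]
      congr 1; ring
    have e2 : (9 / 2 : ℝ) ^ (3 * t + 1) = 9 / 2 * (729 / 1024) ^ t * 128 ^ t := by
      rw [pow_succ, pow_mul, mul_assoc, ← mul_pow]; norm_num; ring
    rw [e1, e2] at h4
    rw [lt_div_iff₀ (by positivity)] at ht
    have h128 : (0 : ℝ) < 128 ^ t := by positivity
    nlinarith [mul_lt_mul_of_pos_right ht h128]

theorem resample_count {V X : Type} [Fintype V] [Fintype X] (v : V) (F : Finset (V → X))
    (Z : (V → X) → Finset X) (K : ℕ)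
    (hF : ∀ l c, l ∈ F → Function.update l v c ∈ F)
    (hZ : ∀ l c, Z (Function.update l v c) = Z l)
    (hK : ∀ l, K * (Z l).card ≤ Fintype.card X) (hX : 0 < Fintype.card X) :
    K * (F.filter (fun l => l v ∈ Z l)).card ≤ F.card := by
  have h1 : (F.filter (fun l => l v ∈ Z l)).card * Fintype.card X ≤ ∑ l ∈ F, (Z l).card := by
    rw [← Finset.card_sigma, ← Finset.card_univ, ← Finset.card_product]
    refine Finset.card_le_card_of_injOn
      (fun p => (⟨Function.update p.1 v p.2, p.1 v⟩ : Sigma fun _ : V → X => X)) ?_ ?_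
    · rintro ⟨l, c⟩ h
      simp only [Finset.coe_product, Set.mem_prod, Finset.mem_coe, Finset.mem_filter] at h
      simp only [Finset.mem_coe, Finset.mem_sigma]
      exact ⟨hF _ _ h.1.1, by rw [hZ]; exact h.1.2⟩
    · rintro ⟨l, c⟩ _ ⟨l', c'⟩ _ h
      simp only [Sigma.mk.injEq, heq_eq_eq] at h
      obtain ⟨h1, h2⟩ := h
      have hc : c = c' := by simpa using congrFun h1 v
      have hl : l = l' := by
        funext u
        by_cases hu : u = v
        · rw [hu]; exact h2
        · simpa [hu] using congrFun h1 u
      rw [hc, hl]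
  have h2 : K * ∑ l ∈ F, (Z l).card ≤ F.card * Fintype.card X := by
    rw [Finset.mul_sum, ← smul_eq_mul (a := F.card)]
    exact Finset.sum_le_card_nsmul _ _ _ (fun l _ => hK l)
  have h3 : K * ((F.filter (fun l => l v ∈ Z l)).card * Fintype.card X) ≤ F.card * Fintype.card X :=
    le_trans (Nat.mul_le_mul_left K h1) h2
  rw [← mul_assoc] at h3
  exact Nat.le_of_mul_le_mul_right h3 hX

theorem multi_count {V X : Type} [Fintype V] [Fintype X] (T : Finset V)
    (Z : V → (V → X) → Finset X) (K : ℕ)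
    (hZ : ∀ u v l c, v ∉ T → Z u (Function.update l v c) = Z u l)
    (hK : ∀ u l, K * (Z u l).card ≤ Fintype.card X) (hX : 0 < Fintype.card X)
    (U : Finset V) (hU : ∀ u ∈ U, u ∉ T) :
    K ^ U.card * (Finset.univ.filter (fun l : V → X => ∀ u ∈ U, l u ∈ Z u l)).card
      ≤ Fintype.card (V → X) := by
  induction U using Finset.induction_on with
  | empty => simp
  | insert v U hv ih =>
    have ih' := ih (fun u hu => hU u (Finset.mem_insert_of_mem hu))
    have hvT := hU v (Finset.mem_insert_self _ _)
    have := resample_count v (Finset.univ.filter (fun l : V → X => ∀ u ∈ U, l u ∈ Z u l)) (Z v) K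
      (by
        intro l c hl
        simp only [Finset.mem_filter, Finset.mem_univ, true_and] at hl ⊢
        intro u hu
        rw [hZ _ _ _ _ hvT, Function.update_of_ne (by rintro rfl; exact hv hu)]
        exact hl u hu)
      (fun l c => hZ _ _ _ _ hvT) (hK v) hX
    rw [Finset.filter_filter] at this
    have e : (Finset.univ.filter (fun l : V → X => ∀ u ∈ insert v U, l u ∈ Z u l)) =
      Finset.univ.filter (fun l : V → X => (∀ u ∈ U, l u ∈ Z u l) ∧ l v ∈ Z v l) := by
      ext l
      simp only [Finset.mem_filter, Finset.mem_univ, true_and, Finset.forall_mem_insert]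
      tauto
    rw [e, Finset.card_insert_of_notMem hv, pow_succ, mul_assoc]
    exact le_trans (Nat.mul_le_mul_left _ this) ih'

theorem labels_exist {V X : Type} [Fintype V] [Fintype X] [Nonempty X] (G : SimpleGraph V)
    (pos : V → ℕ) (hpos : Function.Injective pos) (q : ℕ)
    (Z : Finset X → Finset X) (hZ : ∀ L, 32 ^ q * (Z L).card ≤ Fintype.card X) :
    ∃ l : V → X, ∀ j : ℕ, ∀ T : Finset V, (∀ u ∈ T, pos u + 1 < 2 ^ (j + 1)) →
      q * (Finset.univ.filter (fun v => (2 ^ j ≤ pos v + 1 ∧ pos v + 1 < 2 ^ (j + 1)) ∧ v ∉ T ∧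
        l v ∈ Z ((T.filter (fun u => G.Adj v u)).image l))).card < 2 ^ j := by
  by_contra hcon
  push Not at hcon
  have hX : 0 < Fintype.card X := Fintype.card_pos
  let Vle : ℕ → Finset V := fun j => Finset.univ.filter (fun v => pos v + 1 < 2 ^ (j + 1))
  let Veq : ℕ → Finset V := fun j =>
    Finset.univ.filter (fun v => 2 ^ j ≤ pos v + 1 ∧ pos v + 1 < 2 ^ (j + 1))
  let Pairs : ℕ → Finset (Finset V × Finset V) := fun j =>
    ((Vle j).powerset ×ˢ (Veq j).powerset).filter
      (fun p => (∀ u ∈ p.2, u ∉ p.1) ∧ 2 ^ j ≤ q * p.2.card)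
  let Bad : Finset V × Finset V → Finset (V → X) := fun p =>
    Finset.univ.filter (fun l => ∀ u ∈ p.2, l u ∈ Z ((p.1.filter (fun w => G.Adj u w)).image l))
  obtain ⟨J, hJ⟩ : ∃ J : ℕ, ∀ v, pos v < J := by
    refine ⟨Finset.univ.sup pos + 1, fun v => ?_⟩
    exact Nat.lt_succ_of_le (Finset.le_sup (Finset.mem_univ v))
  have hcover : (Finset.univ : Finset (V → X)) ⊆
      (Finset.range (J + 1)).biUnion (fun j => (Pairs j).biUnion Bad) := by
    intro l _
    obtain ⟨j, T, hT, hj⟩ := hcon l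
    have hne : (Finset.univ.filter (fun v => (2 ^ j ≤ pos v + 1 ∧ pos v + 1 < 2 ^ (j + 1)) ∧ v ∉ T ∧
        l v ∈ Z ((T.filter (fun u => G.Adj v u)).image l))).Nonempty := by
      by_contra h
      rw [Finset.not_nonempty_iff_eq_empty] at h
      rw [h] at hj
      simp at hj
    obtain ⟨v, hv⟩ := hne
    have hjJ : j < J + 1 := by
      have h1 := (Finset.mem_filter.1 hv).2.1.1
      have h2 := hJ v
      have h3 : j < 2 ^ j := Nat.lt_two_pow_self
      omega
    simp only [Finset.mem_biUnion, Finset.mem_range]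
    refine ⟨j, hjJ, (T, Finset.univ.filter (fun v => (2 ^ j ≤ pos v + 1 ∧ pos v + 1 < 2 ^ (j + 1)) ∧ v ∉ T ∧
        l v ∈ Z ((T.filter (fun u => G.Adj v u)).image l))), ?_, ?_⟩
    rotate_left
    · simp only [Bad, Finset.mem_filter, Finset.mem_univ, true_and]
      intro u hu
      exact hu.2.2
    · simp only [Pairs, Finset.mem_filter, Finset.mem_product, Finset.mem_powerset]
      refine ⟨⟨?_, ?_⟩, ?_, hj⟩
      · intro u hu
        simp [Vle, hT u hu]
      · intro u hu
        exact Finset.mem_filter.2 ⟨Finset.mem_univ _, (Finset.mem_filter.1 hu).2.1⟩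
      · intro u hu
        exact hu.2.2.1
  have hVle : ∀ j, (Vle j).card ≤ 2 ^ (j + 1) := by
    intro j
    rw [← Finset.card_range (2 ^ (j + 1))]
    refine Finset.card_le_card_of_injOn pos ?_ hpos.injOn
    intro v hv
    simp only [Vle, Finset.coe_filter, Finset.mem_univ, true_and, Set.mem_ofPred_eq] at hv
    simp only [Finset.coe_range, Set.mem_Iio]
    omega
  have hVeq : ∀ j, (Veq j).card ≤ 2 ^ j := by
    intro j
    have : (Finset.Ico (2 ^ j) (2 ^ (j + 1))).card = 2 ^ j := by
      rw [Nat.card_Ico, pow_succ]; omega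
    rw [← this]
    refine Finset.card_le_card_of_injOn (fun v => pos v + 1) ?_ ?_
    · intro v hv
      simpa [Veq] using hv
    · intro a _ b _ h
      exact hpos (Nat.succ_injective h)
  have hPairs : ∀ j, (Pairs j).card ≤ 8 ^ (2 ^ j) := by
    intro j
    refine (Finset.card_filter_le _ _).trans ?_
    rw [Finset.card_product, Finset.card_powerset, Finset.card_powerset]
    calc 2 ^ (Vle j).card * 2 ^ (Veq j).card ≤ 2 ^ (2 ^ (j + 1)) * 2 ^ (2 ^ j) :=
          Nat.mul_le_mul (Nat.pow_le_pow_right (by norm_num) (hVle j))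
            (Nat.pow_le_pow_right (by norm_num) (hVeq j))
      _ = 8 ^ (2 ^ j) := by
          rw [show (8 : ℕ) = 2 ^ 3 by norm_num, ← pow_mul, ← pow_add]
          congr 1; ring
  have hBad : ∀ j, ∀ p ∈ Pairs j, 32 ^ (2 ^ j) * (Bad p).card ≤ Fintype.card (V → X) := by
    rintro j ⟨T, U⟩ hp
    simp only [Pairs, Finset.mem_filter] at hp
    have := multi_count T (fun u l => Z ((T.filter (fun w => G.Adj u w)).image l)) (32 ^ q) (by
      intro u v l c hv
      congr 1
      apply Finset.image_congr
      intro w hw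
      have hw' : w ∈ T := (Finset.mem_filter.1 hw).1
      exact Function.update_of_ne (by rintro rfl; exact hv hw') _ _)
      (fun u l => hZ _) hX U hp.2.1
    rw [← pow_mul] at this
    refine le_trans (Nat.mul_le_mul_right _ ?_) this
    exact Nat.pow_le_pow_right (by norm_num) hp.2.2
  have hN : (0 : ℝ) < Fintype.card (V → X) := by exact_mod_cast Fintype.card_pos
  have hj : ∀ j, (((Pairs j).biUnion Bad).card : ℝ) ≤ (1 / 4) ^ (j + 1) * Fintype.card (V → X) := by
    intro j
    have h1 : (((Pairs j).biUnion Bad).card : ℝ) ≤ ∑ p ∈ Pairs j, ((Bad p).card : ℝ) := by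
      exact_mod_cast Finset.card_biUnion_le
    have h2 : ∑ p ∈ Pairs j, ((Bad p).card : ℝ) ≤
        ∑ p ∈ Pairs j, (1 / 32) ^ (2 ^ j) * (Fintype.card (V → X) : ℝ) := by
      apply Finset.sum_le_sum
      intro p hp
      have : (32 : ℝ) ^ (2 ^ j) * (Bad p).card ≤ Fintype.card (V → X) := by
        exact_mod_cast hBad j p hp
      rw [one_div, inv_pow, inv_mul_eq_div, le_div_iff₀ (by positivity)]
      linarith
    rw [Finset.sum_const, nsmul_eq_mul, ← mul_assoc] at h2
    refine h1.trans (h2.trans (mul_le_mul_of_nonneg_right ?_ hN.le))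
    calc ((Pairs j).card : ℝ) * (1 / 32) ^ (2 ^ j) ≤ 8 ^ (2 ^ j) * (1 / 32) ^ (2 ^ j) := by
          apply mul_le_mul_of_nonneg_right _ (by positivity)
          exact_mod_cast hPairs j
      _ = (1 / 4) ^ (2 ^ j) := by rw [← mul_pow]; norm_num
      _ ≤ (1 / 4) ^ (j + 1) := by
          apply pow_le_pow_of_le_one (by norm_num) (by norm_num)
          exact Nat.lt_two_pow_self
  have htot : (Fintype.card (V → X) : ℝ) ≤
      ∑ j ∈ Finset.range (J + 1), (1 / 4) ^ (j + 1) * (Fintype.card (V → X) : ℝ) := by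
    calc (Fintype.card (V → X) : ℝ) ≤ ∑ j ∈ Finset.range (J + 1), (((Pairs j).biUnion Bad).card : ℝ) := by
          have := (Finset.card_le_card hcover).trans Finset.card_biUnion_le
          rw [Finset.card_univ] at this
          exact_mod_cast this
      _ ≤ _ := Finset.sum_le_sum fun j _ => hj j
  rw [← Finset.sum_mul] at htot
  have hgeo : ∑ j ∈ Finset.range (J + 1), (1 / 4 : ℝ) ^ (j + 1) < 1 := by
    have : ∀ n : ℕ, ∑ j ∈ Finset.range n, (1 / 4 : ℝ) ^ (j + 1) = 1 / 3 - 1 / 3 * (1 / 4) ^ n := by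
      intro n
      induction n with
      | zero => simp
      | succ n ih => rw [Finset.sum_range_succ, ih]; ring
    rw [this]
    have : (0 : ℝ) < (1 / 4) ^ (J + 1) := by positivity
    linarith
  nlinarith

theorem greedy_kernel {V : Type} [Fintype V] (A : V → V → Prop) (hA : ∀ u v, A u v → A v u)
    (hirr : ∀ v, ¬ A v v) (pos : V → ℕ) (S : Finset V) :
    ∃ T ⊆ S, (∀ u ∈ T, ∀ v ∈ T, ¬ A u v) ∧
      ∀ v ∈ S, v ∉ T → ∃ u ∈ T, A v u ∧ pos u ≤ pos v := by
  induction S using Finset.induction_on_max_value pos with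
  | empty => exact ⟨∅, by simp, by simp, by simp⟩
  | insert v S hv hmax ih =>
    obtain ⟨T, hTS, hind, hdom⟩ := ih
    by_cases h : ∃ u ∈ T, A v u
    · obtain ⟨u, hu, huv⟩ := h
      refine ⟨T, hTS.trans (Finset.subset_insert _ _), hind, ?_⟩
      intro w hw hwT
      rcases Finset.mem_insert.1 hw with rfl | hw
      · exact ⟨u, hu, huv, hmax u (hTS hu)⟩
      · exact hdom w hw hwT
    · push Not at h
      refine ⟨insert v T, Finset.insert_subset_insert _ hTS, ?_, ?_⟩
      · intro a ha b hb
        rcases Finset.mem_insert.1 ha with rfl | ha' <;> rcases Finset.mem_insert.1 hb with rfl | hb'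
        · exact hirr _
        · exact h b hb'
        · exact fun hab => h a ha' (hA _ _ hab)
        · exact hind a ha' b hb'
      · intro w hw hwT
        rcases Finset.mem_insert.1 hw with rfl | hw
        · exact absurd (Finset.mem_insert_self _ _) hwT
        · obtain ⟨u, hu, h2⟩ := hdom w hw (fun h => hwT (Finset.mem_insert_of_mem h))
          exact ⟨u, Finset.mem_insert_of_mem hu, h2⟩

theorem le_fracChrom {V : Type} [Fintype V] (G : SimpleGraph V) (w : V → ℝ) (hw : ∀ v, 0 ≤ w v)
    (x : ℝ) (hW : 0 < ∑ v, w v)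
    (h : ∀ S : Finset V, (∀ u ∈ S, ∀ v ∈ S, ¬ G.Adj u v) → x * ∑ v ∈ S, w v ≤ ∑ v, w v) :
    x ≤ fracChrom G := by
  rcases le_or_gt x 0 with hx | hx
  · refine hx.trans (Real.sInf_nonneg ?_)
    rintro c ⟨y, hy, -, -, rfl⟩
    exact Finset.sum_nonneg fun I _ => hy I
  unfold fracChrom
  apply le_csInf
  · refine ⟨_, fun I => if I.card = 1 then 1 else 0, ?_, ?_, ?_, rfl⟩
    · intro I; positivity
    · intro I hI u hu v hv
      have h1 : I.card = 1 := by
        by_contra hne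
        simp [hne] at hI
      obtain ⟨a, rfl⟩ := Finset.card_eq_one.1 h1
      rw [Finset.mem_singleton] at hu hv
      subst hu; subst hv
      exact G.irrefl
    · intro v
      have := Finset.single_le_sum (f := fun I : Finset V => if I.card = 1 then (1 : ℝ) else 0)
        (s := Finset.univ.filter (fun I : Finset V => v ∈ I)) (fun I _ => by positivity)
        (a := {v}) (by simp)
      simpa using this
  · rintro c ⟨y, hy, hind, hcov, rfl⟩
    have h1 : ∑ v, w v ≤ ∑ v, w v * ∑ I ∈ Finset.univ.filter (fun I : Finset V => v ∈ I), y I := by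
      apply Finset.sum_le_sum
      intro v _
      nlinarith [hw v, hcov v]
    have h2 : ∑ v, w v * ∑ I ∈ Finset.univ.filter (fun I : Finset V => v ∈ I), y I =
        ∑ I : Finset V, y I * ∑ v ∈ I, w v := by
      simp_rw [Finset.sum_filter, Finset.mul_sum]
      rw [Finset.sum_comm]
      apply Finset.sum_congr rfl
      intro I _
      rw [← Finset.sum_filter_add_sum_filter_not Finset.univ (fun v => v ∈ I)]
      rw [Finset.sum_eq_zero (s := Finset.univ.filter (fun v => v ∉ I)), add_zero]
      · have : Finset.univ.filter (fun v => v ∈ I) = I := by ext; simp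
        rw [this]
        apply Finset.sum_congr rfl
        intro v hv
        simp [hv, mul_comm]
      · intro v hv
        simp [(Finset.mem_filter.1 hv).2]
    have h3 : x * ∑ I : Finset V, y I * ∑ v ∈ I, w v ≤ ∑ I : Finset V, y I * ∑ v, w v := by
      rw [Finset.mul_sum]
      apply Finset.sum_le_sum
      intro I _
      by_cases hI : y I = 0
      · simp [hI]
      · have := mul_le_mul_of_nonneg_left (h I (hind I hI)) (hy I)
        linarith
    rw [← Finset.sum_mul] at h3
    have h4 : x * ∑ v, w v ≤ (∑ I, y I) * ∑ v, w v := by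
      refine le_trans (mul_le_mul_of_nonneg_left (h1.trans h2.le) hx.le) h3
    exact le_of_mul_le_mul_right h4 hW

theorem exists_dual {V : Type} [Fintype V] (G : SimpleGraph V) (c : ℝ) (hc : 0 < c)
    (h : c < fracChrom G) :
    ∃ w : V → ℝ, (∀ v, 0 ≤ w v) ∧
      ∀ I : Finset V, (∀ u ∈ I, ∀ v ∈ I, ¬ G.Adj u v) → c * ∑ v ∈ I, w v < ∑ v, w v := by
  let ind : Finset V → (V → ℝ) := fun I v => if v ∈ I then 1 else 0
  let E : Finset (V → ℝ) :=
    (Finset.univ.filter (fun I : Finset V => ∀ u ∈ I, ∀ v ∈ I, ¬ G.Adj u v)).image ind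
  let Q : Set (V → ℝ) := {z | ∀ v, 1 / c ≤ z v}
  have hQc : Convex ℝ Q := by
    intro a ha b hb s t hs ht hst v
    simp only [Pi.add_apply, Pi.smul_apply, smul_eq_mul]
    have h1 := ha v
    have h2 := hb v
    have : 1 / c = s * (1 / c) + t * (1 / c) := by rw [← add_mul, hst, one_mul]
    rw [this]
    gcongr
  have hQcl : IsClosed Q := by
    have : Q = ⋂ v, {z : V → ℝ | 1 / c ≤ z v} := by ext; simp [Q]
    rw [this]
    exact isClosed_iInter fun v => isClosed_le continuous_const (continuous_apply v)
  have hdisj : Disjoint (convexHull ℝ (E : Set (V → ℝ))) Q := by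
    rw [Set.disjoint_left]
    intro z hz hzQ
    rw [Finset.convexHull_eq] at hz
    obtain ⟨m, hm0, hm1, hmz⟩ := hz
    have hinj : Function.Injective ind := by
      intro I J hIJ
      ext v
      have := congrFun hIJ v
      simp only [ind] at this
      by_cases h1 : v ∈ I <;> by_cases h2 : v ∈ J <;> simp_all
    have hsum : ∀ f : (V → ℝ) → ℝ, ∑ e ∈ E, f e =
        ∑ I ∈ Finset.univ.filter (fun I : Finset V => ∀ u ∈ I, ∀ v ∈ I, ¬ G.Adj u v), f (ind I) := by
      intro f
      exact Finset.sum_image (fun a _ b _ hab => hinj hab)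
    have : fracChrom G ≤ c := by
      unfold fracChrom
      apply csInf_le
      · refine ⟨0, ?_⟩
        rintro c ⟨y, hy, -, -, rfl⟩
        exact Finset.sum_nonneg fun I _ => hy I
      · refine ⟨fun I => if (∀ u ∈ I, ∀ v ∈ I, ¬ G.Adj u v) then c * m (ind I) else 0, ?_, ?_, ?_, ?_⟩
        · intro I
          dsimp only
          split_ifs with hI
          · apply mul_nonneg hc.le
            apply hm0
            exact Finset.mem_image_of_mem _ (by simpa using hI)
          · exact le_rfl
        · intro I hI
          by_contra hne
          simp only [hne, if_false] at hI
          exact hI rfl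
        · intro v
          have hv := hzQ v
          rw [← hmz, Finset.centerMass_eq_of_sum_1 _ _ hm1, Finset.sum_apply, hsum] at hv
          rw [div_le_iff₀ hc] at hv
          refine hv.trans (le_of_eq ?_)
          rw [Finset.sum_mul, Finset.sum_filter, Finset.sum_filter]
          apply Finset.sum_congr rfl
          intro I _
          by_cases h1 : v ∈ I <;> simp [ind, h1, mul_comm]
        · rw [hsum, Finset.sum_filter] at hm1
          calc c = c * 1 := by ring
            _ = _ := by
              rw [← hm1, Finset.mul_sum]
              apply Finset.sum_congr rfl
              intro I _
              simp
    linarith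
  obtain ⟨f, u, v, hfu, huv, hfv⟩ := geometric_hahn_banach_compact_closed (convex_convexHull ℝ _)
    (E.finite_toSet.isCompact_convexHull ℝ) hQc hQcl hdisj
  let w : V → ℝ := fun v => f (Pi.single v 1)
  have hf : ∀ z : V → ℝ, f z = ∑ v, z v * w v := by
    intro z
    conv_lhs => rw [pi_eq_sum_univ' z]
    simp [w, map_sum, map_smul]
  have hfI : ∀ I : Finset V, f (ind I) = ∑ v ∈ I, w v := by
    intro I
    rw [hf]
    simp [ind, Finset.sum_ite_mem]
  have hu : ∀ I : Finset V, (∀ u ∈ I, ∀ v ∈ I, ¬ G.Adj u v) → ∑ v ∈ I, w v < u := by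
    intro I hI
    rw [← hfI]
    apply hfu
    apply subset_convexHull
    exact Finset.mem_coe.2 (Finset.mem_image_of_mem _ (by simpa using hI))
  refine ⟨w, ?_, ?_⟩
  · intro a
    by_contra hneg
    push Not at hneg
    have hb : ∀ s : ℝ, 0 ≤ s → v < (∑ b, 1 / c * w b) + s * w a := by
      intro s hs
      have := hfv ((fun _ => 1 / c) + Pi.single a s) (by
        intro b
        simp only [Pi.add_apply]
        have : (0 : ℝ) ≤ (Pi.single a s : V → ℝ) b := by
          by_cases hba : b = a
          · subst hba; simpa using hs
          · simp [hba]
        linarith)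
      rw [map_add, hf, hf (Pi.single a s)] at this
      simpa [Pi.single_apply] using this
    have h0 := hb 0 le_rfl
    have h1 := hb (((∑ b, 1 / c * w b) - v) / (- w a)) (by
      apply div_nonneg <;> linarith)
    have : ((∑ b, 1 / c * w b) - v) / (- w a) * w a = - ((∑ b, 1 / c * w b) - v) := by
      rw [div_neg, neg_mul, div_mul_cancel₀ _ hneg.ne]
    linarith
  · intro I hI
    have h1 := hu I hI
    have h2 := hfv (fun _ => 1 / c) (fun _ => le_rfl)
    rw [hf, ← Finset.mul_sum] at h2
    have h3 : ∑ v ∈ I, w v < 1 / c * ∑ v, w v := by linarith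
    rw [one_div, inv_mul_eq_div, lt_div_iff₀ hc] at h3
    linarith

theorem block_weight {V : Type} [Fintype V] (w : V → ℝ) (hw : ∀ v, 0 ≤ w v)
    (N : ℕ) (e : V ≃ Fin N) (hanti : ∀ u v, (e u : ℕ) ≤ e v → w v ≤ w u)
    (q : ℕ) (hq : 1 ≤ q) (B : Finset V)
    (hB : ∀ j : ℕ, q * (B.filter (fun v => 2 ^ j ≤ (e v : ℕ) + 1 ∧ (e v : ℕ) + 1 < 2 ^ (j + 1))).card
      < 2 ^ j) :
    q * ∑ v ∈ B, w v ≤ 2 * ∑ v, w v := by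
  let blk : ℕ → Finset V → Finset V := fun j A =>
    A.filter (fun v => 2 ^ j ≤ (e v : ℕ) + 1 ∧ (e v : ℕ) + 1 < 2 ^ (j + 1))
  have hdecomp : ∀ A : Finset V, ∑ v ∈ A, w v = ∑ j ∈ Finset.range N, ∑ v ∈ blk j A, w v := by
    intro A
    have h := Finset.sum_fiberwise_of_maps_to (s := A) (t := Finset.range N)
      (g := fun v => Nat.log 2 ((e v : ℕ) + 1)) (fun v _ => by
        rw [Finset.mem_range]
        refine lt_of_lt_of_le (Nat.log_lt_self 2 (by omega)) ?_
        have := (e v).2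
        omega) w
    rw [← h]
    apply Finset.sum_congr rfl
    intro j _
    apply Finset.sum_congr _ fun _ _ => rfl
    ext v
    simp only [blk, Finset.mem_filter, and_congr_right_iff]
    intro _
    constructor
    · rintro rfl
      exact ⟨Nat.pow_log_le_self 2 (by omega), Nat.lt_pow_succ_log_self (by norm_num) _⟩
    · rintro ⟨h1, h2⟩
      exact Nat.log_eq_of_pow_le_of_lt_pow h1 h2
  have h0 : ∑ v ∈ blk 0 B, w v = 0 := by
    have := hB 0
    have h1 : (blk 0 B).card = 0 := by
      simp only [blk]
      nlinarith
    rw [Finset.card_eq_zero.1 h1]; simp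
  have hstep : ∀ j, q * ∑ v ∈ blk (j + 1) B, w v ≤ 2 * ∑ v ∈ blk j Finset.univ, w v := by
    intro j
    by_cases hne : (blk (j + 1) B).Nonempty
    swap
    · rw [Finset.not_nonempty_iff_eq_empty] at hne
      rw [hne]
      simp only [Finset.sum_empty, mul_zero]
      have : 0 ≤ ∑ v ∈ blk j Finset.univ, w v := Finset.sum_nonneg fun v _ => hw v
      linarith
    obtain ⟨b, hb, hbmax⟩ := Finset.exists_max_image _ w hne
    have hb2 := (Finset.mem_filter.1 hb).2
    have h1 : ∑ v ∈ blk (j + 1) B, w v ≤ (blk (j + 1) B).card * w b := by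
      rw [← nsmul_eq_mul]
      exact Finset.sum_le_card_nsmul _ _ _ hbmax
    have hcard : 2 ^ j ≤ (blk j Finset.univ).card := by
      have : (Finset.Ico (2 ^ j) (2 ^ (j + 1))).card = 2 ^ j := by
        rw [Nat.card_Ico, pow_succ]; omega
      rw [← this]
      refine Finset.card_le_card_of_surjOn (fun v => (e v : ℕ) + 1) ?_
      intro i hi
      simp only [Finset.coe_Ico, Set.mem_Ico] at hi
      have hbN := (e b).2
      have hp : 0 < 2 ^ j := by positivity
      refine ⟨e.symm ⟨i - 1, by omega⟩, ?_, ?_⟩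
      · simp only [blk, Finset.coe_filter, Finset.mem_univ, true_and, Set.mem_ofPred_eq,
          Equiv.apply_symm_apply]
        omega
      · simp only [Equiv.apply_symm_apply]
        omega
    have h2 : ((2 : ℝ) ^ j) * w b ≤ ∑ v ∈ blk j Finset.univ, w v := by
      calc ((2 : ℝ) ^ j) * w b ≤ (blk j Finset.univ).card * w b := by
            apply mul_le_mul_of_nonneg_right _ (hw b)
            exact_mod_cast hcard
        _ ≤ _ := by
            rw [← nsmul_eq_mul]
            apply Finset.card_nsmul_le_sum
            intro v hv
            have := (Finset.mem_filter.1 hv).2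
            apply hanti
            omega
    have h3 : (q : ℝ) * (blk (j + 1) B).card ≤ 2 ^ (j + 1) := by
      exact_mod_cast (hB (j + 1)).le
    calc (q : ℝ) * ∑ v ∈ blk (j + 1) B, w v ≤ q * ((blk (j + 1) B).card * w b) :=
          mul_le_mul_of_nonneg_left h1 (by positivity)
      _ = (q * (blk (j + 1) B).card) * w b := by ring
      _ ≤ 2 ^ (j + 1) * w b := mul_le_mul_of_nonneg_right h3 (hw b)
      _ = 2 * (2 ^ j * w b) := by ring
      _ ≤ _ := by linarith
  rw [hdecomp B, hdecomp Finset.univ]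
  have h5 : ∑ j ∈ Finset.range N, ∑ v ∈ blk j B, w v ≤
      ∑ j ∈ Finset.range N, ∑ v ∈ blk (j + 1) B, w v := by
    have h6 : ∑ j ∈ Finset.range N, ∑ v ∈ blk j B, w v ≤
        ∑ j ∈ Finset.range (N + 1), ∑ v ∈ blk j B, w v := by
      apply Finset.sum_le_sum_of_subset_of_nonneg
      · intro j; simp only [Finset.mem_range]; omega
      · intro j _ _; exact Finset.sum_nonneg fun v _ => hw v
    rw [Finset.sum_range_succ' _ N, h0, add_zero] at h6
    exact h6
  calc (q : ℝ) * ∑ j ∈ Finset.range N, ∑ v ∈ blk j B, w v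
      ≤ q * ∑ j ∈ Finset.range N, ∑ v ∈ blk (j + 1) B, w v :=
        mul_le_mul_of_nonneg_left h5 (by positivity)
    _ ≤ _ := by
      rw [Finset.mul_sum, Finset.mul_sum]
      exact Finset.sum_le_sum fun j _ => hstep j

theorem exists_sorting {V : Type} [Fintype V] (w : V → ℝ) :
    ∃ (N : ℕ) (e : V ≃ Fin N), ∀ u v, (e u : ℕ) ≤ e v → w v ≤ w u := by
  let e0 := Fintype.equivFin V
  let f : Fin (Fintype.card V) → ℝ := fun i => - w (e0.symm i)
  refine ⟨_, e0.trans (Tuple.sort f).symm, ?_⟩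
  intro u v huv
  have := Tuple.monotone_sort f (Fin.le_def.2 huv)
  simpa [f] using this


theorem triangle_free_subgraph_large_frac_chrom (x : ℝ) (hx : 1 ≤ x) :
    ∃ k : ℝ, 0 < k ∧
      ∀ (V : Type) [Fintype V] (G : SimpleGraph V),
        k ≤ fracChrom G →
        ∃ H : G.Subgraph, H.coe.CliqueFree 3 ∧ x ≤ fracChrom H.coe := by
  obtain ⟨q, hq⟩ := exists_nat_ge (8 * x)
  have hq1 : 1 ≤ q := by
    have : (1 : ℝ) ≤ q := by linarith
    exact_mod_cast this
  obtain ⟨X, iX, Γ, hne, htri, hhole⟩ := gamma_exists (32 ^ q) (Nat.one_le_pow _ _ (by norm_num))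
  have hM : (0 : ℝ) < Fintype.card X := by exact_mod_cast Fintype.card_pos
  refine ⟨2 * (4 * x * Fintype.card X), by positivity, ?_⟩
  intro V _ G hk
  set c : ℝ := 4 * x * Fintype.card X with hc
  have hc0 : 0 < c := by positivity
  obtain ⟨w, hw, hdual⟩ := exists_dual G c hc0 (by linarith)
  have hW : 0 < ∑ v, w v := by simpa using hdual ∅ (by simp)
  obtain ⟨N, e, he⟩ := exists_sorting w
  -- the small set attached to a set of labels
  let nn : Finset X → Finset X := fun L => Finset.univ.filter (fun a => ∀ b ∈ L, ¬ Γ.Adj a b)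
  let Z : Finset X → Finset X := fun L => if 32 ^ q * L.card ≤ Fintype.card X then L else nn L
  have hZ : ∀ L, 32 ^ q * (Z L).card ≤ Fintype.card X := by
    intro L
    simp only [Z]
    split_ifs with h
    · exact h
    · rcases hhole (nn L) L (fun a ha b hb => (Finset.mem_filter.1 ha).2 b hb) with h1 | h1
      · exact h1
      · exact absurd h1 h
  obtain ⟨l, hl⟩ := labels_exist G (fun v => (e v : ℕ))
    (fun a b h => e.injective (Fin.ext h)) q Z hZ
  -- every set of vertices independent in the pulled back graph is light
  have main : ∀ S : Finset V, (∀ u ∈ S, ∀ v ∈ S, ¬ (G.Adj u v ∧ Γ.Adj (l u) (l v))) →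
      x * ∑ v ∈ S, w v ≤ ∑ v, w v := by
    intro S hS
    obtain ⟨T, hTS, hTind, hTdom⟩ := greedy_kernel (fun u v => G.Adj u v ∧ l u = l v)
      (fun u v h => ⟨h.1.symm, h.2.symm⟩) (fun v h => G.irrefl h.1) (fun v => (e v : ℕ)) S
    have hT : c * ∑ v ∈ T, w v ≤ Fintype.card X * ∑ v, w v := by
      rw [← Finset.sum_fiberwise T l w, Finset.mul_sum, ← nsmul_eq_mul, ← Finset.card_univ]
      apply Finset.sum_le_card_nsmul
      intro r _
      refine (hdual _ ?_).le
      intro u hu v hv hadj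
      rw [Finset.mem_filter] at hu hv
      exact hTind u hu.1 v hv.1 ⟨hadj, hu.2.trans hv.2.symm⟩
    have hB : (q : ℝ) * ∑ v ∈ S \ T, w v ≤ 2 * ∑ v, w v := by
      apply block_weight w hw N e he q hq1
      intro j
      refine lt_of_le_of_lt (Nat.mul_le_mul_left q (Finset.card_le_card ?_))
        (hl j (T.filter (fun u => (e u : ℕ) + 1 < 2 ^ (j + 1)))
          (fun u hu => (Finset.mem_filter.1 hu).2))
      intro v hv
      simp only [Finset.mem_filter, Finset.mem_sdiff] at hv
      obtain ⟨⟨hvS, hvT⟩, hvj⟩ := hv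
      refine Finset.mem_filter.2 ⟨Finset.mem_univ _, hvj,
        fun h => hvT (Finset.mem_filter.1 h).1, ?_⟩
      obtain ⟨u, huT, ⟨hvu, hlvu⟩, hpos⟩ := hTdom v hvS hvT
      simp only [Z]
      split_ifs
      · refine Finset.mem_image.2 ⟨u, ?_, hlvu.symm⟩
        simp only [Finset.mem_filter]
        exact ⟨⟨huT, by omega⟩, hvu⟩
      · refine Finset.mem_filter.2 ⟨Finset.mem_univ _, ?_⟩
        intro b hb
        obtain ⟨u', hu', rfl⟩ := Finset.mem_image.1 hb
        simp only [Finset.mem_filter] at hu'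
        exact fun hadj => hS v hvS u' (hTS hu'.1.1) ⟨hu'.2, hadj⟩
    have hsplit : ∑ v ∈ S, w v = ∑ v ∈ S \ T, w v + ∑ v ∈ T, w v :=
      (Finset.sum_sdiff hTS).symm
    have hT' : 4 * x * ∑ v ∈ T, w v ≤ ∑ v, w v := by
      rw [hc] at hT
      have : Fintype.card X * (4 * x * ∑ v ∈ T, w v) ≤ Fintype.card X * ∑ v, w v := by
        linarith
      exact le_of_mul_le_mul_left this hM
    have hB0 : 0 ≤ ∑ v ∈ S \ T, w v := Finset.sum_nonneg fun v _ => hw v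
    have hB' : 8 * x * ∑ v ∈ S \ T, w v ≤ 2 * ∑ v, w v :=
      le_trans (mul_le_mul_of_nonneg_right hq hB0) hB
    rw [hsplit, mul_add]
    linarith
  let H : G.Subgraph :=
    { verts := Set.univ
      Adj := fun u v => G.Adj u v ∧ Γ.Adj (l u) (l v)
      adj_sub := fun h => h.1
      edge_vert := fun _ => Set.mem_univ _
      symm := ⟨fun _ _ h => ⟨h.1.symm, h.2.symm⟩⟩ }
  refine ⟨H, ?_, ?_⟩
  · intro s hs
    obtain ⟨a, b, d, hab, had, hbd, -⟩ := SimpleGraph.is3Clique_iff.1 hs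
    exact htri _ _ _ hab.2 hbd.2 had.2
  · have hsum : ∀ i : Fintype H.verts, ∑ v ∈ @Finset.univ H.verts i, w v = ∑ v, w v := fun i =>
      Fintype.sum_equiv (Equiv.Set.univ V) _ _ (fun v => rfl)
    suffices key : ∀ i : Fintype H.verts, x ≤ @fracChrom H.verts i H.coe from key _
    intro i
    refine @le_fracChrom _ i H.coe (fun v => w v) (fun v => hw v) x ?_ ?_
    · rw [hsum]; exact hW
    · intro S hS
      rw [hsum]
      have h1 := main (S.map (Function.Embedding.subtype _)) (by
        intro u hu v hv
        obtain ⟨u', hu', rfl⟩ := Finset.mem_map.1 hu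
        obtain ⟨v', hv', rfl⟩ := Finset.mem_map.1 hv
        exact hS u' hu' v' hv')
      rw [Finset.sum_map] at h1
      exact h1
end

section
/- For every positive integer k there exists an integer f(k) such that every finite simple graph G with chromatic number χ(G) ≥ f(k) contains a triangle-free subgraph H with χ(H) = k. -/
open scoped Classical

/-- The shift graph on pairs. -/
def shiftG (N : ℕ) : SimpleGraph (Fin N × Fin N) where
  Adj p q := (p.1 < p.2 ∧ q.1 < q.2) ∧ (p.2 = q.1 ∨ q.2 = p.1)
  symm := ⟨fun p q h => ⟨⟨h.1.2, h.1.1⟩, h.2.symm⟩⟩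
  loopless := ⟨fun p h => by
    rcases h with ⟨⟨h1, h2⟩, h3 | h3⟩ <;> simp [h3] at h1⟩

lemma shiftG_cliqueFree (N : ℕ) : (shiftG N).CliqueFree 3 := by
  intro s hs
  rw [SimpleGraph.is3Clique_iff] at hs
  obtain ⟨a, b, c, hab, hac, hbc, -⟩ := hs
  simp only [shiftG] at hab hac hbc
  simp only [Fin.ext_iff, Fin.lt_def] at hab hac hbc
  omega

lemma shiftG_not_colorable (k : ℕ) : ¬ (shiftG (2 ^ k + 1)).Colorable k := by
  rintro ⟨c⟩
  let S : Fin (2 ^ k + 1) → Finset (Fin k) := fun i =>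
    Finset.univ.filter (fun x => ∃ j, i < j ∧ c (i, j) = x)
  have key : ∀ i j, i < j → S i ≠ S j := by
    intro i j hij h
    have h1 : c (i, j) ∈ S i := by
      simp only [S, Finset.mem_filter, Finset.mem_univ, true_and]
      exact ⟨j, hij, rfl⟩
    rw [h] at h1
    simp only [S, Finset.mem_filter, Finset.mem_univ, true_and] at h1
    obtain ⟨l, hl, he⟩ := h1
    have : (shiftG (2 ^ k + 1)).Adj (j, l) (i, j) := ⟨⟨hl, hij⟩, Or.inr rfl⟩
    exact c.valid this he
  have inj : Function.Injective S := by
    intro i j h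
    rcases lt_trichotomy i j with h1 | h1 | h1
    · exact absurd h (key i j h1)
    · exact h1
    · exact absurd h.symm (key j i h1)
  have := Fintype.card_le_of_injective S inj
  simp at this

lemma step_color {V : Type} [Fintype V] (G : SimpleGraph V) (k M : ℕ)
    (hN : ∀ v, (G.induce (G.neighborSet v)).Colorable M) (hG : ¬ G.Colorable (k ^ M)) :
    ∃ H : SimpleGraph V, H ≤ G ∧ H.CliqueFree 3 ∧ ¬ H.Colorable k := by
  have h1 : ∀ v, ∃ c : V → ℕ, (∀ u, G.Adj v u → c u < M) ∧
      ∀ u w, G.Adj v u → G.Adj v w → G.Adj u w → c u ≠ c w := by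
    intro v
    obtain ⟨c⟩ := hN v
    refine ⟨fun u => if h : G.Adj v u then (c ⟨u, h⟩ : ℕ) else 0, ?_, ?_⟩
    · intro u h
      simp [h]
    · intro u w hu hw huw
      simp only [hu, hw, dif_pos]
      intro h
      have : (G.induce (G.neighborSet v)).Adj ⟨u, hu⟩ ⟨w, hw⟩ := huw
      exact c.valid this (Fin.ext h)
  choose c hc1 hc2 using h1
  let e := Fintype.equivFin V
  let K : ℕ → SimpleGraph V := fun i =>
    { Adj := fun u v => G.Adj u v ∧ ((e u < e v ∧ c u v = i) ∨ (e v < e u ∧ c v u = i))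
      symm := ⟨fun u v h => ⟨h.1.symm, h.2.symm⟩⟩
      loopless := ⟨fun u h => G.loopless.irrefl u h.1⟩ }
  have hfree : ∀ i, (K i).CliqueFree 3 := by
    intro i s hs
    rw [SimpleGraph.is3Clique_iff] at hs
    obtain ⟨a, b, d, ⟨hab, hab'⟩, ⟨had, had'⟩, ⟨hbd, hbd'⟩, -⟩ := hs
    have ha := hc2 a b d hab had hbd
    have hb := hc2 b a d hab.symm hbd had
    have hd := hc2 d a b had.symm hbd.symm hab
    simp only [Fin.lt_def] at hab' had' hbd'
    omega
  by_contra hcon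
  push Not at hcon
  have hcol : ∀ i, Nonempty ((K i).Coloring (Fin k)) := fun i =>
    hcon (K i) (fun u v h => h.1) (hfree i)
  let d := fun i => (hcol i).some
  apply hG
  let col : G.Coloring (Fin M → Fin k) := SimpleGraph.Coloring.mk (fun v i => d i v) (by
    intro u v huv h
    rcases lt_trichotomy (e u) (e v) with hlt | heq | hlt
    · have h2 := congrFun h ⟨c u v, hc1 u v huv⟩
      exact (d (c u v)).valid (show (K (c u v)).Adj u v from ⟨huv, Or.inl ⟨hlt, rfl⟩⟩) h2
    · exact G.ne_of_adj huv (e.injective heq)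
    · have h2 := congrFun h ⟨c v u, hc1 v u huv.symm⟩
      exact (d (c v u)).valid (show (K (c v u)).Adj u v from ⟨huv, Or.inr ⟨hlt, rfl⟩⟩) h2)
  have := col.colorable
  simpa using this

lemma bounded_clique (k w : ℕ) : ∃ M : ℕ, ∀ (V : Type) [Fintype V] (G : SimpleGraph V),
    G.CliqueFree w → ¬ G.Colorable M →
    ∃ (W : Type) (H : SimpleGraph W), H.IsContained G ∧ H.CliqueFree 3 ∧ ¬ H.Colorable k := by
  induction w with
  | zero =>
    refine ⟨0, fun V _ G h _ => ?_⟩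
    exact absurd (show G.IsNClique 0 ∅ by simp) (h ∅)
  | succ w ih =>
    obtain ⟨M, hM⟩ := ih
    refine ⟨k ^ M, fun V _ G h hG => ?_⟩
    by_cases hN : ∀ v, (G.induce (G.neighborSet v)).Colorable M
    · obtain ⟨H, h1, h2, h3⟩ := step_color G k M hN hG
      exact ⟨V, H, SimpleGraph.IsContained.of_le h1, h2, h3⟩
    · push Not at hN
      obtain ⟨v, hv⟩ := hN
      have hcf : (G.induce (G.neighborSet v)).CliqueFree w := by
        intro s hs
        have h2 := hs.map (f := Function.Embedding.subtype _)
        have h3 := h2.mono (SimpleGraph.map_comap_le _ _)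
        have h4 := h3.insert (a := v) (by
          intro b hb
          simp at hb
          exact hb.1)
        exact h _ h4
      obtain ⟨W, H, h1, h2, h3⟩ := hM _ _ hcf hv
      exact ⟨W, H, h1.trans ⟨(SimpleGraph.Embedding.induce _).toCopy⟩, h2, h3⟩

lemma exact_chromatic {W : Type} [Finite W] (H : SimpleGraph W) (k : ℕ) (hH : ¬ H.Colorable k) :
    ∃ s : Set W, (H.induce s).chromaticNumber = (k + 1 : ℕ) := by
  have : Fintype W := Fintype.ofFinite W
  have hex : ∃ n, H.Colorable n := ⟨_, H.colorable_of_fintype⟩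
  let n := Nat.find hex
  have hn : H.Colorable n := Nat.find_spec hex
  have hmin : ∀ m < n, ¬ H.Colorable m := fun m hm => Nat.find_min hex hm
  have hkn : k < n := by
    by_contra hlt
    exact hH (hn.mono (not_lt.1 hlt))
  obtain ⟨c⟩ := hn
  refine ⟨{v | (c v : ℕ) < k + 1}, ?_⟩
  rw [Nat.cast_add, Nat.cast_one, SimpleGraph.chromaticNumber_eq_iff_colorable_not_colorable]
  constructor
  · refine ⟨SimpleGraph.Coloring.mk (fun v => ⟨c v.1, v.2⟩) ?_⟩
    intro u v huv h
    exact c.valid (show H.Adj u.1 v.1 from huv) (Fin.ext (by simpa using h))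
  · rintro ⟨d⟩
    apply hmin (n - 1) (by omega)
    refine ⟨SimpleGraph.Coloring.mk (fun v => if h : (c v : ℕ) < k + 1 then
      ⟨d ⟨v, h⟩, by have := (d ⟨v, h⟩).2; omega⟩ else ⟨c v - 1, by have := (c v).2; omega⟩) ?_⟩
    intro u v huv
    have hc := c.valid huv
    by_cases hu : (c u : ℕ) < k + 1 <;> by_cases hv : (c v : ℕ) < k + 1
    · have := d.valid (show (H.induce {v | (c v : ℕ) < k + 1}).Adj ⟨u, hu⟩ ⟨v, hv⟩ from huv)
      simp only [hu, hv, dif_pos]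
      intro h
      exact this (Fin.ext (by simpa using h))
    · have := (d ⟨u, hu⟩).2
      simp only [hu, hv, dif_pos, dif_neg, not_false_eq_true, ne_eq, Fin.mk.injEq]
      omega
    · have := (d ⟨v, hv⟩).2
      simp only [hu, hv, dif_pos, dif_neg, not_false_eq_true, ne_eq, Fin.mk.injEq]
      omega
    · simp only [hu, hv, dif_neg, not_false_eq_true, ne_eq, Fin.mk.injEq]
      rw [ne_eq, Fin.ext_iff] at hc
      omega

theorem rodl_triangle_free_subgraph (k : ℕ) (hk : 0 < k) :
    ∃ f : ℕ, ∀ (V : Type) [Fintype V] (G : SimpleGraph V),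
      (f : ℕ∞) ≤ G.chromaticNumber →
      ∃ H : G.Subgraph, H.coe.CliqueFree 3 ∧ H.coe.chromaticNumber = k := by
  obtain ⟨k, rfl⟩ : ∃ j, k = j + 1 := ⟨k - 1, by omega⟩
  let N := Fintype.card (Fin (2 ^ k + 1) × Fin (2 ^ k + 1))
  obtain ⟨M, hM⟩ := bounded_clique k N
  refine ⟨M + 1, fun V _ G hG => ?_⟩
  have hnc : ¬ G.Colorable M := by
    intro h
    have h2 := hG.trans h.chromaticNumber_le
    have h3 : M + 1 ≤ M := by exact_mod_cast h2
    omega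
  obtain ⟨W, H, ⟨f⟩, h2, h3⟩ : ∃ (W : Type) (H : SimpleGraph W),
      H.IsContained G ∧ H.CliqueFree 3 ∧ ¬ H.Colorable k := by
    by_cases hcf : G.CliqueFree N
    · exact hM V G hcf hnc
    · rw [SimpleGraph.not_cliqueFree_iff_top_isContained] at hcf
      obtain ⟨g⟩ := hcf
      let e := Fintype.equivFin (Fin (2 ^ k + 1) × Fin (2 ^ k + 1))
      refine ⟨_, shiftG (2 ^ k + 1), ⟨⟨⟨fun x => g (e x), ?_⟩, ?_⟩⟩,
        shiftG_cliqueFree _, shiftG_not_colorable k⟩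
      · intro a b hab
        exact g.toHom.map_adj (fun h => (shiftG _).ne_of_adj hab (e.injective h))
      · exact g.injective.comp e.injective
  have : Finite W := Finite.of_injective f f.injective
  obtain ⟨s, hs⟩ := exact_chromatic H k h3
  let f' : SimpleGraph.Copy (H.induce s) G := f.comp (SimpleGraph.Embedding.induce s).toCopy
  refine ⟨f'.toSubgraph, ?_, ?_⟩
  · exact SimpleGraph.CliqueFree.comap
      ⟨(SimpleGraph.Embedding.induce s).toCopy.comp f'.isoToSubgraph.symm.toEmbedding.toCopy⟩ h2
  · rw [← hs]
    exact le_antisymm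
      (SimpleGraph.chromaticNumber_mono_of_hom f'.isoToSubgraph.symm.toHom)
      (SimpleGraph.chromaticNumber_mono_of_hom f'.isoToSubgraph.toHom)
end

section
/- Let x ≥ 59 and l ≥ 1 be real numbers. Let G be a finite simple graph with a weight function w: V(G) → ℝ≥0 with w(V(G)) ≠ 0, and fix a linear ordering of V(G) in nonincreasing order of w. Suppose that w(I) ≤ w(V(G))/f(x,l) for every independent set I of G, and that χ_f(N^L(v)) ≤ l for every vertex v. Then G contains a triangle-free spanning subgraph H such that w(I) ≤ w(V(G))/x for every independent set I of H; in particular, χ_f(H) ≥ x. -/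
open scoped Classical

/-- The function `f(x,l) = x · (Γ(x·l⁷ + 1)/Γ(x+1))³`. -/
noncomputable def fGamma (x l : ℝ) : ℝ :=
  x * (Real.Gamma (x * l ^ 7 + 1) / Real.Gamma (x + 1)) ^ 3

namespace TFS

open Finset

/-- Independent finset. -/
def IndS {V : Type} (G : SimpleGraph V) (I : Finset V) : Prop :=
  ∀ u ∈ I, ∀ v ∈ I, ¬ G.Adj u v

/-- Left neighbours of `v` inside `T`. -/
noncomputable def NL {V : Type} [LinearOrder V] (G : SimpleGraph V) (v : V) (T : Finset V) :
    Finset V :=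
  T.filter (fun u => G.Adj u v ∧ u < v)

/-- The subset `T` has a fractional colouring of total weight at most `r`. -/
def FC {V : Type} [Fintype V] (G : SimpleGraph V) (T : Finset V) (r : ℝ) : Prop :=
  ∃ y : Finset V → ℝ, (∀ I, 0 ≤ y I) ∧ (∀ I, y I ≠ 0 → IndS G I) ∧
    (∀ v ∈ T, 1 ≤ ∑ I : Finset V, if v ∈ I then y I else 0) ∧ ∑ I, y I ≤ r

/-- `I` is independent in the graph given by the choice `c`. -/
def CI {V : Type} [LinearOrder V] (G : SimpleGraph V) (c : V → Finset V) (I : Finset V) : Prop :=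
  ∀ u ∈ I, ∀ v ∈ I, u < v → G.Adj u v → u ∉ c v

lemma FC.mono {V : Type} [Fintype V] {G : SimpleGraph V} {T T' : Finset V} {r : ℝ}
    (h : FC G T r) (hT : T' ⊆ T) : FC G T' r := by
  obtain ⟨y, h0, h1, h2, h3⟩ := h
  exact ⟨y, h0, h1, fun v hv => h2 v (hT hv), h3⟩

lemma FC.indep {V : Type} [Fintype V] {G : SimpleGraph V} {T : Finset V} {r : ℝ}
    (h : FC G T r) (hr : r < 2) : IndS G T := by
  obtain ⟨y, h0, h1, h2, h3⟩ := h
  intro u hu v hv huv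
  have a := h2 u hu
  have b := h2 v hv
  have : (∑ I : Finset V, if u ∈ I then y I else 0) + (∑ I : Finset V, if v ∈ I then y I else 0)
      ≤ ∑ I, y I := by
    rw [← Finset.sum_add_distrib]
    apply Finset.sum_le_sum
    intro I _
    by_cases hI : y I = 0
    · simp [hI]
    · have := h1 I hI
      by_cases hu' : u ∈ I
      · have : v ∉ I := fun hv' => this u hu' v hv' huv
        simp [hu', this]
      · have := h0 I
        by_cases hv' : v ∈ I <;> simp [hu', hv', this]
  linarith

lemma exists_choice {V K E : Type} [Fintype V] [Fintype K] (π : V → K → ℝ)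
    (h0 : ∀ v k, 0 ≤ π v k) (h1 : ∀ v, ∑ k, π v k = 1) (Ev : Finset E)
    (Gd : E → Finset V) (X : E → V → K → Prop)
    (hlt : ∑ e ∈ Ev, ∏ v ∈ Gd e, (∑ k, if X e v k then π v k else 0) < 1) :
    ∃ c : V → K, (∀ v, π v (c v) ≠ 0) ∧ ∀ e ∈ Ev, ∃ v ∈ Gd e, ¬ X e v (c v) := by
  by_contra hcon
  push Not at hcon
  have key : ∀ c : V → K, ∏ v, π v (c v) ≤
      ∑ e ∈ Ev, ∏ v, (if v ∈ Gd e → X e v (c v) then π v (c v) else 0) := by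
    intro c
    have nn : ∀ e ∈ Ev, 0 ≤ ∏ v, (if v ∈ Gd e → X e v (c v) then π v (c v) else 0) := by
      intro e _
      apply Finset.prod_nonneg
      intro v _
      split_ifs
      · exact h0 _ _
      · exact le_rfl
    by_cases hc : ∀ v, π v (c v) ≠ 0
    · obtain ⟨e, he, hX⟩ := hcon c hc
      refine le_trans ?_ (Finset.single_le_sum nn he)
      apply le_of_eq
      apply Finset.prod_congr rfl
      intro v _
      rw [if_pos (hX v)]
    · push Not at hc
      obtain ⟨v, hv⟩ := hc
      rw [Finset.prod_eq_zero (Finset.mem_univ v) hv]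
      exact Finset.sum_nonneg nn
  have tot : ∑ c : V → K, ∏ v, π v (c v) = 1 := by
    have := Finset.prod_univ_sum (fun _ : V => (Finset.univ : Finset K)) π
    rw [Fintype.piFinset_univ] at this
    rw [← this]
    simp [h1]
  have tot2 : ∀ e, ∑ c : V → K, ∏ v, (if v ∈ Gd e → X e v (c v) then π v (c v) else 0)
      = ∏ v ∈ Gd e, (∑ k, if X e v k then π v k else 0) := by
    intro e
    have := Finset.prod_univ_sum (fun _ : V => (Finset.univ : Finset K))
      (fun v k => if v ∈ Gd e → X e v k then π v k else 0)
    rw [Fintype.piFinset_univ] at this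
    rw [← this]
    symm
    rw [← Finset.prod_subset (Finset.subset_univ (Gd e))]
    · apply Finset.prod_congr rfl
      intro v hv
      simp [hv]
    · intro v _ hv
      simp [hv, h1]
  have := Finset.sum_le_sum (fun c (_ : c ∈ (Finset.univ : Finset (V → K))) => key c)
  rw [tot, Finset.sum_comm] at this
  simp only [tot2] at this
  linarith

lemma abel_aux {V : Type} [LinearOrder V] (w φ : V → ℝ) (hmono : ∀ u v : V, u < v → w v ≤ w u)
    (U : Finset V) : (∀ v ∈ U, ∑ u ∈ U.filter (fun u => u ≤ v), φ u ≤ 0) →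
    ∀ t : ℝ, 0 ≤ t → (∀ u ∈ U, t ≤ w u) → ∑ u ∈ U, w u * φ u ≤ t * ∑ u ∈ U, φ u := by
  induction U using Finset.induction_on_max with
  | empty => simp
  | insert a s ha ih =>
    intro h t ht htw
    have has : a ∉ s := fun h => lt_irrefl _ (ha a h)
    rw [Finset.sum_insert has, Finset.sum_insert has]
    have hta := htw a (Finset.mem_insert_self a s)
    have e1 : (insert a s).filter (fun u => u ≤ a) = insert a s := by
      apply Finset.filter_true_of_mem
      intro u hu
      rcases Finset.mem_insert.1 hu with rfl | hu
      · exact le_rfl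
      · exact (ha u hu).le
    have h1 := h a (Finset.mem_insert_self a s)
    rw [e1, Finset.sum_insert has] at h1
    have h2 := ih (fun v hv => by
      have := h v (Finset.mem_insert_of_mem hv)
      rwa [Finset.filter_insert, if_neg (not_le.2 (ha v hv))] at this) (w a) (ht.trans hta)
      (fun u hu => hmono u a (ha u hu))
    nlinarith

lemma abel {V : Type} [LinearOrder V] (w φ : V → ℝ) (hmono : ∀ u v : V, u < v → w v ≤ w u)
    (hw0 : ∀ v, 0 ≤ w v) (U : Finset V) (h : 0 < ∑ u ∈ U, w u * φ u) :
    ∃ v ∈ U, 0 < ∑ u ∈ U.filter (fun u => u ≤ v), φ u := by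
  by_contra hcon
  push Not at hcon
  have := abel_aux w φ hmono U hcon 0 le_rfl (fun u _ => hw0 u)
  linarith

lemma geom_rank {V : Type} [LinearOrder V] (d : ℝ) (U : Finset V) :
    (1 - d) * ∑ v ∈ U, d ^ (U.filter (fun u => u ≤ v)).card = d - d ^ (U.card + 1) := by
  induction U using Finset.induction_on_max with
  | empty => simp
  | insert a s ha ih =>
    have has : a ∉ s := fun h => lt_irrefl _ (ha a h)
    have e1 : (insert a s).filter (fun u => u ≤ a) = insert a s := by
      apply Finset.filter_true_of_mem
      intro u hu
      rcases Finset.mem_insert.1 hu with rfl | hu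
      · exact le_rfl
      · exact (ha u hu).le
    have e2 : ∑ v ∈ s, d ^ ((insert a s).filter (fun u => u ≤ v)).card
        = ∑ v ∈ s, d ^ (s.filter (fun u => u ≤ v)).card := by
      apply Finset.sum_congr rfl
      intro v hv
      rw [Finset.filter_insert, if_neg (not_le.2 (ha v hv))]
    rw [Finset.sum_insert has, e1, e2, mul_add, ih, Finset.card_insert_of_notMem has]
    ring

lemma card_first {V : Type} [LinearOrder V] (U : Finset V) (M : ℝ) (hM : 0 ≤ M) :
    ((U.filter (fun v => ((U.filter (fun u => u ≤ v)).card : ℝ) ≤ M)).card : ℝ) ≤ M := by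
  rcases Finset.eq_empty_or_nonempty
    (U.filter (fun v => ((U.filter (fun u => u ≤ v)).card : ℝ) ≤ M)) with h | h
  · rw [h]; simpa using hM
  · have hm := Finset.max'_mem _ h
    set m := Finset.max' _ h with hmdef
    rw [Finset.mem_filter] at hm
    refine le_trans ?_ hm.2
    norm_cast
    apply Finset.card_le_card
    intro u hu
    have hum := Finset.le_max' _ u hu
    rw [Finset.mem_filter] at hu ⊢
    exact ⟨hu.1, hum⟩

lemma exists_dist {V : Type} [Fintype V] (G : SimpleGraph V)
    (l l' q : ℝ) (hl : 0 < l) (hl' : l * (1 - q) ≤ l') (T : Finset V) (hT : FC G T l) :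
    ∃ π : Finset V → ℝ, (∀ k, 0 ≤ π k) ∧ ∑ k, π k = 1 ∧ (∀ k, π k ≠ 0 → IndS G k) ∧
      ∀ S ⊆ T, ¬ FC G S l' → (∑ k, if Disjoint k S then π k else 0) ≤ q := by
  obtain ⟨y, h0, h1, h2, h3⟩ := hT
  set z : Finset V → ℝ := fun k => y k + if k = ∅ then l - ∑ k, y k else 0 with hz
  have z0 : ∀ k, 0 ≤ z k := by
    intro k
    simp only [hz]
    have := h0 k
    split_ifs <;> linarith
  have zs : ∑ k, z k = l := by
    simp only [hz]
    rw [Finset.sum_add_distrib]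
    simp
  have zi : ∀ k, z k ≠ 0 → IndS G k := by
    intro k hk
    by_cases he : k = ∅
    · subst he
      intro u hu
      simp at hu
    · apply h1
      simpa [hz, he] using hk
  refine ⟨fun k => z k / l, fun k => div_nonneg (z0 k) hl.le, ?_, ?_, ?_⟩
  · rw [← Finset.sum_div, zs, div_self hl.ne']
  · intro k hk
    apply zi
    intro h
    simp [h] at hk
  · intro S hS hF
    by_contra hcon
    push Not at hcon
    apply hF
    refine ⟨fun k => if Disjoint k S then 0 else z k, ?_, ?_, ?_, ?_⟩
    · intro k
      dsimp only
      split_ifs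
      · exact le_rfl
      · exact z0 k
    · intro k hk
      apply zi
      intro h
      simp [h] at hk
    · intro v hv
      refine (h2 v (hS hv)).trans ?_
      apply Finset.sum_le_sum
      intro k _
      by_cases hvk : v ∈ k
      · have : ¬ Disjoint k S := fun h => Finset.disjoint_left.1 h hvk hv
        have hne : k ≠ ∅ := by
          rintro rfl
          simp at hvk
        simp [hvk, this, hz, hne]
      · simp [hvk]
    · have e : ∑ k, (if Disjoint k S then 0 else z k) =
          ∑ k, z k - l * ∑ k, (if Disjoint k S then z k / l else 0) := by
        rw [Finset.mul_sum, ← Finset.sum_sub_distrib]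
        apply Finset.sum_congr rfl
        intro k _
        split_ifs
        · field_simp
          ring
        · ring
      rw [e, zs]
      nlinarith

lemma exp_big (x : ℝ) (hx : 59 ≤ x) : 20 * x < Real.exp x := by
  have := Real.pow_div_factorial_le_exp x (by linarith) 3
  have h6 : ((Nat.factorial 3 : ℕ) : ℝ) = 6 := by norm_num [Nat.factorial]
  rw [h6] at this
  refine lt_of_lt_of_le ?_ this
  rw [lt_div_iff₀ (by norm_num)]
  nlinarith [mul_pos (show 0 < x by linarith) (show 0 < x by linarith),
    mul_self_nonneg (x - 59), mul_nonneg (mul_self_nonneg x) (show 0 ≤ x - 59 by linarith)]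

lemma log_small (x : ℝ) (hx : 59 ≤ x) : Real.log (7 * x) ≤ x / 4 := by
  rw [Real.log_le_iff_le_exp (by linarith)]
  have := Real.pow_div_factorial_le_exp (x / 4) (by linarith) 3
  have h6 : ((Nat.factorial 3 : ℕ) : ℝ) = 6 := by norm_num [Nat.factorial]
  rw [h6] at this
  refine le_trans ?_ this
  rw [le_div_iff₀ (by norm_num)]
  have : 3481 ≤ x ^ 2 := by nlinarith
  have : 3481 * x ≤ x ^ 3 := by nlinarith
  nlinarith

lemma log_big (x : ℝ) (hx : 59 ≤ x) : 1 ≤ Real.log (7 * x) := by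
  rw [Real.le_log_iff_exp_le (by linarith)]
  have := Real.exp_one_lt_d9
  linarith

lemma term_bound (x : ℝ) (hx : 59 ≤ x) (g s p : ℕ) (hp : 20 * x ^ 2 ≤ p)
    (hq : (Real.log (7 * x) - 1) * s + p / (2 * x) < Real.log (7 * x) * g) :
    (1 / (7 * x)) ^ g ≤ Real.exp (-x) * (Real.exp (p / (20 * x) - p / (2 * x)) *
      (Real.exp (1 - Real.log (7 * x))) ^ s) := by
  have hx0 : 0 < x := by linarith
  have e : 1 / (7 * x) = Real.exp (- Real.log (7 * x)) := by
    rw [Real.exp_neg, Real.exp_log (by positivity), one_div]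
  rw [e, ← Real.exp_nat_mul, ← Real.exp_nat_mul, ← Real.exp_add, ← Real.exp_add]
  apply Real.exp_le_exp.2
  have : x ≤ p / (20 * x) := by
    rw [le_div_iff₀ (by positivity)]
    nlinarith
  nlinarith

lemma sum_bound {V : Type} (x : ℝ) (hx : 59 ≤ x) (P : Finset V) :
    ∑ S ∈ P.powerset, Real.exp (-x) * (Real.exp ((P.card : ℝ) / (20 * x) - P.card / (2 * x)) *
      (Real.exp (1 - Real.log (7 * x))) ^ S.card) ≤
      Real.exp (-x) * (Real.exp (-(1 / (20 * x)))) ^ P.card := by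
  have hx0 : 0 < x := by linarith
  rw [← Finset.mul_sum, ← Finset.mul_sum]
  apply mul_le_mul_of_nonneg_left _ (Real.exp_pos _).le
  have h := Finset.sum_pow_mul_eq_add_pow (Real.exp (1 - Real.log (7 * x))) 1 P
  simp only [one_pow, mul_one] at h
  rw [h]
  have ha : Real.exp (1 - Real.log (7 * x)) ≤ 2 / (5 * x) := by
    rw [Real.exp_sub, Real.exp_log (by positivity), div_le_div_iff₀ (by positivity) (by positivity)]
    have := Real.exp_one_lt_d9
    nlinarith
  have h1 : Real.exp (1 - Real.log (7 * x)) + 1 ≤ Real.exp (2 / (5 * x)) :=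
    le_trans (by linarith) (Real.add_one_le_exp _)
  have h2 : (Real.exp (1 - Real.log (7 * x)) + 1) ^ P.card ≤ Real.exp (2 / (5 * x)) ^ P.card :=
    pow_le_pow_left₀ (by positivity) h1 _
  refine (mul_le_mul_of_nonneg_left h2 (Real.exp_pos _).le).trans ?_
  rw [← Real.exp_nat_mul, ← Real.exp_nat_mul, ← Real.exp_add]
  apply Real.exp_le_exp.2
  apply le_of_eq
  field_simp
  ring

lemma rank_sum {V : Type} [LinearOrder V] (x : ℝ) (hx : 59 ≤ x) (U : Finset V) :
    ∑ v ∈ U, Real.exp (-x) *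
      (Real.exp (-(1 / (20 * x)))) ^ (U.filter (fun u => u ≤ v)).card < 1 := by
  have hx0 : 0 < x := by linarith
  rw [← Finset.mul_sum]
  have h := geom_rank (Real.exp (-(1 / (20 * x)))) U
  set d := Real.exp (-(1 / (20 * x))) with hd
  set Z := ∑ v ∈ U, d ^ (U.filter (fun u => u ≤ v)).card
  have hd0 : 0 < d := Real.exp_pos _
  have hpow : 0 < d ^ (U.card + 1) := by positivity
  have hZ0 : 0 ≤ Z := Finset.sum_nonneg (fun v _ => by positivity)
  have h3 : d * (1 + 1 / (20 * x)) ≤ 1 := by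
    have : 1 + 1 / (20 * x) ≤ Real.exp (1 / (20 * x)) := by
      linarith [Real.add_one_le_exp (1 / (20 * x))]
    calc d * (1 + 1 / (20 * x)) ≤ d * Real.exp (1 / (20 * x)) :=
          mul_le_mul_of_nonneg_left this hd0.le
      _ = 1 := by rw [hd, ← Real.exp_add]; simp
  -- d/(20x) ≤ 1 - d
  have h4 : d * (1 / (20 * x)) ≤ 1 - d := by linarith
  have h5 : d * (1 / (20 * x)) * Z ≤ d := by
    have := mul_le_mul_of_nonneg_right h4 hZ0
    linarith
  have h6 : Z ≤ 20 * x := by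
    have h7 : (1 / (20 * x)) * Z ≤ 1 := by
      by_contra hc
      push Not at hc
      nlinarith
    rw [one_div, inv_mul_le_iff₀ (by positivity)] at h7
    linarith
  have h8 := exp_big x hx
  rw [Real.exp_neg, inv_mul_lt_iff₀ (Real.exp_pos _)]
  linarith

lemma direct {V : Type} [Fintype V] [LinearOrder V] (G : SimpleGraph V) (x l l' : ℝ)
    (hx : 59 ≤ x) (hl : 0 < l) (hl' : l * (1 - 1 / (7 * x)) ≤ l') (U : Finset V)
    (hU : ∀ v ∈ U, FC G (NL G v U) l) :
    ∃ c : V → Finset V, (∀ v, IndS G (c v)) ∧ ∀ I ⊆ U, CI G c I → ∀ v ∈ U,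
      20 * x ^ 2 ≤ ((U.filter (fun u => u ≤ v)).card : ℝ) →
      Real.log (7 * x) * (((I.filter (fun u => u ≤ v)).filter
        (fun u => ¬ FC G (NL G u (I.filter (fun u => u ≤ v))) l')).card : ℝ) ≤
      (Real.log (7 * x) - 1) * ((I.filter (fun u => u ≤ v)).card : ℝ) +
        ((U.filter (fun u => u ≤ v)).card : ℝ) / (2 * x) := by
  have hx0 : 0 < x := by linarith
  have hdist : ∀ v, ∃ π : Finset V → ℝ, (∀ k, 0 ≤ π k) ∧ ∑ k, π k = 1 ∧
      (∀ k, π k ≠ 0 → IndS G k) ∧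
      (v ∈ U → ∀ S ⊆ NL G v U, ¬ FC G S l' →
        (∑ k, if Disjoint k S then π k else 0) ≤ 1 / (7 * x)) := by
    intro v
    by_cases hv : v ∈ U
    · obtain ⟨π, a, b, c, d⟩ := exists_dist G l l' _ hl hl' _ (hU v hv)
      exact ⟨π, a, b, c, fun _ S hS hF => by convert d S hS hF⟩
    · have : FC G (∅ : Finset V) l :=
        ⟨fun _ => 0, by simp, by simp, by simp, by simpa using hl.le⟩
      obtain ⟨π, a, b, c, d⟩ := exists_dist G l l' _ hl hl' _ this
      exact ⟨π, a, b, c, fun h => absurd h hv⟩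
  choose π h0 h1 h2 h3 using hdist
  let P : V → Finset V := fun v => U.filter (fun u => u ≤ v)
  let Gd : (Σ _ : V, Finset V) → Finset V := fun e => e.2.filter (fun u => ¬ FC G (NL G u e.2) l')
  let Q : (Σ _ : V, Finset V) → Prop := fun e => 20 * x ^ 2 ≤ ((P e.1).card : ℝ) ∧
    (Real.log (7 * x) - 1) * (e.2.card : ℝ) + ((P e.1).card : ℝ) / (2 * x) <
      Real.log (7 * x) * ((Gd e).card : ℝ)
  let E0 : Finset (Σ _ : V, Finset V) := U.sigma (fun v => (P v).powerset)
  have hsum : ∑ e ∈ E0.filter Q, ∏ v ∈ Gd e,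
      (∑ k, if Disjoint k (NL G v e.2) then π v k else 0) < 1 := by
    calc ∑ e ∈ E0.filter Q, ∏ v ∈ Gd e,
          (∑ k, if Disjoint k (NL G v e.2) then π v k else 0)
        ≤ ∑ e ∈ E0.filter Q, Real.exp (-x) * (Real.exp (((P e.1).card : ℝ) / (20 * x)
            - (P e.1).card / (2 * x)) * (Real.exp (1 - Real.log (7 * x))) ^ e.2.card) := by
          apply Finset.sum_le_sum
          intro e he
          rw [Finset.mem_filter, Finset.mem_sigma, Finset.mem_powerset] at he
          obtain ⟨⟨hv, hS⟩, hM, hq⟩ := he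
          refine le_trans ?_ (term_bound x hx _ _ _ hM hq)
          rw [← Finset.prod_const]
          apply Finset.prod_le_prod
          · intro u _
            apply Finset.sum_nonneg
            intro k _
            split_ifs
            · exact h0 _ _
            · exact le_rfl
          · intro u hu
            simp only [Gd, Finset.mem_filter] at hu
            have huU : u ∈ U := (Finset.mem_filter.1 (hS hu.1)).1
            apply h3 u huU _ _ hu.2
            intro t ht
            simp only [NL, Finset.mem_filter] at ht ⊢
            exact ⟨(Finset.mem_filter.1 (hS ht.1)).1, ht.2⟩
      _ ≤ ∑ e ∈ E0, Real.exp (-x) * (Real.exp (((P e.1).card : ℝ) / (20 * x)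
            - (P e.1).card / (2 * x)) * (Real.exp (1 - Real.log (7 * x))) ^ e.2.card) := by
          apply Finset.sum_le_sum_of_subset_of_nonneg (Finset.filter_subset _ _)
          intro e _ _
          positivity
      _ = ∑ v ∈ U, ∑ S ∈ (P v).powerset, Real.exp (-x) * (Real.exp (((P v).card : ℝ) / (20 * x)
            - (P v).card / (2 * x)) * (Real.exp (1 - Real.log (7 * x))) ^ S.card) := by
          rw [Finset.sum_sigma]
      _ ≤ ∑ v ∈ U, Real.exp (-x) * (Real.exp (-(1 / (20 * x)))) ^ (P v).card :=
          Finset.sum_le_sum (fun v _ => sum_bound x hx (P v))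
      _ < 1 := rank_sum x hx U
  obtain ⟨c, hc1, hc2⟩ := exists_choice π h0 h1 (E0.filter Q) Gd
    (fun e v k => Disjoint k (NL G v e.2)) (by convert hsum)
  refine ⟨c, fun v => h2 v _ (hc1 v), ?_⟩
  intro I hI hCI v hv hM
  by_contra hcon
  push Not at hcon
  have hmem : (⟨v, I.filter (fun u => u ≤ v)⟩ : Σ _ : V, Finset V) ∈ E0.filter Q := by
    rw [Finset.mem_filter, Finset.mem_sigma, Finset.mem_powerset]
    exact ⟨⟨hv, Finset.filter_subset_filter _ hI⟩, hM, hcon⟩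
  obtain ⟨u, hu, hd⟩ := hc2 _ hmem
  apply hd
  rw [Finset.disjoint_left]
  intro t ht ht'
  have hu1 := (Finset.mem_filter.1 (Finset.mem_filter.1 hu).1).1
  simp only [NL, Finset.mem_filter] at ht'
  exact hCI t ht'.1.1 u hu1 ht'.2.2 ht'.2.1 ht

lemma step_aux {V : Type} [Fintype V] [LinearOrder V] (G : SimpleGraph V) (w : V → ℝ)
    (hw0 : ∀ v, 0 ≤ w v) (hmono : ∀ u v : V, u < v → w v ≤ w u) (x l' : ℝ)
    (hx : 59 ≤ x) (W : ℝ) (hW : 0 < W)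
    (U : Finset V) (hUW : ∑ v ∈ U, w v ≤ W) (hsmall : ∀ v ∈ U, w v ≤ W / (x * (x + 1) ^ 6))
    (hno : ∀ J ⊆ U, (∀ v ∈ J, FC G (NL G v J) l') → ∑ v ∈ J, w v < W / (x * (x + 1) ^ 2))
    (I : Finset V) (hI : I ⊆ U)
    (hdir : ∀ v ∈ U,
      20 * x ^ 2 ≤ ((U.filter (fun u => u ≤ v)).card : ℝ) →
      Real.log (7 * x) * (((I.filter (fun u => u ≤ v)).filter
        (fun u => ¬ FC G (NL G u (I.filter (fun u => u ≤ v))) l')).card : ℝ) ≤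
      (Real.log (7 * x) - 1) * ((I.filter (fun u => u ≤ v)).card : ℝ) +
        ((U.filter (fun u => u ≤ v)).card : ℝ) / (2 * x)) :
    ∑ v ∈ I, w v ≤ W / (x * (x + 1)) + (∑ v ∈ U, w v) / (x + 1) := by
  by_contra hcon
  push Not at hcon
  have hx0 : 0 < x := by linarith
  set L := Real.log (7 * x) with hL
  have hL1 : 1 ≤ L := log_big x hx
  have hL2 : L ≤ x / 4 := log_small x hx
  set B := I.filter (fun u => FC G (NL G u I) l') with hB
  have hBI : B ⊆ I := Finset.filter_subset _ _
  have hwB : ∑ v ∈ B, w v < W / (x * (x + 1) ^ 2) := by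
    apply hno B (hBI.trans hI)
    intro v hv
    apply FC.mono (Finset.mem_filter.1 hv).2
    exact Finset.filter_subset_filter _ hBI
  set F := U.filter (fun v => ((U.filter (fun u => u ≤ v)).card : ℝ) ≤ 20 * x ^ 2) with hF
  have hFc : (F.card : ℝ) ≤ 20 * x ^ 2 := card_first U _ (by positivity)
  have hwF : ∑ v ∈ F, w v ≤ W / (x * (x + 1) ^ 3) := by
    calc ∑ v ∈ F, w v ≤ ∑ v ∈ F, W / (x * (x + 1) ^ 6) :=
          Finset.sum_le_sum (fun v hv => hsmall v (Finset.mem_filter.1 hv).1)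
      _ = F.card * (W / (x * (x + 1) ^ 6)) := by rw [Finset.sum_const, nsmul_eq_mul]
      _ ≤ (x + 1) ^ 3 * (W / (x * (x + 1) ^ 6)) := by
          apply mul_le_mul_of_nonneg_right _ (by positivity)
          refine hFc.trans ?_
          have : 20 * x ^ 2 ≤ x * x ^ 2 := by
            apply mul_le_mul_of_nonneg_right _ (by positivity)
            linarith
          nlinarith [sq_nonneg x]
      _ = W / (x * (x + 1) ^ 3) := by
          field_simp
  set K := I \ (B ∪ F) with hK
  have hKI : K ⊆ I := Finset.sdiff_subset
  have hwK : ∑ v ∈ I, w v ≤ ∑ v ∈ K, w v + (∑ v ∈ B, w v + ∑ v ∈ F, w v) := by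
    have h1 : ∑ v ∈ I, w v ≤ ∑ v ∈ K ∪ (B ∪ F), w v := by
      apply Finset.sum_le_sum_of_subset_of_nonneg
      · intro v hv
        by_cases h : v ∈ B ∪ F
        · exact Finset.mem_union_right _ h
        · exact Finset.mem_union_left _ (Finset.mem_sdiff.2 ⟨hv, h⟩)
      · intro v _ _
        exact hw0 v
    have su : ∀ X Y : Finset V, ∑ v ∈ X ∪ Y, w v ≤ ∑ v ∈ X, w v + ∑ v ∈ Y, w v := by
      intro X Y
      rw [← Finset.sum_union_inter]
      linarith [Finset.sum_nonneg (fun v (_ : v ∈ X ∩ Y) => hw0 v)]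
    linarith [su K (B ∪ F), su B F]
  set wI := ∑ v ∈ I, w v with hwI
  set wU := ∑ v ∈ U, w v with hwU
  have hwU0 : 0 ≤ wU := Finset.sum_nonneg (fun v _ => hw0 v)
  have hIx : W / (x * (x + 1)) < wI := by
    have : 0 ≤ wU / (x + 1) := by positivity
    linarith
  have hIU : wU < x * wI := by
    have : wU / (x * (x + 1)) ≤ W / (x * (x + 1)) := by gcongr
    have e : wU / (x * (x + 1)) + wU / (x + 1) = wU / x := by
      field_simp
      ring
    have : wU / x < wI := by linarith
    rw [div_lt_iff₀ hx0] at this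
    linarith
  have hBF : ∑ v ∈ B, w v + ∑ v ∈ F, w v ≤ wI / x := by
    have h1 : W / (x * (x + 1) ^ 2) + W / (x * (x + 1) ^ 3) ≤ W / (x * (x + 1)) / x := by
      have e : W / (x * (x + 1)) / x - (W / (x * (x + 1) ^ 2) + W / (x * (x + 1) ^ 3))
          = W / (x ^ 2 * (x + 1) ^ 3) := by
        field_simp
        ring
      have : 0 ≤ W / (x ^ 2 * (x + 1) ^ 3) := by positivity
      linarith
    have h2 : W / (x * (x + 1)) / x ≤ wI / x := by gcongr
    linarith
  have hwI0 : 0 < wI := lt_trans (by positivity) hIx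
  let φ : V → ℝ := fun u => L * (if u ∈ K then 1 else 0) - (L - 1) * (if u ∈ I then 1 else 0)
    - 1 / (2 * x)
  have hφ : ∑ u ∈ U, w u * φ u = L * ∑ u ∈ K, w u - (L - 1) * wI - wU / (2 * x) := by
    have e1 : ∑ u ∈ U, w u * (if u ∈ K then (1 : ℝ) else 0) = ∑ u ∈ K, w u := by
      simp only [mul_ite, mul_one, mul_zero]
      rw [← Finset.sum_filter]
      congr 1
      ext u
      simp only [Finset.mem_filter]
      exact ⟨fun h => h.2, fun h => ⟨hI (hKI h), h⟩⟩
    have e2 : ∑ u ∈ U, w u * (if u ∈ I then (1 : ℝ) else 0) = wI := by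
      simp only [mul_ite, mul_one, mul_zero]
      rw [← Finset.sum_filter, hwI]
      congr 1
      ext u
      simp only [Finset.mem_filter]
      exact ⟨fun h => h.2, fun h => ⟨hI h, h⟩⟩
    rw [← e1, ← e2, hwU, Finset.mul_sum, Finset.mul_sum, Finset.sum_div,
      ← Finset.sum_sub_distrib, ← Finset.sum_sub_distrib]
    apply Finset.sum_congr rfl
    intro u _
    simp only [φ]
    ring
  have hpos : 0 < ∑ u ∈ U, w u * φ u := by
    rw [hφ]
    have h1 : L * (∑ v ∈ B, w v + ∑ v ∈ F, w v) ≤ wI / 4 := by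
      calc L * (∑ v ∈ B, w v + ∑ v ∈ F, w v) ≤ L * (wI / x) :=
            mul_le_mul_of_nonneg_left hBF (by linarith)
        _ ≤ (x / 4) * (wI / x) := mul_le_mul_of_nonneg_right hL2 (by positivity)
        _ = wI / 4 := by field_simp
    have h2 : wU / (2 * x) ≤ wI / 2 := by
      rw [div_le_div_iff₀ (by positivity) (by norm_num)]
      linarith
    have h3 := mul_le_mul_of_nonneg_left hwK (show 0 ≤ L by linarith)
    nlinarith
  obtain ⟨v, hv, hsum⟩ := abel w φ hmono hw0 U hpos
  set P := U.filter (fun u => u ≤ v) with hP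
  have hcount : ∑ u ∈ P, φ u = L * ((K.filter (fun u => u ≤ v)).card : ℝ)
      - (L - 1) * ((I.filter (fun u => u ≤ v)).card : ℝ) - (P.card : ℝ) / (2 * x) := by
    have e1 : P.filter (fun u => u ∈ K) = K.filter (fun u => u ≤ v) := by
      ext u
      simp only [hP, Finset.mem_filter]
      exact ⟨fun h => ⟨h.2, h.1.2⟩, fun h => ⟨⟨hI (hKI h.1), h.2⟩, h.1⟩⟩
    have e2 : P.filter (fun u => u ∈ I) = I.filter (fun u => u ≤ v) := by
      ext u
      simp only [hP, Finset.mem_filter]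
      exact ⟨fun h => ⟨h.2, h.1.2⟩, fun h => ⟨⟨hI h.1, h.2⟩, h.1⟩⟩
    simp only [φ]
    rw [Finset.sum_sub_distrib, Finset.sum_sub_distrib, ← Finset.mul_sum, ← Finset.mul_sum,
      Finset.sum_boole, Finset.sum_boole, e1, e2, Finset.sum_const, nsmul_eq_mul]
    ring
  rw [hcount] at hsum
  have hne : (K.filter (fun u => u ≤ v)).Nonempty := by
    rw [Finset.nonempty_iff_ne_empty]
    intro h
    rw [h] at hsum
    have : 0 ≤ (L - 1) * ((I.filter (fun u => u ≤ v)).card : ℝ) :=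
      mul_nonneg (by linarith) (by positivity)
    have : 0 ≤ (P.card : ℝ) / (2 * x) := by positivity
    simp at hsum
    linarith
  obtain ⟨u, hu⟩ := hne
  rw [Finset.mem_filter] at hu
  have huU : u ∈ U := hI (hKI hu.1)
  have huF : u ∉ F := fun h =>
    (Finset.mem_sdiff.1 hu.1).2 (Finset.mem_union_right _ h)
  have hrank : 20 * x ^ 2 ≤ (P.card : ℝ) := by
    have h1 : 20 * x ^ 2 < ((U.filter (fun t => t ≤ u)).card : ℝ) := by
      by_contra hc
      push Not at hc
      exact huF (Finset.mem_filter.2 ⟨huU, hc⟩)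
    have h2 : (U.filter (fun t => t ≤ u)).card ≤ P.card := by
      apply Finset.card_le_card
      intro t ht
      rw [Finset.mem_filter] at ht ⊢
      exact ⟨ht.1, ht.2.trans hu.2⟩
    have h3 : ((U.filter (fun t => t ≤ u)).card : ℝ) ≤ P.card := by exact_mod_cast h2
    linarith
  have hd := hdir v hv hrank
  have hsub : (K.filter (fun u => u ≤ v)).card ≤ ((I.filter (fun u => u ≤ v)).filter
        (fun u => ¬ FC G (NL G u (I.filter (fun u => u ≤ v))) l')).card := by
    apply Finset.card_le_card
    intro t ht
    rw [Finset.mem_filter] at ht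
    rw [Finset.mem_filter, Finset.mem_filter]
    refine ⟨⟨hKI ht.1, ht.2⟩, fun hfc => ?_⟩
    have htB : t ∉ B := fun h =>
      (Finset.mem_sdiff.1 ht.1).2 (Finset.mem_union_left _ h)
    apply htB
    rw [hB, Finset.mem_filter]
    refine ⟨hKI ht.1, hfc.mono ?_⟩
    intro s hs
    simp only [NL, Finset.mem_filter] at hs ⊢
    exact ⟨⟨hs.1, (hs.2.2.le).trans ht.2⟩, hs.2⟩
  have hsub' : ((K.filter (fun u => u ≤ v)).card : ℝ) ≤ ((I.filter (fun u => u ≤ v)).filter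
        (fun u => ¬ FC G (NL G u (I.filter (fun u => u ≤ v))) l')).card := by
    exact_mod_cast hsub
  have := mul_le_mul_of_nonneg_left hsub' (show 0 ≤ L by linarith)
  linarith

lemma step {V : Type} [Fintype V] [LinearOrder V] (G : SimpleGraph V) (w : V → ℝ)
    (hw0 : ∀ v, 0 ≤ w v) (hmono : ∀ u v : V, u < v → w v ≤ w u) (x l l' : ℝ)
    (hx : 59 ≤ x) (hl : 0 < l) (hl' : l * (1 - 1 / (7 * x)) ≤ l') (A : Finset V)
    (hW : 0 < ∑ v ∈ A, w v) (hA : ∀ v ∈ A, FC G (NL G v A) l)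
    (hsmall : ∀ v ∈ A, w v ≤ (∑ v ∈ A, w v) / (x * (x + 1) ^ 6))
    (ih : ∀ J ⊆ A, (∑ v ∈ A, w v) / (x * (x + 1) ^ 2) ≤ ∑ v ∈ J, w v →
      (∀ v ∈ J, FC G (NL G v J) l') → ∃ c : V → Finset V, (∀ v, IndS G (c v)) ∧
        ∀ I ⊆ J, CI G c I → ∑ v ∈ I, w v ≤ (∑ v ∈ J, w v) / (x + 1)) :
    ∃ c : V → Finset V, (∀ v, IndS G (c v)) ∧
        ∀ I ⊆ A, CI G c I → ∑ v ∈ I, w v ≤ (∑ v ∈ A, w v) / x := by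
  have hx0 : 0 < x := by linarith
  let R : Finset V → Prop := fun D => ∃ c : V → Finset V, (∀ v, IndS G (c v)) ∧
        ∀ I ⊆ D, CI G c I → ∑ v ∈ I, w v ≤ (∑ v ∈ D, w v) / (x + 1)
  have hR0 : R ∅ := by
    refine ⟨fun _ => ∅, fun v u hu => by simp at hu, ?_⟩
    intro I hI _
    rw [Finset.subset_empty.1 hI]
    simp
  obtain ⟨D, hD, hmax⟩ := Finset.exists_max_image (A.powerset.filter R) Finset.card
    ⟨∅, Finset.mem_filter.2 ⟨Finset.empty_mem_powerset _, hR0⟩⟩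
  rw [Finset.mem_filter, Finset.mem_powerset] at hD
  obtain ⟨hDA, cD, hcD, hcD'⟩ := hD
  set U := A \ D with hU
  have hUA : U ⊆ A := Finset.sdiff_subset
  have hUD : ∀ v ∈ U, v ∉ D := fun v hv => (Finset.mem_sdiff.1 hv).2
  have hDU : ∑ v ∈ U, w v + ∑ v ∈ D, w v = ∑ v ∈ A, w v := Finset.sum_sdiff hDA
  have hsplit : ∀ I : Finset V, ∑ v ∈ I.filter (fun v => v ∈ D), w v +
      ∑ v ∈ I.filter (fun v => v ∉ D), w v = ∑ v ∈ I, w v := fun I =>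
    Finset.sum_filter_add_sum_filter_not I _ _
  have hno : ∀ J ⊆ U, (∀ v ∈ J, FC G (NL G v J) l') →
      ∑ v ∈ J, w v < (∑ v ∈ A, w v) / (x * (x + 1) ^ 2) := by
    intro J hJ hJF
    by_contra hcon
    push Not at hcon
    obtain ⟨cJ, hcJ, hcJ'⟩ := ih J (hJ.trans hUA) hcon hJF
    have hdisj : Disjoint D J := by
      rw [Finset.disjoint_left]
      intro v hv hv'
      exact hUD v (hJ hv') hv
    have hRDJ : R (D ∪ J) := by
      refine ⟨fun v => if v ∈ D then cD v else cJ v, ?_, ?_⟩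
      · intro v
        dsimp only
        split_ifs
        · exact hcD v
        · exact hcJ v
      · intro I hI hCI
        have h1 := hcD' (I.filter (fun v => v ∈ D))
          (fun v hv => (Finset.mem_filter.1 hv).2) (by
            intro u hu v hv huv hadj
            rw [Finset.mem_filter] at hu hv
            have := hCI u hu.1 v hv.1 huv hadj
            simpa [hv.2] using this)
        have h2 := hcJ' (I.filter (fun v => v ∉ D))
          (fun v hv => by
            rw [Finset.mem_filter] at hv
            exact (Finset.mem_union.1 (hI hv.1)).resolve_left hv.2) (by
            intro u hu v hv huv hadj
            rw [Finset.mem_filter] at hu hv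
            have := hCI u hu.1 v hv.1 huv hadj
            simpa [hv.2] using this)
        rw [← hsplit I, Finset.sum_union hdisj, add_div]
        linarith
    have hJne : J.Nonempty := by
      rw [Finset.nonempty_iff_ne_empty]
      rintro rfl
      have : 0 < (∑ v ∈ A, w v) / (x * (x + 1) ^ 2) := by positivity
      simp only [Finset.sum_empty] at hcon
      linarith
    have := hmax (D ∪ J) (Finset.mem_filter.2 ⟨Finset.mem_powerset.2
      (Finset.union_subset hDA (hJ.trans hUA)), hRDJ⟩)
    rw [Finset.card_union_of_disjoint hdisj] at this
    have := hJne.card_pos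
    omega
  obtain ⟨cU, hcU, hcU'⟩ := direct G x l l' hx hl hl' U (fun v hv =>
    (hA v (hUA hv)).mono (Finset.filter_subset_filter _ hUA))
  refine ⟨fun v => if v ∈ D then cD v else cU v, ?_, ?_⟩
  · intro v
    dsimp only
    split_ifs
    · exact hcD v
    · exact hcU v
  · intro I hI hCI
    have h1 := hcD' (I.filter (fun v => v ∈ D))
      (fun v hv => (Finset.mem_filter.1 hv).2) (by
        intro u hu v hv huv hadj
        rw [Finset.mem_filter] at hu hv
        have := hCI u hu.1 v hv.1 huv hadj
        simpa [hv.2] using this)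
    have hI2 : I.filter (fun v => v ∉ D) ⊆ U := fun v hv => by
      rw [Finset.mem_filter] at hv
      exact Finset.mem_sdiff.2 ⟨hI hv.1, hv.2⟩
    have h2 := step_aux G w hw0 hmono x l' hx (∑ v ∈ A, w v) hW U
      (by linarith [Finset.sum_nonneg (fun v (_ : v ∈ D) => hw0 v)])
      (fun v hv => hsmall v (hUA hv)) hno (I.filter (fun v => v ∉ D)) hI2
      (hcU' _ hI2 (by
        intro u hu v hv huv hadj
        rw [Finset.mem_filter] at hu hv
        have := hCI u hu.1 v hv.1 huv hadj
        simpa [hv.2] using this))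
    rw [← hsplit I]
    have e : (∑ v ∈ A, w v) / x = (∑ v ∈ A, w v) / (x * (x + 1)) +
        (∑ v ∈ U, w v) / (x + 1) + (∑ v ∈ D, w v) / (x + 1) := by
      rw [← hDU]
      field_simp
      ring
    linarith

lemma base_case {V : Type} [Fintype V] [LinearOrder V] {G : SimpleGraph V} {w : V → ℝ}
    (hw0 : ∀ v, 0 ≤ w v) (x l : ℝ) (hx : 59 ≤ x) (hl2 : l < 2) (f : ℝ) (hf : x ≤ f)
    (A : Finset V) (hA : ∀ v ∈ A, FC G (NL G v A) l)
    (hind : ∀ I ⊆ A, IndS G I → ∑ v ∈ I, w v ≤ (∑ v ∈ A, w v) / f) :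
    ∃ c : V → Finset V, (∀ v, IndS G (c v)) ∧
        ∀ I ⊆ A, CI G c I → ∑ v ∈ I, w v ≤ (∑ v ∈ A, w v) / x := by
  refine ⟨fun v => if v ∈ A then NL G v A else ∅, ?_, ?_⟩
  · intro v
    dsimp only
    split_ifs with hv
    · exact (hA v hv).indep hl2
    · intro u hu
      simp at hu
  · intro I hI hCI
    have key : ∀ u ∈ I, ∀ v ∈ I, u < v → ¬ G.Adj u v := by
      intro u hu v hv huv hadj
      apply hCI u hu v hv huv hadj
      dsimp only
      rw [if_pos (hI hv), NL, Finset.mem_filter]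
      exact ⟨hI hu, hadj, huv⟩
    have h1 := hind I hI (by
      intro u hu v hv hadj
      rcases lt_trichotomy u v with h | h | h
      · exact key u hu v hv h hadj
      · exact hadj.ne h
      · exact key v hv u hu h hadj.symm)
    refine h1.trans ?_
    exact div_le_div_of_nonneg_left (Finset.sum_nonneg (fun v _ => hw0 v)) (by linarith) hf

lemma gamma_mono {a b : ℝ} (ha : 2 ≤ a) (hab : a ≤ b) : Real.Gamma a ≤ Real.Gamma b :=
  Real.Gamma_strictMonoOn_Ici.monotoneOn (Set.mem_Ici.2 ha) (Set.mem_Ici.2 (ha.trans hab)) hab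

lemma fGamma_ge (x l : ℝ) (hx : 59 ≤ x) (hl : 1 ≤ l) : x ≤ fGamma x l := by
  have h7 : 1 ≤ l ^ 7 := one_le_pow₀ hl
  have h : Real.Gamma (x + 1) ≤ Real.Gamma (x * l ^ 7 + 1) :=
    gamma_mono (by linarith) (by nlinarith)
  have hp : 0 < Real.Gamma (x + 1) := Real.Gamma_pos_of_pos (by linarith)
  have h1 : 1 ≤ Real.Gamma (x * l ^ 7 + 1) / Real.Gamma (x + 1) := by
    rwa [le_div_iff₀ hp, one_mul]
  have := one_le_pow₀ h1 (n := 3)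
  unfold fGamma
  nlinarith

lemma fGamma_ge2 (x l : ℝ) (hx : 59 ≤ x) (hl : 2 ≤ l) : x * (x + 1) ^ 6 ≤ fGamma x l := by
  have h7 : (2 : ℝ) ^ 7 ≤ l ^ 7 := pow_le_pow_left₀ (by norm_num) hl 7
  have h : Real.Gamma (x + 1 + 1 + 1) ≤ Real.Gamma (x * l ^ 7 + 1) :=
    gamma_mono (by linarith) (by nlinarith)
  have hp : 0 < Real.Gamma (x + 1) := Real.Gamma_pos_of_pos (by linarith)
  rw [Real.Gamma_add_one (by linarith), Real.Gamma_add_one (by linarith)] at h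
  have h1 : (x + 1) ^ 2 ≤ Real.Gamma (x * l ^ 7 + 1) / Real.Gamma (x + 1) := by
    rw [le_div_iff₀ hp]
    refine le_trans ?_ h
    have := mul_pos (show 0 < x + 1 by linarith) hp
    nlinarith
  have h2 := pow_le_pow_left₀ (by positivity) h1 3
  unfold fGamma
  apply mul_le_mul_of_nonneg_left _ (by linarith)
  calc (x + 1) ^ 6 = ((x + 1) ^ 2) ^ 3 := by ring
    _ ≤ _ := h2

lemma fGamma_step (x l l' : ℝ) (hx : 59 ≤ x) (h : (x + 1) * l' ^ 7 = x * l ^ 7) :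
    fGamma x l = x * (x + 1) ^ 2 * fGamma (x + 1) l' := by
  have hp : 0 < Real.Gamma (x + 1) := Real.Gamma_pos_of_pos (by linarith)
  have hx1 : x + 1 ≠ 0 := by linarith
  unfold fGamma
  rw [h, Real.Gamma_add_one (s := x + 1) hx1]
  field_simp

lemma main_ind {V : Type} [Fintype V] [LinearOrder V] (G : SimpleGraph V) (w : V → ℝ)
    (hw0 : ∀ v, 0 ≤ w v) (hmono : ∀ u v : V, u < v → w v ≤ w u) (n : ℕ) :
    ∀ x l : ℝ, 59 ≤ x → 1 ≤ l → x * l ^ 7 ≤ x + n → ∀ A : Finset V,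
      (∀ v ∈ A, FC G (NL G v A) l) →
      (∀ I ⊆ A, IndS G I → ∑ v ∈ I, w v ≤ (∑ v ∈ A, w v) / fGamma x l) →
      ∃ c : V → Finset V, (∀ v, IndS G (c v)) ∧
        ∀ I ⊆ A, CI G c I → ∑ v ∈ I, w v ≤ (∑ v ∈ A, w v) / x := by
  induction n with
  | zero =>
    intro x l hx hl hn A hA hind
    have hx0 : 0 < x := by linarith
    have hl2 : l < 2 := by
      by_contra hc
      push Not at hc
      have h7 : (2 : ℝ) ^ 7 ≤ l ^ 7 := pow_le_pow_left₀ (by norm_num) hc 7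
      push_cast at hn
      nlinarith
    exact base_case hw0 x l hx hl2 _ (fGamma_ge x l hx hl) A hA hind
  | succ n ih =>
    intro x l hx hl hn A hA hind
    have hx0 : 0 < x := by linarith
    rcases lt_or_ge l 2 with hl2 | hl2
    · exact base_case hw0 x l hx hl2 _ (fGamma_ge x l hx hl) A hA hind
    have hWnn : 0 ≤ ∑ v ∈ A, w v := Finset.sum_nonneg (fun v _ => hw0 v)
    rcases hWnn.eq_or_lt with hW | hW
    · refine ⟨fun _ => ∅, fun v u hu => by simp at hu, ?_⟩
      intro I hI _
      rw [← hW, zero_div, hW]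
      exact Finset.sum_le_sum_of_subset_of_nonneg hI (fun v _ _ => hw0 v)
    set r : ℝ := (x / (x + 1)) ^ ((1 : ℝ) / 7) with hr
    have hr0 : 0 ≤ r := by positivity
    have hr7 : r ^ 7 = x / (x + 1) := by
      rw [hr, ← Real.rpow_natCast, ← Real.rpow_mul (by positivity)]
      norm_num
    have h7 : (2 : ℝ) ^ 7 ≤ l ^ 7 := pow_le_pow_left₀ (by norm_num) hl2 7
    have hrel : (x + 1) * (l * r) ^ 7 = x * l ^ 7 := by
      rw [mul_pow, hr7]
      field_simp
    have hl'1 : 1 ≤ l * r := by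
      by_contra hc
      push Not at hc
      have : (l * r) ^ 7 ≤ 1 := pow_le_one₀ (by positivity) hc.le
      nlinarith
    have hrge : 1 - 1 / (7 * x) ≤ r := by
      by_contra hc
      push Not at hc
      set t := 1 / (7 * x) with ht
      have ht0 : 0 < t := by positivity
      have h1 : r ^ 7 < (1 - t) ^ 7 := pow_lt_pow_left₀ hc hr0 (by norm_num)
      have ht1 : t < 1 := by
        rw [ht, div_lt_one (by positivity)]
        linarith
      have h2 : 1 + 7 * t ≤ (1 + t) ^ 7 := by
        have := one_add_mul_le_pow (show (-2 : ℝ) ≤ t by linarith) 7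
        push_cast at this
        exact this
      have h3 : (1 - t) ^ 7 * (1 + t) ^ 7 ≤ 1 := by
        rw [← mul_pow]
        apply pow_le_one₀ <;> nlinarith
      have h4 : (1 - t) ^ 7 * (1 + 7 * t) ≤ 1 :=
        le_trans (mul_le_mul_of_nonneg_left h2 (pow_nonneg (by linarith) 7)) h3
      have h5 : 7 * t = 1 / x := by
        rw [ht]
        field_simp
      rw [hr7] at h1
      rw [h5] at h4
      have h6 : x / (x + 1) * (1 + 1 / x) = 1 := by
        field_simp
      have : 0 < 1 + 1 / x := by positivity
      nlinarith
    have hf := fGamma_step x l (l * r) hx hrel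
    have hf2 := fGamma_ge (x + 1) (l * r) (by linarith) hl'1
    have hfpos : 0 < fGamma (x + 1) (l * r) := by linarith
    apply step G w hw0 hmono x l (l * r) hx (by linarith)
      (mul_le_mul_of_nonneg_left hrge (by linarith)) A hW hA
    · intro v hv
      have h1 := hind {v} (by simpa using hv) (by
        intro a ha b hb
        simp only [Finset.mem_singleton] at ha hb
        subst ha; subst hb
        exact G.loopless.irrefl _)
      rw [Finset.sum_singleton] at h1
      refine h1.trans ?_
      apply div_le_div_of_nonneg_left hWnn (by positivity) (fGamma_ge2 x l hx hl2)
    · intro J hJ hJw hJF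
      apply ih (x + 1) (l * r) (by linarith) hl'1 (by
        rw [hrel]; push_cast at hn; linarith) J hJF
      intro I hI hInd
      refine (hind I (hI.trans hJ) hInd).trans ?_
      rw [hf, ← div_div]
      gcongr

/-- Attainment of the infimum, transported to `FC`. -/
lemma fc_of_fracChrom {V : Type} [Fintype V] (G : SimpleGraph V) (s : Set V) (T : Finset V)
    (hT : ∀ v, v ∈ T ↔ v ∈ s) (l : ℝ) [Fintype s] (h : fracChrom (G.induce s) ≤ l) :
    FC G T l := by
  let C : Set (Finset s → ℝ) := {y | (∀ I, 0 ≤ y I) ∧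
      (∀ I : Finset s, y I ≠ 0 → ∀ u ∈ I, ∀ v ∈ I, ¬ (G.induce s).Adj u v) ∧
      (∀ v : s, 1 ≤ ∑ I ∈ Finset.univ.filter (fun I : Finset s => v ∈ I), y I)}
  have hCclosed : IsClosed C := by
    have e : C = (⋂ I, {y | 0 ≤ y I}) ∩
        ((⋂ I : {I : Finset s // ¬ ∀ u ∈ I, ∀ v ∈ I, ¬ (G.induce s).Adj u v}, {y | y I.1 = 0}) ∩
        (⋂ v : s, {y | 1 ≤ ∑ I ∈ Finset.univ.filter (fun I : Finset s => v ∈ I), y I})) := by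
      ext y
      simp only [C, Set.mem_ofPred_eq, Set.mem_inter_iff, Set.mem_iInter, Subtype.forall]
      refine and_congr Iff.rfl (and_congr ?_ Iff.rfl)
      constructor
      · intro h I hI
        by_contra hc
        exact hI (fun u hu v hv => h I hc u hu v hv)
      · intro h I hI
        by_contra hc
        exact hI (h I hc)
    rw [e]
    refine IsClosed.inter (isClosed_iInter fun I => ?_)
      (IsClosed.inter (isClosed_iInter fun I => ?_) (isClosed_iInter fun v => ?_))
    · exact isClosed_le continuous_const (continuous_apply I)
    · exact isClosed_eq (continuous_apply I.1) continuous_const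
    · exact isClosed_le continuous_const (continuous_finsetSum _ fun I _ => continuous_apply I)
  let y1 : Finset s → ℝ := fun I => if I.card = 1 then 1 else 0
  have hy1 : y1 ∈ C := by
    refine ⟨?_, ?_, ?_⟩
    · intro I
      simp only [y1]
      split_ifs <;> norm_num
    · intro I hI u hu v hv
      have hc : I.card = 1 := by
        by_contra hc
        simp [y1, hc] at hI
      obtain ⟨a, rfl⟩ := Finset.card_eq_one.1 hc
      simp only [Finset.mem_singleton] at hu hv
      subst hu; subst hv
      exact (G.induce s).loopless.irrefl _
    · intro v
      have := Finset.single_le_sum (f := y1)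
        (s := Finset.univ.filter (fun I : Finset s => v ∈ I)) (a := {v})
        (fun I _ => by
          simp only [y1]
          split_ifs <;> norm_num) (by simp)
      simpa [y1] using this
  set N : ℝ := ∑ I, y1 I with hN
  let C' : Set (Finset s → ℝ) := C ∩ {y | ∑ I, y I ≤ N}
  have hcont : Continuous (fun y : Finset s → ℝ => ∑ I, y I) :=
    continuous_finsetSum _ fun I _ => continuous_apply I
  have hC'c : IsCompact C' := by
    apply IsCompact.of_isClosed_subset (isCompact_Icc (a := (0 : Finset s → ℝ)) (b := fun _ => N))
    · exact hCclosed.inter (isClosed_le hcont continuous_const)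
    · intro y hy
      refine ⟨fun I => hy.1.1 I, fun I => ?_⟩
      exact (Finset.single_le_sum (fun J _ => hy.1.1 J) (Finset.mem_univ I)).trans hy.2
  obtain ⟨y, hy, hmin⟩ := hC'c.exists_isMinOn ⟨y1, hy1, le_refl N⟩ hcont.continuousOn
  have hyl : ∑ I, y I ≤ l := by
    refine le_trans ?_ h
    unfold fracChrom
    apply le_csInf
    · exact ⟨_, y1, hy1.1, hy1.2.1, fun v => by convert hy1.2.2 v, rfl⟩
    · rintro c ⟨z, hz0, hz1, hz2, rfl⟩
      rcases le_or_gt (∑ I, z I) N with hzN | hzN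
      · exact hmin (show z ∈ C' from ⟨⟨hz0, hz1, fun v => by convert hz2 v⟩, hzN⟩)
      · exact le_trans hy.2 hzN.le
  obtain ⟨⟨hy0, hyi, hyc⟩, _⟩ := hy
  -- transport along the embedding
  let em : s ↪ V := Function.Embedding.subtype _
  have hinj : Function.Injective (fun J : Finset s => J.map em) := Finset.map_injective em
  let Y : Finset V → ℝ := fun I => ∑ J : Finset s, if J.map em = I then y J else 0
  have hY : ∀ p : Finset V → Prop, (∑ I, if p I then Y I else 0) =
      ∑ J : Finset s, if p (J.map em) then y J else 0 := by
    intro p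
    have : ∀ I, (if p I then Y I else 0) =
        ∑ J : Finset s, if J.map em = I then (if p (J.map em) then y J else 0) else 0 := by
      intro I
      by_cases hp : p I
      · rw [if_pos hp]
        apply Finset.sum_congr rfl
        intro J _
        by_cases hJ : J.map em = I
        · rw [if_pos hJ, if_pos hJ, hJ, if_pos hp]
        · rw [if_neg hJ, if_neg hJ]
      · rw [if_neg hp]
        symm
        apply Finset.sum_eq_zero
        intro J _
        by_cases hJ : J.map em = I
        · rw [if_pos hJ, hJ, if_neg hp]
        · rw [if_neg hJ]
    simp only [this]
    rw [Finset.sum_comm]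
    apply Finset.sum_congr rfl
    intro J _
    rw [Finset.sum_ite_eq]
    simp
  refine ⟨Y, ?_, ?_, ?_, ?_⟩
  · intro I
    apply Finset.sum_nonneg
    intro J _
    split_ifs
    · exact hy0 J
    · exact le_rfl
  · intro I hI
    obtain ⟨J, _, hJ⟩ := Finset.exists_ne_zero_of_sum_ne_zero hI
    have hJI : J.map em = I := by
      by_contra hc
      simp [hc] at hJ
    rw [if_pos hJI] at hJ
    subst hJI
    intro u hu v hv hadj
    obtain ⟨a, ha, rfl⟩ := Finset.mem_map.1 hu
    obtain ⟨b, hb, rfl⟩ := Finset.mem_map.1 hv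
    exact hyi J hJ a ha b hb hadj
  · intro v hv
    have hYv := hY (fun I => v ∈ I)
    refine le_of_le_of_eq ?_ (Eq.trans hYv.symm (by
      apply Finset.sum_congr rfl
      intro I _
      by_cases hvI : v ∈ I <;> simp only [hvI, if_true, if_false]))
    have hvs := (hT v).1 hv
    have := hyc ⟨v, hvs⟩
    rw [Finset.sum_filter] at this
    refine this.trans (le_of_eq ?_)
    apply Finset.sum_congr rfl
    intro J _
    have : (⟨v, hvs⟩ : s) ∈ J ↔ v ∈ J.map em := by
      rw [Finset.mem_map]
      constructor
      · intro h
        exact ⟨_, h, rfl⟩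
      · rintro ⟨a, ha, rfl⟩
        exact ha
    by_cases hvI : v ∈ J.map em
    · rw [if_pos hvI, if_pos (this.2 hvI)]
    · rw [if_neg hvI, if_neg (fun h => hvI (this.1 h))]
  · have := hY (fun _ => True)
    simp only [if_true] at this
    rw [this]
    exact hyl

lemma fracChrom_ge {V : Type} [Fintype V] (H : SimpleGraph V) (w : V → ℝ) (hw0 : ∀ v, 0 ≤ w v)
    (hW : 0 < ∑ v, w v) (x : ℝ) (hx : 0 < x)
    (hH : ∀ I : Finset V, (∀ u ∈ I, ∀ v ∈ I, ¬ H.Adj u v) → ∑ v ∈ I, w v ≤ (∑ v, w v) / x) :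
    x ≤ fracChrom H := by
  unfold fracChrom
  apply le_csInf
  · refine ⟨_, fun I => if I.card = 1 then 1 else 0, ?_, ?_, ?_, rfl⟩
    · intro I
      dsimp only
      split_ifs <;> norm_num
    · intro I hI u hu v hv
      have hc : I.card = 1 := by
        by_contra hc
        simp [hc] at hI
      obtain ⟨a, rfl⟩ := Finset.card_eq_one.1 hc
      simp only [Finset.mem_singleton] at hu hv
      subst hu; subst hv
      exact H.loopless.irrefl _
    · intro v
      have := Finset.single_le_sum (f := fun I : Finset V => if I.card = 1 then (1 : ℝ) else 0)
        (s := Finset.univ.filter (fun I : Finset V => v ∈ I)) (a := {v})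
        (fun I _ => by
          split_ifs <;> norm_num) (by simp)
      simpa using this
  · rintro c ⟨y, h0, h1, h2, rfl⟩
    have e : ∑ v, w v ≤ ∑ I : Finset V, y I * ((∑ v, w v) / x) := by
      calc ∑ v, w v ≤ ∑ v, w v * ∑ I ∈ Finset.univ.filter (fun I : Finset V => v ∈ I), y I :=
            Finset.sum_le_sum (fun v _ => le_mul_of_one_le_right (hw0 v) (h2 v))
        _ = ∑ v, ∑ I : Finset V, if v ∈ I then y I * w v else 0 := by
            apply Finset.sum_congr rfl
            intro v _
            rw [Finset.sum_filter, Finset.mul_sum]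
            apply Finset.sum_congr rfl
            intro I _
            split_ifs
            · ring
            · ring
        _ = ∑ I : Finset V, y I * ∑ v ∈ I, w v := by
            rw [Finset.sum_comm]
            apply Finset.sum_congr rfl
            intro I _
            rw [← Finset.sum_filter, Finset.mul_sum]
            congr 1
            ext v
            simp
        _ ≤ _ := by
            apply Finset.sum_le_sum
            intro I _
            by_cases hI : y I = 0
            · simp [hI]
            · exact mul_le_mul_of_nonneg_left (hH I (h1 I hI)) (h0 I)
    rw [← Finset.sum_mul, ← mul_div_assoc, le_div_iff₀ hx] at e
    nlinarith

end TFS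

theorem triangle_free_spanning_subgraph_of_light_indep_sets
    (x l : ℝ) (hx : 59 ≤ x) (hl : 1 ≤ l)
    (V : Type) [Fintype V] [LinearOrder V] (G : SimpleGraph V)
    (w : V → ℝ) (hw0 : ∀ v, 0 ≤ w v)
    (hmono : ∀ u v : V, u < v → w v ≤ w u)
    (hwV : ∑ v, w v ≠ 0)
    (hindep : ∀ I : Finset V, (∀ u ∈ I, ∀ v ∈ I, ¬ G.Adj u v) →
      ∑ v ∈ I, w v ≤ (∑ v, w v) / fGamma x l)
    (hleft : ∀ v : V, fracChrom (G.induce {u | G.Adj u v ∧ u < v}) ≤ l) :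
    ∃ H : SimpleGraph V, H ≤ G ∧ H.CliqueFree 3 ∧
      (∀ I : Finset V, (∀ u ∈ I, ∀ v ∈ I, ¬ H.Adj u v) →
        ∑ v ∈ I, w v ≤ (∑ v, w v) / x) ∧
      x ≤ fracChrom H := by
  have hx0 : 0 < x := by linarith
  have hW : 0 < ∑ v, w v := lt_of_le_of_ne (Finset.sum_nonneg (fun v _ => hw0 v)) hwV.symm
  obtain ⟨n, hn⟩ := exists_nat_ge (x * l ^ 7 - x)
  obtain ⟨c, hc, hcI⟩ := TFS.main_ind G w hw0 hmono n x l hx hl (by linarith) Finset.univ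
    (fun v _ => TFS.fc_of_fracChrom G {u | G.Adj u v ∧ u < v} _
      (fun u => by simp [TFS.NL]) l (hleft v))
    (fun I _ hI => hindep I hI)
  let H : SimpleGraph V := SimpleGraph.fromRel (fun u v => u < v ∧ G.Adj u v ∧ u ∈ c v)
  have hHadj : ∀ u v, u < v → (H.Adj u v ↔ G.Adj u v ∧ u ∈ c v) := by
    intro u v huv
    simp only [H, SimpleGraph.fromRel_adj]
    constructor
    · rintro ⟨_, h | h⟩
      · exact h.2
      · exact absurd h.1 huv.asymm
    · intro h
      exact ⟨huv.ne, Or.inl ⟨huv, h⟩⟩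
  have hHG : H ≤ G := by
    intro u v h
    simp only [H, SimpleGraph.fromRel_adj] at h
    rcases h.2 with h | h
    · exact h.2.1
    · exact h.2.1.symm
  have hlight : ∀ I : Finset V, (∀ u ∈ I, ∀ v ∈ I, ¬ H.Adj u v) →
      ∑ v ∈ I, w v ≤ (∑ v, w v) / x := by
    intro I hI
    apply hcI I (Finset.subset_univ I)
    intro u hu v hv huv hadj hmem
    exact hI u hu v hv ((hHadj u v huv).2 ⟨hadj, hmem⟩)
  have tri : ∀ a b d, a < b → b < d → H.Adj a b → H.Adj a d → H.Adj b d → False := by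
    intro a b d hab hbd h1 h2 h3
    exact hc d a ((hHadj a d (hab.trans hbd)).1 h2).2 b ((hHadj b d hbd).1 h3).2 (hHG h1)
  refine ⟨H, hHG, ?_, hlight, TFS.fracChrom_ge H w hw0 hW x hx0 hlight⟩
  intro t ht
  rw [SimpleGraph.is3Clique_iff] at ht
  obtain ⟨a, b, d, h1, h2, h3, _⟩ := ht
  rcases lt_or_gt_of_ne h1.ne with hab | hab <;> rcases lt_or_gt_of_ne h2.ne with had | had <;>
    rcases lt_or_gt_of_ne h3.ne with hbd | hbd
  · exact tri a b d hab hbd h1 h2 h3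
  · exact tri a d b had hbd h2 h1 h3.symm
  · exact absurd (hab.trans hbd) had.asymm
  · exact tri d a b had hab h2.symm h3.symm h1
  · exact tri b a d hab had h1.symm h3 h2
  · exact absurd (hab.trans had) hbd.asymm
  · exact tri b d a hbd had h3 h1.symm h2.symm
  · exact tri d b a hbd hab h3.symm h2.symm h1.symm
end

section
/- The Erdős–Hajnal conjecture holds for Kneser graphs: for all positive integers k and g, there exists an integer h(k,g) such that every Kneser graph KG(n,m) with 0 < m ≤ n/2 and chromatic number χ(KG(n,m)) = n − 2m + 2 ≥ h(k,g) contains a subgraph with chromatic number at least k and girth at least g. -/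
open scoped Classical

/-- The Kneser graph `KG(n,m)`: vertices are the `m`-element subsets of `{1,…,n}`,
two vertices being adjacent iff the corresponding sets are disjoint. -/
def kneser (n m : ℕ) : SimpleGraph {s : Finset (Fin n) // s.card = m} :=
  SimpleGraph.fromRel fun a b => Disjoint a.1 b.1


/-- `altP L s b t J = 1` iff labels of positions in `J` with abs value `< t`, read downwards, are
distinct in abs value and alternate, starting with sign `b`. -/
noncomputable def altP (L : ℕ → ℕ) (s : ℕ → Bool) : ℕ → Bool → Finset ℕ → ZMod 2
  | 0, _, _ => 1
  | t+1, b, J =>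
    if (J.filter (fun j => L j = t)).card = 0 then altP L s t b J
    else if (J.filter (fun j => L j = t)).card = 1 ∧ ∀ j ∈ J, L j = t → s j = b
      then altP L s t (!b) J else 0

lemma altP_congr (L L' : ℕ → ℕ) (s s' : ℕ → Bool) (t : ℕ) : ∀ (b : Bool) (J : Finset ℕ),
    (∀ j ∈ J, L j = L' j) → (∀ j ∈ J, s j = s' j) → altP L s t b J = altP L' s' t b J := by
  induction t with
  | zero => intros; rfl
  | succ t ih =>
    intro b J h1 h2
    have e : J.filter (fun j => L j = t) = J.filter (fun j => L' j = t) :=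
      Finset.filter_congr (fun j hj => by rw [h1 j hj])
    have e2 : (∀ j ∈ J, L j = t → s j = b) ↔ (∀ j ∈ J, L' j = t → s' j = b) :=
      forall₂_congr (fun j hj => by rw [h1 j hj, h2 j hj])
    simp only [altP, e, e2, ih b J h1 h2, ih (!b) J h1 h2]

lemma altP_not (L : ℕ → ℕ) (s : ℕ → Bool) (t : ℕ) : ∀ (b : Bool) (J : Finset ℕ),
    altP L (fun j => ! s j) t b J = altP L s t (!b) J := by
  induction t with
  | zero => intros; rfl
  | succ t ih =>
    intro b J
    have : ∀ j, ((!s j) = b) ↔ (s j = !b) := by intro j; cases s j <;> cases b <;> simp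
    simp only [altP, ih, this]

/-- restricting to elements of small label -/
lemma altP_erase_of_ge (L : ℕ → ℕ) (s : ℕ → Bool) (t : ℕ) : ∀ (b : Bool) (J : Finset ℕ) (x : ℕ),
    t ≤ L x → altP L s t b (J.erase x) = altP L s t b J := by
  induction t with
  | zero => intros; rfl
  | succ t ih =>
    intro b J x hx
    have e : (J.erase x).filter (fun j => L j = t) = J.filter (fun j => L j = t) := by
      ext j; simp only [Finset.mem_filter, Finset.mem_erase]
      constructor
      · rintro ⟨⟨_, h⟩, h'⟩; exact ⟨h, h'⟩
      · rintro ⟨h, h'⟩; refine ⟨⟨?_, h⟩, h'⟩; rintro rfl; omega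
    have e2 : (∀ j ∈ J.erase x, L j = t → s j = b) ↔ (∀ j ∈ J, L j = t → s j = b) := by
      constructor
      · intro h j hj hl; refine h j (Finset.mem_erase.2 ⟨?_, hj⟩) hl; rintro rfl; omega
      · intro h j hj hl; exact h j (Finset.mem_of_mem_erase hj) hl
    simp only [altP, e, e2, ih _ J x (by omega)]

lemma altP_card (L : ℕ → ℕ) (s : ℕ → Bool) (t : ℕ) : ∀ (b : Bool) (J : Finset ℕ),
    altP L s t b J ≠ 0 → (J.filter (fun j => L j < t)).card ≤ t := by
  induction t with
  | zero => intros; simp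
  | succ t ih =>
    intro b J h
    have e : J.filter (fun j => L j < t + 1) =
      J.filter (fun j => L j < t) ∪ J.filter (fun j => L j = t) := by
      ext j; simp only [Finset.mem_filter, Finset.mem_union]
      constructor
      · rintro ⟨a, b⟩
        rcases Nat.lt_succ_iff_lt_or_eq.1 b with h | h
        · exact Or.inl ⟨a, h⟩
        · exact Or.inr ⟨a, h⟩
      · rintro (⟨a, b⟩ | ⟨a, b⟩)
        · exact ⟨a, by omega⟩
        · exact ⟨a, by omega⟩
    rw [e]
    refine (Finset.card_union_le _ _).trans ?_
    rw [altP] at h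
    split_ifs at h with h1 h2
    · have := ih _ _ h; omega
    · have := ih _ _ h; omega
    · exact absurd rfl h

lemma altP_erase_sum (L : ℕ → ℕ) (s : ℕ → Bool) (J : Finset ℕ)
    (hc : ∀ i ∈ J, ∀ j ∈ J, L i = L j → s i = s j) (t : ℕ) : ∀ (b : Bool),
    ∑ x ∈ J.filter (fun j => L j < t), altP L s t b (J.erase x) =
      altP L s t b J + altP L s t (!b) J := by
  induction t with
  | zero => intro b; simp [altP]; rfl
  | succ t ih =>
    intro b
    have e : J.filter (fun j => L j < t + 1) =
      J.filter (fun j => L j < t) ∪ J.filter (fun j => L j = t) := by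
      ext j; simp only [Finset.mem_filter, Finset.mem_union]
      constructor
      · rintro ⟨a, b⟩
        rcases Nat.lt_succ_iff_lt_or_eq.1 b with h | h
        · exact Or.inl ⟨a, h⟩
        · exact Or.inr ⟨a, h⟩
      · rintro (⟨a, b⟩ | ⟨a, b⟩)
        · exact ⟨a, by omega⟩
        · exact ⟨a, by omega⟩
    have hd : Disjoint (J.filter (fun j => L j < t)) (J.filter (fun j => L j = t)) := by
      rw [Finset.disjoint_left]; intro j h1 h2
      simp only [Finset.mem_filter] at h1 h2; omega
    rw [e, Finset.sum_union hd]
    have f1 : ∀ x ∈ J.filter (fun j => L j < t),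
        (J.erase x).filter (fun j => L j = t) = J.filter (fun j => L j = t) := by
      intro x hx
      ext j; simp only [Finset.mem_filter, Finset.mem_erase] at hx ⊢
      constructor
      · rintro ⟨⟨_, h⟩, h'⟩; exact ⟨h, h'⟩
      · rintro ⟨h, h'⟩; refine ⟨⟨?_, h⟩, h'⟩; rintro rfl; omega
    have f2 : ∀ x ∈ J.filter (fun j => L j < t), ∀ b,
        (∀ j ∈ J.erase x, L j = t → s j = b) ↔ (∀ j ∈ J, L j = t → s j = b) := by
      intro x hx b
      simp only [Finset.mem_filter] at hx
      constructor
      · intro h j hj hl; refine h j (Finset.mem_erase.2 ⟨?_, hj⟩) hl; rintro rfl; omega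
      · intro h j hj hl; exact h j (Finset.mem_of_mem_erase hj) hl
    have f3 : ∀ x ∈ J.filter (fun j => L j = t),
        (J.erase x).filter (fun j => L j = t) = (J.filter (fun j => L j = t)).erase x := by
      intro x hx
      rw [Finset.filter_erase]
    have S1 : ∑ x ∈ J.filter (fun j => L j < t), altP L s (t+1) b (J.erase x) =
        if (J.filter (fun j => L j = t)).card = 0 then (altP L s t b J + altP L s t (!b) J)
        else if (J.filter (fun j => L j = t)).card = 1 ∧ ∀ j ∈ J, L j = t → s j = b
        then (altP L s t b J + altP L s t (!b) J) else 0 := by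
      have : ∀ x ∈ J.filter (fun j => L j < t), altP L s (t+1) b (J.erase x) =
        if (J.filter (fun j => L j = t)).card = 0 then altP L s t b (J.erase x)
        else if (J.filter (fun j => L j = t)).card = 1 ∧ ∀ j ∈ J, L j = t → s j = b
        then altP L s t (!b) (J.erase x) else 0 := by
        intro x hx
        simp only [altP, f1 x hx, f2 x hx]
      rw [Finset.sum_congr rfl this]
      split_ifs
      · rw [ih]
      · rw [ih]; simp [add_comm]
      · simp
    rw [S1]
    by_cases h0 : (J.filter (fun j => L j = t)).card = 0
    · rw [Finset.card_eq_zero] at h0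
      simp [altP, h0]
    by_cases h1 : (J.filter (fun j => L j = t)).card = 1
    · obtain ⟨x, hx⟩ := Finset.card_eq_one.1 h1
      have hxm : x ∈ J.filter (fun j => L j = t) := by rw [hx]; simp
      have hxJ := (Finset.mem_filter.1 hxm).1
      have hxL := (Finset.mem_filter.1 hxm).2
      have hs : ∀ b, (∀ j ∈ J, L j = t → s j = b) ↔ s x = b := by
        intro b
        constructor
        · intro h; exact h x hxJ hxL
        · intro h j hj hl; rw [← h]; exact hc j hj x hxJ (hl.trans hxL.symm)
      have ex : altP L s (t+1) b (J.erase x) = altP L s t b J := by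
        rw [altP, f3 x hxm, hx]
        simp [altP_erase_of_ge L s t b J x hxL.ge]
      rw [hx, Finset.sum_singleton, ex]
      simp only [altP, hx, hs, Finset.card_singleton]
      have two' : ∀ a : ZMod 2, a + a = 0 := by decide
      have two : ∀ a c : ZMod 2, a + (a + c) = c := by decide
      cases b <;> cases s x <;> simp [add_comm, add_left_comm, two, two']
    · have z : ∀ b, altP L s (t+1) b J = 0 := by
        intro b; simp [altP, h0, h1]
      rw [z, z, if_neg h0, if_neg (fun h => h1 h.1)]
      by_cases h2 : (J.filter (fun j => L j = t)).card = 2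
      · obtain ⟨x, y, hxy, hx⟩ := Finset.card_eq_two.1 h2
        have hxm : x ∈ J.filter (fun j => L j = t) := by rw [hx]; simp
        have hym : y ∈ J.filter (fun j => L j = t) := by rw [hx]; simp
        have hxJ := (Finset.mem_filter.1 hxm).1
        have hxL := (Finset.mem_filter.1 hxm).2
        have hyJ := (Finset.mem_filter.1 hym).1
        have hyL := (Finset.mem_filter.1 hym).2
        have key : ∀ z w, z ∈ J → w ∈ J → z ≠ w → L z = t → L w = t →
            J.filter (fun j => L j = t) = {z, w} → 
            altP L s (t+1) b (J.erase z) = if s w = b then altP L s t (!b) J else 0 := by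
          intro z w hz hw hzw hzl hwl hx
          have hs : (∀ j ∈ J.erase z, L j = t → s j = b) ↔ s w = b := by
            constructor
            · intro h; exact h w (Finset.mem_erase.2 ⟨hzw.symm, hw⟩) hwl
            · intro h j hj hl; rw [← h]
              exact hc j (Finset.mem_of_mem_erase hj) w hw (hl.trans hwl.symm)
          simp only [altP, f3 z (Finset.mem_filter.2 ⟨hz, hzl⟩), hx, hs]
          rw [Finset.erase_insert (by simpa using hzw)]
          simp [altP_erase_of_ge L s t (!b) J z hzl.ge]
        rw [hx, Finset.sum_pair hxy, key x y hxJ hyJ hxy hxL hyL hx,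
          key y x hyJ hxJ hxy.symm hyL hxL (by rw [hx, Finset.pair_comm]),
          hc x hxJ y hyJ (hxL.trans hyL.symm)]
        have two : ∀ a : ZMod 2, a + a = 0 := by decide
        simp [two]
      · simp only [zero_add, add_zero]
        apply Finset.sum_eq_zero
        intro x hx
        have hcard := Finset.card_erase_of_mem hx
        rw [altP, f3 x hx, hcard, if_neg (by omega), if_neg (by rintro ⟨h, _⟩; omega)]

lemma altP_empty (L : ℕ → ℕ) (s : ℕ → Bool) (t : ℕ) : ∀ (b : Bool), altP L s t b ∅ = 1 := by
  induction t with
  | zero => intros; rfl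
  | succ t ih => intro b; simp [altP, ih]

/-- the `j`-th sign vector of the flag -/
noncomputable def flagX {n : ℕ} (ρ : Equiv.Perm (Fin n)) (ε : Fin n → Bool) (b : Bool) (j : ℕ) :
    Finset (Fin n) := Finset.univ.filter (fun a => (ρ a).val < j ∧ ε a = b)

lemma flagX_disj {n : ℕ} (ρ : Equiv.Perm (Fin n)) (ε : Fin n → Bool) (j : ℕ) :
    Disjoint (flagX ρ ε true j) (flagX ρ ε false j) := by
  rw [Finset.disjoint_left]; intro a h1 h2
  simp only [flagX, Finset.mem_filter] at h1 h2
  rw [h1.2.2] at h2; simp at h2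

lemma flagX_mono {n : ℕ} (ρ : Equiv.Perm (Fin n)) (ε : Fin n → Bool) (b : Bool) {i j : ℕ}
    (h : i ≤ j) : flagX ρ ε b i ⊆ flagX ρ ε b j := by
  intro a; simp only [flagX, Finset.mem_filter]
  rintro ⟨h0, h1, h2⟩; exact ⟨h0, by omega, h2⟩

lemma flagX_nonempty {n : ℕ} (ρ : Equiv.Perm (Fin n)) (ε : Fin n → Bool) {j : ℕ} (hn : 0 < n)
    (hj : 1 ≤ j) : (flagX ρ ε true j ∪ flagX ρ ε false j).Nonempty := by
  refine ⟨ρ.symm ⟨0, hn⟩, ?_⟩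
  simp only [flagX, Finset.mem_union, Finset.mem_filter, Finset.mem_univ, true_and,
    Equiv.apply_symm_apply]
  cases ε (ρ.symm ⟨0, hn⟩)
  · right; exact ⟨hj, rfl⟩
  · left; exact ⟨hj, rfl⟩

noncomputable def flagT {n : ℕ} (lam : Finset (Fin n) → Finset (Fin n) → ℕ × Bool) (t : ℕ)
    (ρ : Equiv.Perm (Fin n)) (ε : Fin n → Bool) (b : Bool) (J : Finset ℕ) : ZMod 2 :=
  altP (fun j => (lam (flagX ρ ε true j) (flagX ρ ε false j)).1)
    (fun j => (lam (flagX ρ ε true j) (flagX ρ ε false j)).2) t b J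

lemma flagT_congr {n : ℕ} (lam : Finset (Fin n) → Finset (Fin n) → ℕ × Bool) (t : ℕ)
    (ρ ρ' : Equiv.Perm (Fin n)) (ε ε' : Fin n → Bool) (b : Bool) (J : Finset ℕ)
    (h : ∀ j ∈ J, ∀ c, flagX ρ ε c j = flagX ρ' ε' c j) :
    flagT lam t ρ ε b J = flagT lam t ρ' ε' b J := by
  apply altP_congr
  · intro j hj; simp only [h j hj]
  · intro j hj; simp only [h j hj]

noncomputable def flagPi (n i : ℕ) : Finset (Equiv.Perm (Fin n)) :=
  Finset.univ.filter (fun ρ => ∀ a : Fin n, i ≤ a.val → ρ a = a)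

noncomputable def flagE (n i : ℕ) : Finset (Fin n → Bool) :=
  Finset.univ.filter (fun ε => ∀ a : Fin n, i ≤ a.val → ε a = true)

lemma flag_pos_lt {n i : ℕ} {ρ : Equiv.Perm (Fin n)} (h : ρ ∈ flagPi n i) (a : Fin n)
    (ha : (ρ a).val < i) : a.val < i := by
  by_contra hc
  have := (Finset.mem_filter.1 h).2 a (by omega)
  rw [this] at ha; omega

theorem tucker {n : ℕ} (hn : 0 < n) (lam : Finset (Fin n) → Finset (Fin n) → ℕ × Bool)
    (hr : ∀ A B, Disjoint A B → (A ∪ B).Nonempty → (lam A B).1 < n - 1)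
    (hanti1 : ∀ A B, Disjoint A B → (A ∪ B).Nonempty → (lam B A).1 = (lam A B).1)
    (hanti2 : ∀ A B, Disjoint A B → (A ∪ B).Nonempty → (lam B A).2 = !(lam A B).2) :
    ∃ A B A' B', A ⊆ A' ∧ B ⊆ B' ∧ Disjoint A' B' ∧ (A ∪ B).Nonempty ∧
      (lam A B).1 = (lam A' B').1 ∧ (lam A B).2 ≠ (lam A' B').2 := by
  by_contra hcon
  have hcompl : ∀ (ρ : Equiv.Perm (Fin n)) (ε : Fin n → Bool), ∀ i j, 1 ≤ i → i ≤ j →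
      (lam (flagX ρ ε true i) (flagX ρ ε false i)).1 = (lam (flagX ρ ε true j) (flagX ρ ε false j)).1 →
      (lam (flagX ρ ε true i) (flagX ρ ε false i)).2 =
        (lam (flagX ρ ε true j) (flagX ρ ε false j)).2 := by
    intro ρ ε i j hi hij h
    by_contra h2
    exact hcon ⟨_, _, _, _, flagX_mono ρ ε true hij, flagX_mono ρ ε false hij, flagX_disj _ _ _,
      flagX_nonempty _ _ hn hi, h, h2⟩
  have hsum : ∀ (ρ : Equiv.Perm (Fin n)) (ε : Fin n → Bool) (i : ℕ),
      ∑ r ∈ Finset.Icc 1 i, flagT lam (n-1) ρ ε true ((Finset.Icc 1 i).erase r) =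
      flagT lam (n-1) ρ ε true (Finset.Icc 1 i) + flagT lam (n-1) ρ ε false (Finset.Icc 1 i) := by
    intro ρ ε i
    have := altP_erase_sum (fun j => (lam (flagX ρ ε true j) (flagX ρ ε false j)).1)
      (fun j => (lam (flagX ρ ε true j) (flagX ρ ε false j)).2) (Finset.Icc 1 i) (by
        intro x hx y hy hxy
        rw [Finset.mem_Icc] at hx hy
        rcases le_total x y with h | h
        · exact hcompl ρ ε x y hx.1 h hxy
        · exact (hcompl ρ ε y x hy.1 h hxy.symm).symm) (n-1) true
    rw [Finset.filter_true_of_mem] at this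
    · exact this
    · intro x hx
      rw [Finset.mem_Icc] at hx
      exact hr _ _ (flagX_disj _ _ _) (flagX_nonempty _ _ hn hx.1)
  have two : ∀ a : ZMod 2, a + a = 0 := by decide
  have main : ∀ i, 1 ≤ i → i ≤ n →
      ∑ ρ ∈ flagPi n i, ∑ ε ∈ flagE n (i-1), (flagT lam (n-1) ρ ε true (Finset.Icc 1 i) +
        flagT lam (n-1) ρ ε false (Finset.Icc 1 i)) = 1 := by
    intro i hi
    induction i, hi using Nat.le_induction with
    | base =>
      intro _
      have e1 : flagPi n 1 = {1} := by
        ext ρ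
        simp only [flagPi, Finset.mem_filter, Finset.mem_univ, true_and, Finset.mem_singleton]
        constructor
        · intro h
          have h' : ∀ a : Fin n, a ≠ ⟨0, hn⟩ → ρ a = a := by
            intro a ha; apply h
            by_contra h0; apply ha; ext; simp; omega
          ext a
          by_cases ha : a = ⟨0, hn⟩
          · by_contra hne
            have hne' : ρ a ≠ a := fun h => hne (by rw [h]; rfl)
            have := h' (ρ a) (by rw [ha] at hne' ⊢; exact hne')
            exact hne' (ρ.injective this)
          · rw [h' a ha]; rfl
        · rintro rfl; simp
      have e2 : flagE n (1-1) = {fun _ => true} := by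
        ext ε
        simp only [flagE, Finset.mem_filter, Finset.mem_univ, true_and, Finset.mem_singleton]
        constructor
        · intro h; funext a; exact h a (by simp)
        · rintro rfl; simp
      rw [e1, e2, Finset.sum_singleton, Finset.sum_singleton, ← hsum]
      simp [flagT, altP_empty]
    | succ i hi ih =>
      intro hin
      rw [← ih (by omega)]
      simp_rw [← hsum _ _ (i+1)]
      have c1 : ∀ ρ ∈ flagPi n (i+1), ∑ ε ∈ flagE n (i+1-1), ∑ r ∈ Finset.Icc 1 (i+1),
          flagT lam (n-1) ρ ε true ((Finset.Icc 1 (i+1)).erase r) =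
          ∑ r ∈ Finset.Icc 1 (i+1), ∑ ε ∈ flagE n i, 
          flagT lam (n-1) ρ ε true ((Finset.Icc 1 (i+1)).erase r) := by
        intro ρ _
        exact Finset.sum_comm
      rw [Finset.sum_congr rfl c1, Finset.sum_comm]
      have c2 : ∀ r ∈ Finset.Icc 1 (i+1), r ≠ i+1 → ∑ ρ ∈ flagPi n (i+1), ∑ ε ∈ flagE n i,
          flagT lam (n-1) ρ ε true ((Finset.Icc 1 (i+1)).erase r) = 0 := by
        intro r hr hri
        rw [Finset.mem_Icc] at hr
        let τ : Equiv.Perm (Fin n) := Equiv.swap ⟨r-1, by omega⟩ ⟨r, by omega⟩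
        refine Finset.sum_involution (fun ρ _ => τ * ρ) ?_ ?_ ?_ ?_
        · intro ρ hρ
          rw [← Finset.sum_add_distrib]
          apply Finset.sum_eq_zero
          intro ε _
          rw [flagT_congr lam (n-1) (τ * ρ) ρ ε ε, two]
          intro j hj c
          rw [Finset.mem_erase] at hj
          ext a
          simp only [flagX, Finset.mem_filter, Finset.mem_univ, true_and]
          rw [Equiv.Perm.mul_apply, Equiv.swap_apply_def]
          split_ifs with h1 h2
          · rw [h1]; simp; omega
          · rw [h2]; simp; omega
          · rfl
        · intro ρ hρ _ h
          have : τ = 1 := by simpa using h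
          have h2 := congrArg (fun p : Equiv.Perm (Fin n) => (p ⟨r, by omega⟩).val) this
          simp [τ] at h2
          omega
        · intro ρ hρ
          simp only [flagPi, Finset.mem_filter, Finset.mem_univ, true_and, Equiv.Perm.mul_apply, τ]
            at hρ ⊢
          intro a ha
          rw [hρ a ha]
          apply Equiv.swap_apply_of_ne_of_ne
          · intro h; rw [h] at ha; simp at ha; omega
          · intro h; rw [h] at ha; simp at ha; omega
        · intro ρ hρ
          simp [τ, ← mul_assoc]
      rw [Finset.sum_eq_single_of_mem (i+1) (Finset.mem_Icc.2 ⟨by omega, le_refl _⟩) c2]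
      have e3 : (Finset.Icc 1 (i+1)).erase (i+1) = Finset.Icc 1 i := by
        ext j; simp only [Finset.mem_erase, Finset.mem_Icc]; omega
      rw [e3]
      have hsub : flagPi n i ⊆ flagPi n (i+1) := by
        intro ρ; simp only [flagPi, Finset.mem_filter, Finset.mem_univ, true_and]
        intro h a ha; exact h a (by omega)
      rw [← Finset.sum_subset hsub]
      · apply Finset.sum_congr rfl
        intro ρ hρ
        rw [Finset.sum_add_distrib]
        rw [← Finset.sum_filter_add_sum_filter_not (flagE n i) (fun ε => ε ⟨i-1, by omega⟩ = true)]
        congr 1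
        · apply Finset.sum_congr
          · ext ε
            simp only [flagE, Finset.mem_filter, Finset.mem_univ, true_and]
            constructor
            · rintro ⟨h1, h2⟩ a ha
              by_cases h : a.val = i - 1
              · rw [← h2]; congr 1; ext; exact h
              · exact h1 a (by omega)
            · intro h; exact ⟨fun a ha => h a (by omega), h _ (le_refl _)⟩
          · intros; rfl
        · refine Finset.sum_bij' (fun ε _ => fun a => if a.val < i then !(ε a) else ε a)
            (fun ε _ => fun a => if a.val < i then !(ε a) else ε a) ?_ ?_ ?_ ?_ ?_
          · intro ε hε
            simp only [flagE, Finset.mem_filter, Finset.mem_univ, true_and] at hε ⊢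
            intro a ha
            split_ifs with h
            · have : a = ⟨i-1, by omega⟩ := by ext; simp; omega
              rw [this]; simpa using hε.2
            · exact hε.1 a (by omega)
          · intro ε hε
            simp only [flagE, Finset.mem_filter, Finset.mem_univ, true_and] at hε ⊢
            refine ⟨?_, ?_⟩
            · intro a ha
              rw [if_neg (by omega)]; exact hε a (by omega)
            · rw [if_pos (by omega), hε _ (le_refl _)]; simp
          · intro ε _; funext a; dsimp only; split_ifs <;> simp
          · intro ε _; funext a; dsimp only; split_ifs <;> simp
          · intro ε hε
            have hx : ∀ j ∈ Finset.Icc 1 i, ∀ c, 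
                flagX ρ (fun a => if a.val < i then !(ε a) else ε a) c j = flagX ρ ε (!c) j := by
              intro j hj c
              rw [Finset.mem_Icc] at hj
              ext a
              simp only [flagX, Finset.mem_filter, Finset.mem_univ, true_and]
              apply and_congr_right
              intro ha
              rw [if_pos (flag_pos_lt hρ a (by omega))]
              cases ε a <;> cases c <;> simp
            have : flagT lam (n-1) ρ (fun a => if a.val < i then !(ε a) else ε a) false
                (Finset.Icc 1 i) = altP (fun j => (lam (flagX ρ ε true j) (flagX ρ ε false j)).1)
                (fun j => ! (lam (flagX ρ ε true j) (flagX ρ ε false j)).2) (n-1) false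
                (Finset.Icc 1 i) := by
              apply altP_congr
              · intro j hj
                simp only [hx j hj]
                rw [Finset.mem_Icc] at hj
                exact hanti1 _ _ (flagX_disj _ _ _) (flagX_nonempty _ _ hn hj.1)
              · intro j hj
                simp only [hx j hj]
                rw [Finset.mem_Icc] at hj
                exact hanti2 _ _ (flagX_disj _ _ _) (flagX_nonempty _ _ hn hj.1)
            rw [this, altP_not]; rfl
      · intro ρ hρ hρ'
        have hfix : ρ ⟨i, by omega⟩ ≠ ⟨i, by omega⟩ := by
          intro h
          apply hρ'
          simp only [flagPi, Finset.mem_filter, Finset.mem_univ, true_and] at hρ ⊢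
          intro a ha
          by_cases h' : a.val = i
          · have : a = ⟨i, by omega⟩ := by ext; exact h'
            rw [this, h]
          · exact hρ a (by omega)
        let a0 := ρ.symm ⟨i, by omega⟩
        have ha0 : ρ a0 = ⟨i, by omega⟩ := by simp [a0]
        have ha0i : a0.val < i := by
          have h1 := flag_pos_lt hρ a0 (by rw [ha0]; simp)
          have h2 : a0.val ≠ i := by
            intro h
            have : a0 = ⟨i, by omega⟩ := by ext; exact h
            rw [this] at ha0; exact hfix ha0
          omega
        refine Finset.sum_involution (fun ε _ => Function.update ε a0 (!(ε a0))) ?_ ?_ ?_ ?_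
        · intro ε hε
          rw [flagT_congr lam (n-1) ρ ρ (Function.update ε a0 (!(ε a0))) ε, two]
          intro j hj c
          rw [Finset.mem_Icc] at hj
          ext a
          simp only [flagX, Finset.mem_filter, Finset.mem_univ, true_and]
          apply and_congr_right
          intro ha
          rw [Function.update_of_ne]
          rintro rfl
          rw [ha0] at ha; simp at ha; omega
        · intro ε hε _ h
          have := congrFun h a0
          simp at this
        · intro ε hε
          simp only [flagE, Finset.mem_filter, Finset.mem_univ, true_and] at hε ⊢
          intro a ha
          rw [Function.update_of_ne]
          · exact hε a ha
          · rintro rfl; omega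
        · intro ε hε
          simp
  have h1 := main n hn (le_refl _)
  rw [Finset.sum_eq_zero] at h1
  · exact absurd h1 (by decide)
  · intro ρ _
    apply Finset.sum_eq_zero
    intro ε _
    have z : ∀ b, flagT lam (n-1) ρ ε b (Finset.Icc 1 n) = 0 := by
      intro b
      by_contra h
      have := altP_card _ _ _ _ _ h
      rw [Finset.filter_true_of_mem] at this
      · simp at this; omega
      · intro x hx
        rw [Finset.mem_Icc] at hx
        exact hr _ _ (flagX_disj _ _ _) (flagX_nonempty _ _ hn hx.1)
    rw [z, z, add_zero]

noncomputable def altE (S : Bool → ℕ → Prop) : Bool → ℕ → ℕ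
  | _, 0 => 0
  | b, i+1 => if S b i then altE S (!b) i + 1 else altE S b i

lemma altE_le (S : Bool → ℕ → Prop) (hS : ∀ b i, S b i → ¬ S (!b) i) (i : ℕ) :
    ∀ b, altE S b i ≤ altE S (!b) i + 1 := by
  induction i with
  | zero => intro b; simp [altE]
  | succ i ih =>
    intro b
    have h1 := ih b
    have h2 := ih (!b)
    have h3 := hS b i
    simp only [altE, Bool.not_not] at h2 ⊢
    split_ifs with ha hb hb
    · exact absurd hb (h3 ha)
    · omega
    · omega
    · omega

lemma altE_mono (S S' : Bool → ℕ → Prop) (hS : ∀ b i, S' b i → ¬ S' (!b) i)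
    (h : ∀ b i, S b i → S' b i) (i : ℕ) : ∀ b, altE S b i ≤ altE S' b i := by
  induction i with
  | zero => intro b; simp [altE]
  | succ i ih =>
    intro b
    have h1 := ih b
    have h2 := ih (!b)
    have h3 := altE_le S' hS i b
    have h4 := h b i
    simp only [altE]
    split_ifs with ha hb hb
    · omega
    · exact absurd (h4 ha) hb
    · omega
    · omega

lemma altE_swap (S : Bool → ℕ → Prop) (i : ℕ) :
    ∀ b, altE (fun b => S (!b)) b i = altE S (!b) i := by
  induction i with
  | zero => intro b; simp [altE]
  | succ i ih =>
    intro b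
    simp only [altE, ih]

lemma altE_ne (S : Bool → ℕ → Prop) (hS : ∀ b i, S b i → ¬ S (!b) i) (i : ℕ) :
    (∃ j c, j < i ∧ S c j) → altE S true i ≠ altE S false i := by
  induction i with
  | zero => rintro ⟨j, c, h, _⟩; omega
  | succ i ih =>
    rintro ⟨j, c, hj, hc⟩
    have h1 := hS true i
    simp only [altE]
    split_ifs with ha hb hb
    · exact absurd hb (h1 ha)
    · simp
    · simp
    · apply ih
      refine ⟨j, c, ?_, hc⟩
      rcases Nat.lt_succ_iff_lt_or_eq.1 hj with h | h
      · exact h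
      · subst h; cases c
        · exact absurd hc hb
        · exact absurd hc ha

lemma altE_pos (S : Bool → ℕ → Prop) (hS : ∀ b i, S b i → ¬ S (!b) i) (i : ℕ)
    (h : ∃ j c, j < i ∧ S c j) : 0 < max (altE S true i) (altE S false i) := by
  have := altE_ne S hS i h
  rcases Nat.eq_zero_or_pos (max (altE S true i) (altE S false i)) with h | h
  · omega
  · exact h

lemma altE_extract (S : Bool → ℕ → Prop) (i : ℕ) : ∀ b, ∃ X Y : Finset ℕ,
    (∀ x ∈ X, S b x ∧ x < i) ∧ (∀ x ∈ Y, S (!b) x ∧ x + 1 < i) ∧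
    (∀ x ∈ X, x + 1 ∉ X) ∧ (∀ x ∈ Y, x + 1 ∉ Y) ∧
    X.card = (altE S b i + 1) / 2 ∧ Y.card = altE S b i / 2 := by
  induction i with
  | zero => intro b; exact ⟨∅, ∅, by simp [altE]⟩
  | succ i ih =>
    intro b
    by_cases h : S b i
    · obtain ⟨X, Y, h1, h2, h3, h4, h5, h6⟩ := ih (!b)
      rw [Bool.not_not] at h2
      have hiY : i ∉ Y := fun hi => by have := (h2 i hi).2; omega
      refine ⟨insert i Y, X, ?_, ?_, ?_, h3, ?_, ?_⟩
      · intro x hx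
        rcases Finset.mem_insert.1 hx with rfl | hx
        · exact ⟨h, by omega⟩
        · exact ⟨(h2 x hx).1, by have := (h2 x hx).2; omega⟩
      · intro x hx
        exact ⟨(h1 x hx).1, by have := (h1 x hx).2; omega⟩
      · intro x hx hx'
        rw [Finset.mem_insert] at hx hx'
        rcases hx with rfl | hx
        · rcases hx' with hx' | hx'
          · omega
          · have := (h2 _ hx').2; omega
        · rcases hx' with hx' | hx'
          · have := (h2 _ hx).2; omega
          · exact h4 x hx hx'
      · rw [Finset.card_insert_of_notMem hiY, h6]; simp only [altE, if_pos h]; omega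
      · rw [h5]; simp only [altE, if_pos h]
    · obtain ⟨X, Y, h1, h2, h3, h4, h5, h6⟩ := ih b
      refine ⟨X, Y, ?_, ?_, h3, h4, ?_, ?_⟩
      · intro x hx; exact ⟨(h1 x hx).1, by have := (h1 x hx).2; omega⟩
      · intro x hx; exact ⟨(h2 x hx).1, by have := (h2 x hx).2; omega⟩
      · rw [h5]; simp only [altE, if_neg h]
      · rw [h6]; simp only [altE, if_neg h]

/-- stable `m`-sets -/
def stab {N : ℕ} (m : ℕ) (T : Finset (Fin N)) : Prop :=
  T.card = m ∧ ∀ x ∈ T, ∀ y ∈ T, x.val + 1 ≠ y.val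

def sgn {N : ℕ} (A B : Finset (Fin N)) (b : Bool) (i : ℕ) : Prop :=
  ∃ h : i < N, (⟨i, h⟩ : Fin N) ∈ (cond b A B)

lemma sgn_excl {N : ℕ} (A B : Finset (Fin N)) (hd : Disjoint A B) (b : Bool) (i : ℕ) :
    sgn A B b i → ¬ sgn A B (!b) i := by
  rintro ⟨h, h1⟩ ⟨_, h2⟩
  cases b
  · exact Finset.disjoint_left.1 hd h2 h1
  · exact Finset.disjoint_left.1 hd h1 h2

lemma sgn_swap {N : ℕ} (A B : Finset (Fin N)) : sgn B A = fun b => sgn A B (!b) := by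
  funext b i; cases b <;> rfl

lemma stab_of {N m : ℕ} (C : Finset (Fin N)) (X : Finset ℕ)
    (hX : ∀ x ∈ X, ∃ h : x < N, (⟨x, h⟩ : Fin N) ∈ C) (hs : ∀ x ∈ X, x + 1 ∉ X)
    (hm : m ≤ X.card) : ∃ T, stab m T ∧ T ⊆ C := by
  obtain ⟨Y, hY, hYm⟩ := Finset.exists_subset_card_eq hm
  have hlt : ∀ y ∈ Y, y < N := fun y hy => (hX y (hY hy)).1
  refine ⟨Finset.univ.filter (fun a : Fin N => a.val ∈ Y), ⟨?_, ?_⟩, ?_⟩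
  · rw [← hYm]
    refine Finset.card_bij (fun a _ => a.val) ?_ ?_ ?_
    · intro a ha; exact (Finset.mem_filter.1 ha).2
    · intro a _ b _ h; exact Fin.ext h
    · intro y hy; exact ⟨⟨y, hlt y hy⟩, by simpa using hy, rfl⟩
  · intro x hx y hy h
    rw [Finset.mem_filter] at hx hy
    apply hs _ (hY hx.2)
    rw [h]; exact hY hy.2
  · intro x hx
    exact (hX _ (hY (Finset.mem_filter.1 hx).2)).2

lemma exists_stab {N m : ℕ} (A B : Finset (Fin N))
    (h : ¬ max (altE (sgn A B) true N) (altE (sgn A B) false N) < 2 * m) :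
    (∃ T, stab m T ∧ T ⊆ A) ∧ (∃ T, stab m T ∧ T ⊆ B) := by
  have : ∃ b, 2 * m ≤ altE (sgn A B) b N := by
    rcases le_total (altE (sgn A B) true N) (altE (sgn A B) false N) with h' | h'
    · exact ⟨false, by omega⟩
    · exact ⟨true, by omega⟩
  obtain ⟨b, hb⟩ := this
  obtain ⟨X, Y, h1, h2, h3, h4, h5, h6⟩ := altE_extract (sgn A B) N b
  have hX := stab_of (m := m) (cond b A B) X (fun x hx => (h1 x hx).1) h3 (by omega)
  have hY := stab_of (m := m) (cond (!b) A B) Y (fun x hx => (h2 x hx).1) h4 (by omega)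
  cases b
  · exact ⟨hY, hX⟩
  · exact ⟨hX, hY⟩

theorem schrijver (m k : ℕ) (hm : 0 < m) (f : Finset (Fin (2*m+k)) → ℕ) (hf : ∀ S, f S < k) :
    ∃ A B, stab m A ∧ stab m B ∧ Disjoint A B ∧ f A = f B := by
  by_contra hcon
  have hcon' : ∀ A B, stab m A → stab m B → Disjoint A B → f A ≠ f B := by
    intro A B h1 h2 h3 h4; exact hcon ⟨A, B, h1, h2, h3, h4⟩
  let mx : Finset (Fin (2*m+k)) → Finset (Fin (2*m+k)) → ℕ := fun A B =>
    max (altE (sgn A B) true (2*m+k)) (altE (sgn A B) false (2*m+k))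
  let cs : Finset (Fin (2*m+k)) → Finset (Fin (2*m+k)) → Set ℕ := fun A B =>
    {c | ∃ T, stab m T ∧ (T ⊆ A ∨ T ⊆ B) ∧ f T = c}
  let lam : Finset (Fin (2*m+k)) → Finset (Fin (2*m+k)) → ℕ × Bool := fun A B =>
    if mx A B < 2 * m then
      (mx A B - 1, decide (altE (sgn A B) false (2*m+k) < altE (sgn A B) true (2*m+k)))
    else (2 * m - 1 + sInf (cs A B), decide (∃ T, stab m T ∧ T ⊆ A ∧ f T = sInf (cs A B)))
  have hmem : ∀ A B, ¬ mx A B < 2 * m → sInf (cs A B) ∈ cs A B := by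
    intro A B h
    apply Nat.sInf_mem
    obtain ⟨⟨T, hT, hTA⟩, _⟩ := exists_stab A B h
    exact ⟨f T, T, hT, Or.inl hTA, rfl⟩
  have hne : ∀ A B : Finset (Fin (2*m+k)), (A ∪ B).Nonempty →
      ∃ j c, j < 2*m+k ∧ sgn A B c j := by
    rintro A B ⟨x, hx⟩
    rcases Finset.mem_union.1 hx with h | h
    · exact ⟨x.val, true, x.2, x.2, h⟩
    · exact ⟨x.val, false, x.2, x.2, h⟩
  have hmxs : ∀ A B, mx B A = mx A B := by
    intro A B
    simp only [mx]
    rw [sgn_swap A B, altE_swap, altE_swap, max_comm]; rfl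
  have hcss : ∀ A B, cs B A = cs A B := by
    intro A B
    simp only [cs]
    ext c
    simp only [Set.mem_ofPred_eq]
    constructor
    · rintro ⟨T, h1, h2, h3⟩; exact ⟨T, h1, h2.symm, h3⟩
    · rintro ⟨T, h1, h2, h3⟩; exact ⟨T, h1, h2.symm, h3⟩
  have key := tucker (n := 2*m+k) (by omega) lam ?_ ?_ ?_
  · obtain ⟨A, B, A', B', hA, hB, hd, hn, h1, h2⟩ := key
    have hd0 : Disjoint A B := Finset.disjoint_of_subset_left hA (Finset.disjoint_of_subset_right hB hd)
    have hn' : (A' ∪ B').Nonempty := hn.mono (Finset.union_subset_union hA hB)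
    have p1 := altE_pos _ (sgn_excl A B hd0) _ (hne A B hn)
    have p2 := altE_pos _ (sgn_excl A' B' hd) _ (hne A' B' hn')
    have hsub : ∀ b i, sgn A B b i → sgn A' B' b i := by
      rintro b i ⟨h, h'⟩
      refine ⟨h, ?_⟩
      cases b
      · exact hB h'
      · exact hA h'
    have m1 := altE_mono _ _ (sgn_excl A' B' hd) hsub (2*m+k) true
    have m2 := altE_mono _ _ (sgn_excl A' B' hd) hsub (2*m+k) false
    have n1 := altE_ne _ (sgn_excl A B hd0) _ (hne A B hn)
    have n2 := altE_ne _ (sgn_excl A' B' hd) _ (hne A' B' hn')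
    by_cases c1 : mx A B < 2 * m <;> by_cases c2 : mx A' B' < 2 * m
    · simp only [lam, if_pos c1, if_pos c2] at h1 h2
      simp only [mx] at h1
      apply h2
      rw [decide_eq_decide]
      omega
    · simp only [lam, if_pos c1, if_neg c2] at h1
      simp only [mx] at h1 c1
      omega
    · simp only [lam, if_neg c1, if_pos c2] at h1
      simp only [mx] at h1 c2
      omega
    · simp only [lam, if_neg c1, if_neg c2] at h1 h2
      have e : sInf (cs A B) = sInf (cs A' B') := by omega
      rw [e] at h2
      apply h2
      rw [decide_eq_decide]
      have hm1 := hmem A B c1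
      rw [e] at hm1
      obtain ⟨T, t1, t2, t3⟩ := hm1
      constructor
      · rintro ⟨T, a, b, c⟩; exact ⟨T, a, b.trans hA, c⟩
      · rintro ⟨T', a, b, c⟩
        rcases t2 with t2 | t2
        · exact ⟨T, t1, t2, t3⟩
        · exfalso
          exact hcon' T' T a t1 (Finset.disjoint_of_subset_left b
            (Finset.disjoint_of_subset_right (t2.trans hB) hd)) (c.trans t3.symm)
  · intro A B hd hn
    have p1 := altE_pos _ (sgn_excl A B hd) _ (hne A B hn)
    by_cases c1 : mx A B < 2 * m
    · simp only [lam, if_pos c1]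
      simp only [mx] at c1 ⊢
      omega
    · simp only [lam, if_neg c1]
      obtain ⟨T, _, _, h⟩ := hmem A B c1
      have := hf T
      omega
  · intro A B hd hn
    simp only [lam, hmxs A B, hcss A B]
    split_ifs <;> rfl
  · intro A B hd hn
    have n1 := altE_ne _ (sgn_excl A B hd) _ (hne A B hn)
    simp only [lam, hmxs A B, hcss A B]
    by_cases c1 : mx A B < 2 * m
    · simp only [if_pos c1]
      rw [sgn_swap A B, altE_swap, altE_swap, ← decide_not, decide_eq_decide]
      simp only [Bool.not_true, Bool.not_false]
      omega
    · simp only [if_neg c1]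
      rw [← decide_not, decide_eq_decide]
      obtain ⟨T, t1, t2, t3⟩ := hmem A B c1
      constructor
      · rintro ⟨T', a, b, c⟩ ⟨T'', a', b', c'⟩
        exact hcon' T'' T' a' a (Finset.disjoint_of_subset_left b'
            (Finset.disjoint_of_subset_right b hd)) (c'.trans c.symm)
      · intro h
        rcases t2 with t2 | t2
        · exact absurd ⟨T, t1, t2, t3⟩ h
        · exact ⟨T, t1, t2, t3⟩

lemma card_small_sets (N r : ℕ) :
    ((Finset.univ : Finset (Finset (Fin N))).filter (fun G => G.card ≤ r)).card ≤ (N+1)^r := by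
  have h1 : (Finset.univ : Finset (Finset (Fin N))).filter (fun G => G.card ≤ r) ⊆
      (Finset.range (r+1)).biUnion (fun i => Finset.powersetCard i Finset.univ) := by
    intro G hG
    rw [Finset.mem_filter] at hG
    rw [Finset.mem_biUnion]
    exact ⟨G.card, Finset.mem_range.2 (by omega), by simp [Finset.mem_powersetCard]⟩
  refine (Finset.card_le_card h1).trans (Finset.card_biUnion_le.trans ?_)
  rw [add_pow]
  apply Finset.sum_le_sum
  intro i hi
  rw [Finset.mem_range] at hi
  rw [Finset.card_powersetCard, Finset.card_univ, Fintype.card_fin, one_pow, mul_one]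
  calc N.choose i ≤ N ^ i := Nat.choose_le_pow _ _
    _ ≤ N ^ i * r.choose i := Nat.le_mul_of_pos_right _ (Nat.choose_pos (by omega))

lemma card_stab (m k : ℕ) :
    ((Finset.univ : Finset (Finset (Fin (2*m+k)))).filter (fun T => stab m T)).card
      ≤ (2*m+k+1)^(k+1) := by
  refine le_trans ?_ (card_small_sets (2*m+k) (k+1))
  let G : Finset (Fin (2*m+k)) → Finset (Fin (2*m+k)) := fun T =>
    Finset.univ.filter (fun a => a ∉ T ∧ ∀ y ∈ T, y.val + 1 ≠ a.val)
  refine Finset.card_le_card_of_injOn G ?_ ?_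
  · intro T hT
    rw [Finset.mem_coe, Finset.mem_filter] at hT ⊢
    refine ⟨Finset.mem_univ _, ?_⟩
    obtain ⟨_, hc, hs⟩ := hT
    have d1 : Disjoint (T.image Fin.val) (T.image (fun x => x.val + 1)) := by
      rw [Finset.disjoint_left]
      intro a h1 h2
      simp only [Finset.mem_image] at h1 h2
      obtain ⟨x, hx, rfl⟩ := h1
      obtain ⟨y, hy, h⟩ := h2
      exact hs y hy x hx h
    have d2 : Disjoint ((G T).image Fin.val)
        (T.image Fin.val ∪ T.image (fun x => x.val + 1)) := by
      rw [Finset.disjoint_left]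
      intro a h1 h2
      simp only [G, Finset.mem_image, Finset.mem_union, Finset.mem_filter] at h1 h2
      obtain ⟨x, ⟨_, hx1, hx2⟩, rfl⟩ := h1
      rcases h2 with ⟨y, hy, h⟩ | ⟨y, hy, h⟩
      · rw [Fin.ext h] at hy; exact hx1 hy
      · exact hx2 y hy h
    have hsub : (G T).image Fin.val ∪ (T.image Fin.val ∪ T.image (fun x => x.val + 1)) ⊆
        Finset.range (2*m+k+1) := by
      intro a ha
      simp only [Finset.mem_union, Finset.mem_image] at ha
      rw [Finset.mem_range]
      rcases ha with ⟨x, _, rfl⟩ | ⟨x, _, rfl⟩ | ⟨x, _, rfl⟩ <;> omega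
    have := Finset.card_le_card hsub
    rw [Finset.card_union_of_disjoint d2, Finset.card_union_of_disjoint d1,
      Finset.card_image_of_injective _ Fin.val_injective,
      Finset.card_image_of_injective _ Fin.val_injective,
      Finset.card_image_of_injective _ (fun a b h => Fin.ext (by simpa using h)),
      Finset.card_range, hc] at this
    omega
  · intro T hT T' hT' h
    rw [Finset.mem_coe, Finset.mem_filter] at hT hT'
    obtain ⟨_, hc, hs⟩ := hT
    obtain ⟨_, hc', hs'⟩ := hT'
    have hG : ∀ a, (a ∉ T ∧ ∀ y ∈ T, y.val + 1 ≠ a.val) ↔ (a ∉ T' ∧ ∀ y ∈ T', y.val + 1 ≠ a.val) := by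
      intro a
      have := Finset.ext_iff.1 h a
      simpa [G] using this
    have main : ∀ i : ℕ, ∀ a : Fin (2*m+k), a.val = i → (a ∈ T ↔ a ∈ T') := by
      intro i
      induction i with
      | zero =>
        intro a ha
        have := hG a
        have z : ∀ y : Fin (2*m+k), y.val + 1 ≠ a.val := by intro y; omega
        simp only [z, implies_true, and_true, ne_eq, not_false_eq_true] at this
        tauto
      | succ i ih =>
        intro a ha
        have hlt : i < 2*m+k := by omega
        have hi := ih ⟨i, hlt⟩ rfl
        have e : ∀ U : Finset (Fin (2*m+k)), (∀ y ∈ U, y.val + 1 ≠ a.val) ↔ (⟨i, hlt⟩ : Fin (2*m+k)) ∉ U := by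
          intro U
          constructor
          · intro h hm; exact h _ hm (by simp [ha])
          · intro h y hy hya
            apply h
            have : y = ⟨i, hlt⟩ := by ext; simp; omega
            rwa [← this]
        have h0 := hG a
        rw [e, e] at h0
        have s1 : a ∈ T → (⟨i, hlt⟩ : Fin (2*m+k)) ∉ T := by
          intro h1 h2; exact hs _ h2 _ h1 (by simp [ha])
        have s2 : a ∈ T' → (⟨i, hlt⟩ : Fin (2*m+k)) ∉ T' := by
          intro h1 h2; exact hs' _ h2 _ h1 (by simp [ha])
        tauto
    ext a
    exact main a.val a rfl

abbrev KV (n m : ℕ) := {s : Finset (Fin n) // s.card = m}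

def actV {n m : ℕ} (σ : Equiv.Perm (Fin n)) (v : KV n m) : KV n m :=
  ⟨v.1.map σ.toEmbedding, by rw [Finset.card_map]; exact v.2⟩

def actP {n m : ℕ} (σ : Equiv.Perm (Fin n)) (p : KV n m × KV n m) : KV n m × KV n m :=
  (actV σ p.1, actV σ p.2)

lemma actP_mul {n m : ℕ} (σ τ : Equiv.Perm (Fin n)) (p : KV n m × KV n m) :
    actP (σ * τ) p = actP σ (actP τ p) := by
  have : ∀ v : KV n m, actV (σ * τ) v = actV σ (actV τ v) := by
    intro v
    apply Subtype.ext
    simp only [actV, Finset.map_map]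
    rfl
  simp only [actP, this]

lemma actP_one {n m : ℕ} (p : KV n m × KV n m) : actP 1 p = p := by
  have : ∀ v : KV n m, actV 1 v = v := by
    intro v
    apply Subtype.ext
    ext a
    simp only [actV, Finset.mem_map_equiv]
    rfl
  simp only [actP, this]

noncomputable def kdarts (n m : ℕ) : Finset (KV n m × KV n m) :=
  Finset.univ.filter (fun p => Disjoint p.1.1 p.2.1)

lemma actP_trans {n m : ℕ} (p q : KV n m × KV n m) (hp : p ∈ kdarts n m) (hq : q ∈ kdarts n m) :
    ∃ σ : Equiv.Perm (Fin n), actP σ p = q := by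
  let c : KV n m × KV n m → Fin n → ℕ := fun p a =>
    if a ∈ p.1.1 then 1 else if a ∈ p.2.1 then 2 else 0
  have c1 : ∀ p a, c p a = 1 ↔ a ∈ p.1.1 := by
    intro p a; simp only [c]; split_ifs <;> simp_all
  have c2 : ∀ p ∈ kdarts n m, ∀ a, c p a = 2 ↔ a ∈ p.2.1 := by
    intro p hp a; simp only [c]; 
    have : a ∈ p.1.1 → a ∉ p.2.1 := fun h => Finset.disjoint_left.1 (Finset.mem_filter.1 hp).2 h
    split_ifs with h1 h2
    · simp [this h1]
    · simp [h2]
    · simp [h2]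
  have c3 : ∀ p a, c p a = 0 ↔ a ∉ p.1.1 ∪ p.2.1 := by
    intro p a; simp only [c]; split_ifs <;> simp_all
  have c4 : ∀ p a, c p a ≤ 2 := by
    intro p a; simp only [c]; split_ifs <;> simp
  have hcard : ∀ x, Fintype.card {a // c p a = x} = Fintype.card {a // c q a = x} := by
    have hx : ∀ r ∈ kdarts n m, ∀ x, Fintype.card {a // c r a = x} =
      if x = 1 then m else if x = 2 then m else if x = 0 then n - 2 * m else 0 := by
      intro r hr x
      rw [Fintype.card_subtype]
      split_ifs with h1 h2 h3
      · subst h1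
        rw [← r.1.2]; congr 1; ext a; simp [c1]
      · subst h2
        rw [← r.2.2]; congr 1; ext a; simp [c2 r hr]
      · subst h3
        have : Finset.univ.filter (fun a => c r a = 0) = (r.1.1 ∪ r.2.1)ᶜ := by
          ext a; rw [Finset.mem_filter, c3, Finset.mem_compl]; simp
        rw [this, Finset.card_compl, Finset.card_union_of_disjoint (Finset.mem_filter.1 hr).2,
          r.1.2, r.2.2, Fintype.card_fin, two_mul]
      · rw [Finset.card_eq_zero, Finset.filter_eq_empty_iff]
        intro a _ h
        have := c4 r a
        omega
    intro x; rw [hx p hp, hx q hq]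
  let σ : Equiv.Perm (Fin n) := Equiv.ofFiberEquiv (f := c p) (g := c q)
    (fun x => Fintype.equivOfCardEq (hcard x))
  have hσ : ∀ a, c q (σ a) = c p a := fun a => Equiv.ofFiberEquiv_map _ a
  refine ⟨σ, ?_⟩
  apply Prod.ext
  · apply Subtype.ext
    ext a
    simp only [actP, actV, Finset.mem_map_equiv]
    rw [← c1, ← c1, ← hσ, Equiv.apply_symm_apply]
  · apply Subtype.ext
    ext a
    simp only [actP, actV, Finset.mem_map_equiv]
    rw [← c2 p hp, ← c2 q hq, ← hσ, Equiv.apply_symm_apply]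

lemma actP_fiber {n m : ℕ} (x0 x y : KV n m × KV n m) (h0 : x0 ∈ kdarts n m)
    (hx : x ∈ kdarts n m) (hy : y ∈ kdarts n m) :
    (Finset.univ.filter (fun σ : Equiv.Perm (Fin n) => actP σ x = y)).card =
    (Finset.univ.filter (fun σ : Equiv.Perm (Fin n) => actP σ x0 = x0)).card := by
  obtain ⟨α, hα⟩ := actP_trans x0 x h0 hx
  obtain ⟨β, hβ⟩ := actP_trans x0 y h0 hy
  have hβ' : actP β⁻¹ y = x0 := by rw [← hβ, ← actP_mul]; simp [actP_one]
  have hα' : actP α⁻¹ x = x0 := by rw [← hα, ← actP_mul]; simp [actP_one]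
  refine Finset.card_bij' (fun σ _ => β⁻¹ * σ * α) (fun σ _ => β * σ * α⁻¹) ?_ ?_ ?_ ?_
  · intro σ hσ
    simp only [Finset.mem_filter, Finset.mem_univ, true_and] at hσ ⊢
    rw [actP_mul, actP_mul, hα, hσ, hβ']
  · intro σ hσ
    simp only [Finset.mem_filter, Finset.mem_univ, true_and] at hσ ⊢
    rw [actP_mul, actP_mul, hα', hσ, hβ]
  · intro σ _; group
  · intro σ _; group

lemma actP_mem {n m : ℕ} (σ : Equiv.Perm (Fin n)) (p : KV n m × KV n m) (hp : p ∈ kdarts n m) :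
    actP σ p ∈ kdarts n m := by
  simp only [kdarts, Finset.mem_filter, Finset.mem_univ, true_and, actP, actV] at hp ⊢
  exact (Finset.disjoint_map _).2 hp

theorem mono_fraction (n m k : ℕ) (hm : 0 < m) (hn : 2 * m + k ≤ n) (f : KV n m → Fin k) :
    (kdarts n m).card ≤ (2*m+k+1)^(2*(k+1)) *
      ((kdarts n m).filter (fun p => f p.1 = f p.2)).card := by
  set M := (kdarts n m).filter (fun p => f p.1 = f p.2) with hM
  rcases (kdarts n m).eq_empty_or_nonempty with he | ⟨x0, h0⟩
  · rw [he]; simp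
  set s := (Finset.univ.filter (fun σ : Equiv.Perm (Fin n) => actP σ x0 = x0)).card with hs
  have hspos : 0 < s := by
    rw [hs, Finset.card_pos]
    exact ⟨1, by simp [actP_one]⟩
  have htot : ∀ (R : Finset (KV n m × KV n m)), R ⊆ kdarts n m → ∀ x ∈ kdarts n m,
      (Finset.univ.filter (fun σ : Equiv.Perm (Fin n) => actP σ x ∈ R)).card = R.card * s := by
    intro R hR x hx
    rw [Finset.card_eq_sum_card_fiberwise (f := fun σ => actP σ x) (t := R)]
    · rw [Finset.sum_const_nat (m := s)]
      intro y hy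
      rw [hs, ← actP_fiber x0 x y h0 hx (hR hy), Finset.filter_filter]
      congr 1
      ext σ
      simp only [Finset.mem_filter, Finset.mem_univ, true_and]
      constructor
      · exact fun h => h.2
      · intro h; exact ⟨h ▸ hy, h⟩
    · intro σ hσ
      simpa using hσ
  have hall : Fintype.card (Equiv.Perm (Fin n)) = (kdarts n m).card * s := by
    rw [← htot _ (le_refl _) x0 h0, Finset.filter_true_of_mem, Finset.card_univ]
    intro σ _; exact actP_mem σ x0 h0
  let ι : Fin (2*m+k) ↪ Fin n := Fin.castLEEmb hn
  let em : Finset (Fin (2*m+k)) → KV n m := fun A =>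
    if h : A.card = m then ⟨A.map ι, by rw [Finset.card_map, h]⟩ else x0.1
  have hem : ∀ A, A.card = m → (em A).1 = A.map ι := by
    intro A h; simp only [em, dif_pos h]
  let st := (Finset.univ : Finset (Finset (Fin (2*m+k)))).filter (fun T => stab m T)
  let Q := (st ×ˢ st).filter (fun p => Disjoint p.1 p.2)
  have hQ : Q.card ≤ (2*m+k+1)^(2*(k+1)) := by
    refine (Finset.card_filter_le _ _).trans ?_
    rw [Finset.card_product, mul_comm 2 (k+1), pow_mul, sq]
    exact Nat.mul_le_mul (card_stab m k) (card_stab m k)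
  have hQd : ∀ p ∈ Q, (em p.1, em p.2) ∈ kdarts n m := by
    intro p hp
    simp only [Q, st, Finset.mem_filter, Finset.mem_product, Finset.mem_univ, true_and] at hp
    simp only [kdarts, Finset.mem_filter, Finset.mem_univ, true_and]
    rw [hem _ hp.1.1.1, hem _ hp.1.2.1]
    exact (Finset.disjoint_map _).2 hp.2
  have hcover : (Finset.univ : Finset (Equiv.Perm (Fin n))) ⊆
      Q.biUnion (fun p => Finset.univ.filter (fun σ => actP σ (em p.1, em p.2) ∈ M)) := by
    intro σ _
    obtain ⟨A, B, hA, hB, hd, hf⟩ := schrijver m k hm (fun A => (f (actV σ (em A))).val)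
      (fun A => (f (actV σ (em A))).2)
    have hq : (A, B) ∈ Q := by
      simp only [Q, st, Finset.mem_filter, Finset.mem_product, Finset.mem_univ, true_and]
      exact ⟨⟨hA, hB⟩, hd⟩
    rw [Finset.mem_biUnion]
    refine ⟨(A, B), hq, ?_⟩
    rw [Finset.mem_filter]
    refine ⟨Finset.mem_univ _, ?_⟩
    rw [hM, Finset.mem_filter]
    exact ⟨actP_mem σ _ (hQd _ hq), Fin.ext hf⟩
  have h1 := (Finset.card_le_card hcover).trans Finset.card_biUnion_le
  rw [Finset.sum_const_nat (m := M.card * s)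
    (fun p hp => htot M (Finset.filter_subset _ _) _ (hQd p hp)), Finset.card_univ, hall,
    ← mul_assoc] at h1
  exact (Nat.le_of_mul_le_mul_right h1 hspos).trans (Nat.mul_le_mul_right _ hQ)

lemma walk_split {V : Type*} (H : SimpleGraph V) (u v : V) {a b : V}
    (p : (H ⊔ SimpleGraph.edge u v).Walk a b) :
    (∃ p' : H.Walk a b, p'.length ≤ p.length) ∨
    (∃ (p1 : H.Walk a u) (p2 : H.Walk v b), p1.length + p2.length + 1 ≤ p.length) ∨
    (∃ (p1 : H.Walk a v) (p2 : H.Walk u b), p1.length + p2.length + 1 ≤ p.length) := by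
  induction p with
  | nil => exact Or.inl ⟨SimpleGraph.Walk.nil, le_refl _⟩
  | @cons a c b h p ih =>
    rw [SimpleGraph.sup_adj, SimpleGraph.edge_adj] at h
    rw [SimpleGraph.Walk.length_cons]
    rcases h with h | ⟨⟨rfl, rfl⟩ | ⟨rfl, rfl⟩, _⟩
    · rcases ih with ⟨p', hp⟩ | ⟨p1, p2, hp⟩ | ⟨p1, p2, hp⟩
      · exact Or.inl ⟨SimpleGraph.Walk.cons h p', by simpa using hp⟩
      · exact Or.inr (Or.inl ⟨SimpleGraph.Walk.cons h p1, p2, by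
          rw [SimpleGraph.Walk.length_cons]; omega⟩)
      · exact Or.inr (Or.inr ⟨SimpleGraph.Walk.cons h p1, p2, by
          rw [SimpleGraph.Walk.length_cons]; omega⟩)
    · rcases ih with ⟨p', hp⟩ | ⟨p1, p2, hp⟩ | ⟨p1, p2, hp⟩
      · exact Or.inr (Or.inl ⟨SimpleGraph.Walk.nil, p', by simpa using hp⟩)
      · exact Or.inr (Or.inl ⟨SimpleGraph.Walk.nil, p2, by simp; omega⟩)
      · exact Or.inl ⟨p2, by omega⟩
    · rcases ih with ⟨p', hp⟩ | ⟨p1, p2, hp⟩ | ⟨p1, p2, hp⟩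
      · exact Or.inr (Or.inr ⟨SimpleGraph.Walk.nil, p', by simpa using hp⟩)
      · exact Or.inl ⟨p2, by omega⟩
      · exact Or.inr (Or.inr ⟨SimpleGraph.Walk.nil, p2, by simp; omega⟩)

/-- every cycle has length at least `g`, edge-deletion form -/
def bigGirth {V : Type*} (g : ℕ) (H : SimpleGraph V) : Prop :=
  ∀ a b, H.Adj a b → ∀ p : (H.deleteEdges {s(a, b)}).Walk a b, g ≤ p.length + 1

lemma bigGirth_cycle {V : Type*} {g : ℕ} {H : SimpleGraph V} (h : bigGirth g H) (a : V)
    (w : H.Walk a a) (hw : w.IsCycle) : g ≤ w.length := by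
  cases w with
  | nil => exact absurd hw (by simp)
  | @cons _ b _ hab p =>
    rw [SimpleGraph.Walk.cons_isCycle_iff] at hw
    have hp : ∀ e ∈ p.edges, e ∈ (H.deleteEdges {s(b, a)}).edgeSet := by
      intro e he
      rw [SimpleGraph.edgeSet_deleteEdges]
      refine ⟨p.edges_subset_edgeSet he, ?_⟩
      intro h'
      rw [Set.mem_singleton_iff] at h'
      rw [h', Sym2.eq_swap] at he
      exact hw.2 he
    have := h b a hab.symm (p.transfer _ hp)
    simpa using this

lemma bigGirth_add {V : Type*} {g : ℕ} {H : SimpleGraph V} (h : bigGirth g H) (u v : V)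
    (huv : ∀ p : H.Walk u v, g < p.length) : bigGirth g (H ⊔ SimpleGraph.edge u v) := by
  intro a b hab p
  by_cases he : s(a, b) = s(u, v)
  · have hle : (H ⊔ SimpleGraph.edge u v).deleteEdges {s(a, b)} ≤ H := by
      intro x y hxy
      rw [SimpleGraph.deleteEdges_adj, SimpleGraph.sup_adj, SimpleGraph.edge_adj] at hxy
      obtain ⟨h1 | h1, h2⟩ := hxy
      · exact h1
      · exfalso; apply h2
        rw [he, Set.mem_singleton_iff, Sym2.eq_iff]
        tauto
    have hl : (p.mapLe hle).length = p.length := by simp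
    rw [Sym2.eq_iff] at he
    rcases he with ⟨rfl, rfl⟩ | ⟨rfl, rfl⟩
    · have := huv (p.mapLe hle); omega
    · have := huv (p.mapLe hle).reverse
      rw [SimpleGraph.Walk.length_reverse] at this; omega
  · have hab' : H.Adj a b := by
      rw [SimpleGraph.sup_adj, SimpleGraph.edge_adj] at hab
      rcases hab with h1 | h1
      · exact h1
      · exfalso; apply he; rw [Sym2.eq_iff]; tauto
    have hle : (H ⊔ SimpleGraph.edge u v).deleteEdges {s(a, b)} ≤
        H.deleteEdges {s(a, b)} ⊔ SimpleGraph.edge u v := by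
      intro x y hxy
      rw [SimpleGraph.deleteEdges_adj, SimpleGraph.sup_adj] at hxy
      rw [SimpleGraph.sup_adj, SimpleGraph.deleteEdges_adj]
      tauto
    have hle2 : H.deleteEdges {s(a, b)} ≤ H := SimpleGraph.deleteEdges_le _
    have hl : (p.mapLe hle).length = p.length := by simp
    rcases walk_split _ u v (p.mapLe hle) with ⟨p', hp⟩ | ⟨p1, p2, hp⟩ | ⟨p1, p2, hp⟩
    · have := h a b hab' p'; omega
    · have := huv (((p1.mapLe hle2).reverse.append (SimpleGraph.Walk.cons hab'
        SimpleGraph.Walk.nil)).append (p2.mapLe hle2).reverse)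
      simp at this
      omega
    · have := huv (((p2.mapLe hle2).append (SimpleGraph.Walk.cons hab'.symm
        SimpleGraph.Walk.nil)).append (p1.mapLe hle2))
      simp at this
      omega

noncomputable def dg {V : Type*} [Fintype V] (H : SimpleGraph V) (w : V) : ℕ :=
  (Finset.univ.filter (fun x => H.Adj w x)).card

lemma dg_bot {V : Type*} [Fintype V] (H : SimpleGraph V) (h : H = ⊥) (w : V) : dg H w = 0 := by
  unfold dg
  rw [Finset.card_eq_zero, Finset.filter_eq_empty_iff]
  intro x _
  rw [h]; simp

lemma dg_add0 {V : Type*} [Fintype V] (H H' : SimpleGraph V) (u v w : V)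
    (hH' : H' = H ⊔ SimpleGraph.edge u v) :
    dg H' w ≤ dg H w + (if w = u then 1 else 0) +
      (if w = v then 1 else 0) := by
  unfold dg
  have hs : Finset.univ.filter (fun x => H'.Adj w x) ⊆
      (Finset.univ.filter (fun x => H.Adj w x) ∪ (if w = u then {v} else ∅)) ∪
        (if w = v then {u} else ∅) := by
    intro x hx
    rw [Finset.mem_filter, hH', SimpleGraph.sup_adj, SimpleGraph.edge_adj] at hx
    obtain ⟨_, h | ⟨⟨rfl, rfl⟩ | ⟨rfl, rfl⟩, _⟩⟩ := hx
    · simp [h]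
    · simp
    · simp
  refine (Finset.card_le_card hs).trans ((Finset.card_union_le _ _).trans ?_)
  refine Nat.add_le_add ((Finset.card_union_le _ _).trans (Nat.add_le_add (le_refl _) ?_)) ?_
  · split_ifs <;> simp
  · split_ifs <;> simp

lemma dg_add {V : Type*} [Fintype V] (H : SimpleGraph V) (u v w : V) :
    dg (H ⊔ SimpleGraph.edge u v) w ≤ dg H w + (if w = u then 1 else 0) +
      (if w = v then 1 else 0) := dg_add0 H _ u v w rfl

noncomputable def ballF {V : Type*} [Fintype V] (H : SimpleGraph V) (i : ℕ) (u : V) : Finset V :=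
  Finset.univ.filter (fun v => ∃ p : H.Walk u v, p.length ≤ i)

lemma card_ballF {V : Type*} [Fintype V] (H : SimpleGraph V) (Δ : ℕ) (hΔ : ∀ w, dg H w ≤ Δ)
    (i : ℕ) : ∀ u, (ballF H i u).card ≤ (Δ+1)^i := by
  induction i with
  | zero =>
    intro u
    have : ballF H 0 u ⊆ {u} := by
      intro v hv
      obtain ⟨p, hp⟩ := (Finset.mem_filter.1 hv).2
      rw [Finset.mem_singleton]
      exact (SimpleGraph.Walk.eq_of_length_eq_zero (by omega : p.length = 0)).symm
    simpa using Finset.card_le_card this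
  | succ i ih =>
    intro u
    have hs : ballF H (i+1) u ⊆
        (insert u (Finset.univ.filter (fun x => H.Adj u x))).biUnion (ballF H i) := by
      intro v hv
      obtain ⟨p, hp⟩ := (Finset.mem_filter.1 hv).2
      rw [Finset.mem_biUnion]
      cases p with
      | nil => exact ⟨u, by simp, by
          rw [ballF, Finset.mem_filter]; exact ⟨Finset.mem_univ _, SimpleGraph.Walk.nil, by simp⟩⟩
      | @cons _ c _ h p =>
        refine ⟨c, by simp [h], ?_⟩
        rw [ballF, Finset.mem_filter]
        rw [SimpleGraph.Walk.length_cons] at hp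
        exact ⟨Finset.mem_univ _, p, by omega⟩
    refine (Finset.card_le_card hs).trans (Finset.card_biUnion_le.trans ?_)
    refine (Finset.sum_le_card_nsmul _ _ _ (fun w _ => ih w)).trans ?_
    rw [smul_eq_mul, pow_succ, mul_comm]
    apply Nat.mul_le_mul_left
    refine (Finset.card_insert_le _ _).trans ?_
    have := hΔ u
    unfold dg at this
    omega

lemma bern (x L : ℕ) : (x + L) * x ^ L ≤ x * (x + 1) ^ L := by
  induction L with
  | zero => simp
  | succ L ih =>
    calc (x + (L+1)) * x ^ (L+1) ≤ (x + L) * x ^ L * (x + 1) := by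
          rw [pow_succ]
          have : (x + (L+1)) * (x ^ L * x) + L * x ^ L = (x + L) * x ^ L * (x + 1) := by ring
          omega
      _ ≤ x * (x+1)^L * (x+1) := Nat.mul_le_mul_right _ ih
      _ = x * (x+1)^(L+1) := by ring

lemma pow_beat (q k : ℕ) (hq : 1 ≤ q) : k * (2*q-1)^(2*q*k) < (2*q)^(2*q*k) := by
  obtain ⟨x, hx⟩ : ∃ x, 2*q = x+1 := ⟨2*q-1, by omega⟩
  have hx1 : 1 ≤ x := by omega
  have e : 2*q-1 = x := by omega
  rw [e, hx]
  have h := bern x ((x+1)*k)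
  have h2 : x * ((k+1) * x^((x+1)*k)) ≤ x * (x+1)^((x+1)*k) := by
    refine le_trans ?_ h
    rw [← mul_assoc]
    apply Nat.mul_le_mul_right
    nlinarith
  have h3 := Nat.le_of_mul_le_mul_left h2 hx1
  have h4 : 0 < x^((x+1)*k) := Nat.pow_pos hx1
  nlinarith

noncomputable def propF {V : Type*} [Fintype V] (k : ℕ) (H : SimpleGraph V) :
    Finset (V → Fin k) :=
  Finset.univ.filter (fun f => ∀ a b, H.Adj a b → f a ≠ f b)

lemma mem_propF {V : Type*} [Fintype V] {k : ℕ} {H : SimpleGraph V} {f : V → Fin k} :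
    f ∈ propF k H ↔ ∀ a b, H.Adj a b → f a ≠ f b := by
  rw [propF, Finset.mem_filter]
  exact ⟨fun h => h.2, fun h => ⟨Finset.mem_univ _, h⟩⟩

lemma card_propF_le {V : Type*} [Fintype V] (k : ℕ) (H : SimpleGraph V) :
    (propF k H).card ≤ k ^ Fintype.card V := by
  refine (Finset.card_le_univ _).trans ?_
  rw [Fintype.card_fun, Fintype.card_fin]

lemma pair_count {V : Type*} [Fintype V] (R : V → V → Prop) (s : Finset (V × V))
    (hs : ∀ p, p ∈ s ↔ R p.1 p.2) (t : V → Finset V) (ht : ∀ u v, v ∈ t u ↔ R u v) :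
    s.card = ∑ u, (t u).card := by
  rw [← Finset.card_sigma]
  refine Finset.card_bij' (fun p _ => ⟨p.1, p.2⟩) (fun p _ => (p.1, p.2)) ?_ ?_ ?_ ?_
  · intro p hp; rw [Finset.mem_sigma]; exact ⟨Finset.mem_univ _, (ht _ _).2 ((hs _).1 hp)⟩
  · intro p hp; rw [Finset.mem_sigma] at hp; exact (hs _).2 ((ht _ _).1 hp.2)
  · intro p _; rfl
  · intro p _; rfl

lemma shrink_step (F a b c q : ℕ) (hq : 1 ≤ q) (h1 : a ≤ c) (h2 : b + c = F)
    (hp : F ≤ 2 * q * b) : a * (2*q) ≤ F * (2*q-1) := by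
  obtain ⟨x, hx⟩ : ∃ x, 2*q = x+1 := ⟨2*q-1, by omega⟩
  have e : 2*q-1 = x := by omega
  rw [e, hx]
  rw [hx] at hp
  nlinarith

lemma not_colorable_of_propF {V : Type*} [Fintype V] {k : ℕ} {H : SimpleGraph V}
    (h : propF k H = ∅) : ¬ H.Colorable k := by
  rintro ⟨C⟩
  have : (fun a => C a) ∈ propF k H := by
    rw [propF, Finset.mem_filter]
    exact ⟨Finset.mem_univ _, fun a b hab => C.valid hab⟩
  rw [h] at this
  simp at this

set_option maxHeartbeats 2000000 in
theorem greedy {V : Type*} [Fintype V] [Nonempty V] (G : SimpleGraph V) (k g q D : ℕ)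
    (hk : 1 ≤ k) (hq : 1 ≤ q) (hreg : ∀ v, dg G v = D)
    (hmono : ∀ f : V → Fin k, Fintype.card V * D ≤ q *
      ((Finset.univ : Finset (V × V)).filter (fun p => G.Adj p.1 p.2 ∧ f p.1 = f p.2)).card)
    (hD : 4 * q * (32 * q^2 * k + 1)^g ≤ D) :
    ∃ H : SimpleGraph V, H ≤ G ∧ ¬ H.Colorable k ∧ bigGirth g H := by
  set N := Fintype.card V with hN
  have hNpos : 0 < N := Fintype.card_pos
  set Δ := 32 * q^2 * k with hΔ
  by_contra hcon
  have main : ∀ j, j ≤ 2*q*k*N → ∃ H : SimpleGraph V, H ≤ G ∧ bigGirth g H ∧ (∀ w, dg H w ≤ Δ) ∧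
      ∑ w, dg H w ≤ 2 * j ∧ (propF k H).card * (2*q)^j ≤ k^N * (2*q-1)^j := by
    intro j
    induction j with
    | zero =>
      intro _
      refine ⟨⊥, bot_le, ?_, ?_, ?_, ?_⟩
      · intro a b h; simp at h
      · intro w; rw [dg_bot _ rfl]; exact Nat.zero_le _
      · rw [Finset.sum_eq_zero (fun w _ => dg_bot _ rfl w)]; exact Nat.zero_le _
      · rw [pow_zero, pow_zero, mul_one, mul_one]
        exact card_propF_le k _
    | succ j ih =>
      intro hj
      obtain ⟨H, hHG, hg, hdeg, hsum, hF⟩ := ih (by omega)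
      have hFne : (propF k H).Nonempty := by
        rw [Finset.nonempty_iff_ne_empty]
        intro h
        exact hcon ⟨H, hHG, not_colorable_of_propF h, hg⟩
      -- saturated vertices
      set sat := Finset.univ.filter (fun w => Δ ≤ dg H w) with hsat
      have hsatc : 8 * q * sat.card ≤ N := by
        have h1 : sat.card * Δ ≤ ∑ w, dg H w := by
          calc sat.card * Δ ≤ ∑ w ∈ sat, dg H w := by
                rw [← smul_eq_mul]
                exact Finset.card_nsmul_le_sum _ _ _ (fun w hw => (Finset.mem_filter.1 hw).2)
            _ ≤ _ := Finset.sum_le_sum_of_subset (Finset.subset_univ _)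
        have h2 : (4*q*k) * (8 * q * sat.card) ≤ (4*q*k) * N := by
          calc (4*q*k) * (8 * q * sat.card) = sat.card * Δ := by rw [hΔ]; ring
            _ ≤ 2 * j := h1.trans hsum
            _ ≤ 2 * (2*q*k*N) := by omega
            _ = _ := by ring
        exact Nat.le_of_mul_le_mul_left h2 (by positivity)
      set B1 := (Finset.univ : Finset (V × V)).filter (fun p => p.2 ∈ ballF H g p.1) with hB1
      set B2 := (Finset.univ : Finset (V × V)).filter (fun p => G.Adj p.1 p.2 ∧ p.1 ∈ sat) with hB2
      set B3 := (Finset.univ : Finset (V × V)).filter (fun p => G.Adj p.1 p.2 ∧ p.2 ∈ sat) with hB3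
      set A := (Finset.univ : Finset (V × V)).filter (fun p => G.Adj p.1 p.2 ∧
        p.2 ∉ ballF H g p.1 ∧ p.1 ∉ sat ∧ p.2 ∉ sat) with hA
      have cB1 : 4 * q * B1.card ≤ N * D := by
        have : B1.card ≤ N * (Δ+1)^g := by
          rw [pair_count (fun u v => v ∈ ballF H g u) B1 (by intro p; simp [hB1])
            (fun u => ballF H g u) (fun u v => Iff.rfl)]
          refine (Finset.sum_le_card_nsmul _ _ ((Δ+1)^g) ?_).trans ?_
          · intro u _
            exact card_ballF H Δ hdeg g u
          · rw [smul_eq_mul, Finset.card_univ]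
        calc 4 * q * B1.card ≤ 4 * q * (N * (Δ+1)^g) := Nat.mul_le_mul_left _ this
          _ = N * (4 * q * (Δ+1)^g) := by ring
          _ ≤ N * D := Nat.mul_le_mul_left _ hD
      have cB2 : B2.card ≤ sat.card * D := by
        rw [pair_count (fun u v => G.Adj u v ∧ u ∈ sat) B2 (by intro p; simp [hB2])
          (fun u => if u ∈ sat then Finset.univ.filter (fun x => G.Adj u x) else ∅) (by
            intro u v
            by_cases h : u ∈ sat
            · rw [if_pos h, Finset.mem_filter]; simp [h]
            · rw [if_neg h]; simp [h])]
        calc _ = ∑ u, (if u ∈ sat then D else 0) := by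
              apply Finset.sum_congr rfl
              intro u _
              by_cases h : u ∈ sat
              · rw [if_pos h, if_pos h]; exact hreg u
              · rw [if_neg h, if_neg h]; rfl
          _ = sat.card * D := by simp
          _ ≤ _ := le_refl _
      have cB3 : B3.card ≤ B2.card := by
        refine Finset.card_le_card_of_injOn Prod.swap ?_ (Prod.swap_injective.injOn)
        intro p hp
        rw [hB3, Finset.mem_coe, Finset.mem_filter] at hp
        rw [hB2, Finset.mem_coe, Finset.mem_filter]
        exact ⟨Finset.mem_univ _, hp.2.1.symm, hp.2.2⟩
      have cB23 : 4 * q * (B2.card + B3.card) ≤ N * D := by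
        calc 4 * q * (B2.card + B3.card) ≤ 4 * q * (sat.card * D + sat.card * D) :=
              Nat.mul_le_mul_left _ (by omega)
          _ = (8 * q * sat.card) * D := by ring
          _ ≤ N * D := Nat.mul_le_mul_right _ hsatc
      have cA : A.card ≤ N * D := by
        calc A.card ≤ ((Finset.univ : Finset (V × V)).filter (fun p => G.Adj p.1 p.2)).card := by
              apply Finset.card_le_card
              intro p hp
              rw [hA, Finset.mem_filter] at hp
              rw [Finset.mem_filter]; exact ⟨hp.1, hp.2.1⟩
          _ = ∑ u, D := by
              rw [pair_count (fun u v => G.Adj u v) _ (by intro p; simp)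
                (fun u => Finset.univ.filter (fun x => G.Adj u x)) (by intro u v; simp)]
              exact Finset.sum_congr rfl (fun u _ => hreg u)
          _ = N * D := by simp [hN]
      have hAf : ∀ f : V → Fin k, N * D ≤ 2 * q * (A.filter (fun p => f p.1 = f p.2)).card := by
        intro f
        have h1 := hmono f
        have h2 : (Finset.univ : Finset (V × V)).filter (fun p => G.Adj p.1 p.2 ∧ f p.1 = f p.2) ⊆
            A.filter (fun p => f p.1 = f p.2) ∪ (B1 ∪ (B2 ∪ B3)) := by
          intro p hp
          rw [Finset.mem_filter] at hp
          simp only [hA, hB1, hB2, hB3, Finset.mem_union, Finset.mem_filter, Finset.mem_univ,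
            true_and]
          tauto
        have h3 := Finset.card_le_card h2
        have h4 := Finset.card_union_le (A.filter (fun p => f p.1 = f p.2)) (B1 ∪ (B2 ∪ B3))
        have h5 := Finset.card_union_le B1 (B2 ∪ B3)
        have h6 := Finset.card_union_le B2 B3
        nlinarith
      have hex : ∃ p ∈ A, (propF k H).card ≤
          2 * q * ((propF k H).filter (fun f => f p.1 = f p.2)).card := by
        by_contra hno
        push Not at hno
        have hND : 0 < N * D := by
          apply Nat.mul_pos hNpos
          refine lt_of_lt_of_le ?_ hD
          positivity
        have hAne : A.Nonempty := by
          obtain ⟨f, _⟩ := hFne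
          have := hAf f
          by_contra h
          rw [Finset.not_nonempty_iff_eq_empty] at h
          rw [h] at this
          rw [Finset.filter_empty, Finset.card_empty, mul_zero] at this
          omega
        have h1 : ∑ p ∈ A, 2 * q * ((propF k H).filter (fun f => f p.1 = f p.2)).card <
            ∑ p ∈ A, (propF k H).card := Finset.sum_lt_sum_of_nonempty hAne hno
        have h2 : ∑ p ∈ A, ((propF k H).filter (fun f => f p.1 = f p.2)).card =
            ∑ f ∈ propF k H, (A.filter (fun p => f p.1 = f p.2)).card := by
          simp only [Finset.card_filter]
          exact Finset.sum_comm
        rw [← Finset.mul_sum, h2, Finset.mul_sum, Finset.sum_const, smul_eq_mul] at h1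
        have h3 : (propF k H).card * (N * D) ≤
            ∑ f ∈ propF k H, 2 * q * (A.filter (fun p => f p.1 = f p.2)).card := by
          rw [← smul_eq_mul]
          exact Finset.card_nsmul_le_sum _ _ _ (fun f _ => hAf f)
        have h4 : A.card * (propF k H).card ≤ N * D * (propF k H).card := Nat.mul_le_mul_right _ cA
        rw [mul_comm (N * D)] at h4
        exact absurd (h1.trans_le (h4.trans h3)) (lt_irrefl _)
      obtain ⟨⟨u, v⟩, hpA, hp⟩ := hex
      rw [hA, Finset.mem_filter] at hpA
      obtain ⟨_, huv, hball, hsu, hsv⟩ := hpA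
      simp only at huv hball hsu hsv hp
      have hne : u ≠ v := huv.ne
      refine ⟨H ⊔ SimpleGraph.edge u v, ?_, ?_, ?_, ?_, ?_⟩
      · apply sup_le hHG
        intro x y hxy
        rw [SimpleGraph.edge_adj] at hxy
        rcases hxy with ⟨⟨rfl, rfl⟩ | ⟨rfl, rfl⟩, _⟩
        · exact huv
        · exact huv.symm
      · apply bigGirth_add hg
        intro p
        by_contra h
        apply hball
        rw [ballF, Finset.mem_filter]
        exact ⟨Finset.mem_univ _, p, by omega⟩
      · intro w
        have h1 := dg_add H u v w
        have hsu' : dg H u < Δ := by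
          rw [hsat, Finset.mem_filter] at hsu; by_contra h; exact hsu ⟨Finset.mem_univ _, by omega⟩
        have hsv' : dg H v < Δ := by
          rw [hsat, Finset.mem_filter] at hsv; by_contra h; exact hsv ⟨Finset.mem_univ _, by omega⟩
        have h2 := hdeg w
        by_cases e1 : w = u
        · have e2 : w ≠ v := fun h => hne (e1.symm.trans h)
          rw [if_pos e1, if_neg e2] at h1
          rw [← e1] at hsu'; omega
        · rw [if_neg e1] at h1
          by_cases e2 : w = v
          · rw [if_pos e2] at h1; rw [← e2] at hsv'; omega
          · rw [if_neg e2] at h1; omega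
      · calc ∑ w, dg (H ⊔ SimpleGraph.edge u v) w ≤ ∑ w, (dg H w + (if w = u then 1 else 0) +
              (if w = v then 1 else 0)) := Finset.sum_le_sum (fun w _ => dg_add H u v w)
          _ = ∑ w, dg H w + 1 + 1 := by
              rw [Finset.sum_add_distrib, Finset.sum_add_distrib]; simp
          _ ≤ _ := by omega
      · have hsub : propF k (H ⊔ SimpleGraph.edge u v) ⊆
            (propF k H).filter (fun f => ¬ f u = f v) := by
          intro f hf
          rw [mem_propF] at hf
          rw [Finset.mem_filter, mem_propF]
          refine ⟨fun a b hab => hf a b (Or.inl hab), ?_⟩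
          apply hf
          right
          rw [SimpleGraph.edge_adj]; tauto
        have h1 := Finset.card_le_card hsub
        have h2 := Finset.card_filter_add_card_filter_not (s := propF k H) (fun f => f u = f v)
        have h3 : (propF k (H ⊔ SimpleGraph.edge u v)).card * (2*q) ≤
            (propF k H).card * (2*q-1) := shrink_step _ _ _ _ q hq h1 h2 hp
        calc (propF k (H ⊔ SimpleGraph.edge u v)).card * (2*q)^(j+1)
            = (propF k (H ⊔ SimpleGraph.edge u v)).card * (2*q) * (2*q)^j := by ring
          _ ≤ (propF k H).card * (2*q-1) * (2*q)^j := Nat.mul_le_mul_right _ h3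
          _ = (propF k H).card * (2*q)^j * (2*q-1) := by ring
          _ ≤ k^N * (2*q-1)^j * (2*q-1) := Nat.mul_le_mul_right _ hF
          _ = _ := by ring
  obtain ⟨H, hHG, hg, _, _, hF⟩ := main (2*q*k*N) (le_refl _)
  apply hcon
  refine ⟨H, hHG, not_colorable_of_propF ?_, hg⟩
  by_contra hne
  have hpos : 1 ≤ (propF k H).card := Finset.card_pos.2 (Finset.nonempty_iff_ne_empty.2 hne)
  have h1 := pow_beat q k hq
  have h2 := Nat.pow_lt_pow_left h1 hNpos.ne'
  rw [mul_pow, ← pow_mul, ← pow_mul] at h2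
  have h3 : (2*q)^(2*q*k*N) ≤ (propF k H).card * (2*q)^(2*q*k*N) := Nat.le_mul_of_pos_left _ hpos
  omega

lemma numeric (K g : ℕ) : ∃ h, ∀ m c : ℕ, 0 < m → h ≤ c →
    4 * (2*m+K+1)^(2*(K+1)) * (32 * ((2*m+K+1)^(2*(K+1)))^2 * K + 1)^g ≤ (m+c).choose m := by
  set e := 2*(K+1)*(2*g+1) with he
  set B := 4 * (32*K+1)^g * (K+3)^e with hB
  set m0 := B * (e+1).factorial with hm0
  refine ⟨e + 1 + B * m0^e, fun m c hm hc => ?_⟩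
  have h1 : 4 * (2*m+K+1)^(2*(K+1)) * (32 * ((2*m+K+1)^(2*(K+1)))^2 * K + 1)^g ≤ B * m^e := by
    set q := (2*m+K+1)^(2*(K+1)) with hq
    have hq1 : 1 ≤ q^2 := Nat.one_le_pow _ _ (Nat.pow_pos (by omega))
    calc 4 * q * (32 * q^2 * K + 1)^g ≤ 4 * q * ((32*K+1) * q^2)^g := by
          apply Nat.mul_le_mul_left
          apply Nat.pow_le_pow_left
          nlinarith
      _ = 4 * (32*K+1)^g * q^(2*g+1) := by rw [mul_pow, ← pow_mul]; ring
      _ = 4 * (32*K+1)^g * (2*m+K+1)^e := by rw [hq, he, ← pow_mul]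
      _ ≤ 4 * (32*K+1)^g * ((K+3) * m)^e := by
          apply Nat.mul_le_mul_left
          apply Nat.pow_le_pow_left
          nlinarith
      _ = B * m^e := by rw [hB, mul_pow]; ring
  refine h1.trans ?_
  by_cases hmm : m0 ≤ m
  · have h2 : (m+(e+1)).choose m ≤ (m+c).choose m := Nat.choose_le_choose _ (by omega)
    refine le_trans ?_ h2
    have h3 := Nat.pow_sub_le_descFactorial (m+(e+1)) (e+1)
    rw [Nat.descFactorial_eq_factorial_mul_choose, show m + (e+1) + 1 - (e+1) = m+1 by omega] at h3
    rw [show (m+(e+1)).choose m = (m+(e+1)).choose (e+1) from Nat.choose_symm_add]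
    have hf : 0 < (e+1).factorial := Nat.factorial_pos _
    apply Nat.le_of_mul_le_mul_left _ hf
    refine le_trans ?_ h3
    calc (e+1).factorial * (B * m^e) = m0 * m^e := by rw [hm0]; ring
      _ ≤ (m+1) * (m+1)^e := Nat.mul_le_mul (by omega) (Nat.pow_le_pow_left (by omega) _)
      _ = (m+1)^(e+1) := by ring
  · have h2 : B * m^e ≤ B * m0^e := Nat.mul_le_mul_left _ (Nat.pow_le_pow_left (by omega) _)
    have h3 : c + 1 ≤ (m+c).choose m := by
      rw [Nat.choose_symm_add]
      calc c + 1 = (1+c).choose c := by rw [Nat.add_comm 1 c, Nat.choose_succ_self_right]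
        _ ≤ _ := Nat.choose_le_choose _ (by omega)
    omega

lemma kneser_adj (n m : ℕ) (hm : 0 < m) (a b : KV n m) :
    (kneser n m).Adj a b ↔ Disjoint a.1 b.1 := by
  unfold kneser
  rw [SimpleGraph.fromRel_adj]
  constructor
  · rintro ⟨_, h | h⟩
    · exact h
    · exact h.symm
  · intro h
    refine ⟨?_, Or.inl h⟩
    rintro rfl
    rw [disjoint_self] at h
    have := a.2
    rw [h] at this
    simp at this
    omega

lemma dg_kneser (n m : ℕ) (hm : 0 < m) (a : KV n m) :
    dg (kneser n m) a = (n - m).choose m := by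
  have h1 : ((a.1)ᶜ.powersetCard m).card = (n-m).choose m := by
    rw [Finset.card_powersetCard, Finset.card_compl, a.2, Fintype.card_fin]
  rw [← h1]
  unfold dg
  refine Finset.card_bij (fun b _ => b.1) ?_ ?_ ?_
  · intro b hb
    rw [Finset.mem_filter, kneser_adj n m hm] at hb
    rw [Finset.mem_powersetCard]
    refine ⟨?_, b.2⟩
    intro x hx
    rw [Finset.mem_compl]
    exact fun h => Finset.disjoint_left.1 hb.2 h hx
  · intro b _ b' _ h
    exact Subtype.ext h
  · intro b hb
    rw [Finset.mem_powersetCard] at hb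
    refine ⟨⟨b, hb.2⟩, ?_, rfl⟩
    rw [Finset.mem_filter, kneser_adj n m hm]
    refine ⟨Finset.mem_univ _, ?_⟩
    rw [Finset.disjoint_left]
    intro x hx hx'
    exact Finset.mem_compl.1 (hb.1 hx') hx

lemma mem_kdarts (n m : ℕ) (p : KV n m × KV n m) : p ∈ kdarts n m ↔ Disjoint p.1.1 p.2.1 := by
  rw [kdarts, Finset.mem_filter]
  exact ⟨fun h => h.2, fun h => ⟨Finset.mem_univ _, h⟩⟩

theorem erdos_hajnal_for_kneser (k g : ℕ) (hk : 0 < k) (hg : 0 < g) :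
    ∃ h : ℕ, ∀ n m : ℕ, 0 < m → 2 * m ≤ n → h ≤ n - 2 * m + 2 →
      ∃ H : (kneser n m).Subgraph,
        (k : ℕ∞) ≤ H.coe.chromaticNumber ∧ (g : ℕ∞) ≤ H.coe.girth := by
  obtain ⟨h0, hnum⟩ := numeric (k+2) g
  refine ⟨h0 + (k+2) + 2, fun n m hm hmn hh => ?_⟩
  have hV : Nonempty (KV n m) := by
    obtain ⟨s, hs, hs2⟩ := Finset.exists_subset_card_eq (s := (Finset.univ : Finset (Fin n)))
      (n := m) (by rw [Finset.card_univ, Fintype.card_fin]; omega)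
    exact ⟨⟨s, hs2⟩⟩
  have hD := hnum m (n - 2*m) hm (by omega)
  rw [show m + (n - 2*m) = n - m by omega] at hD
  have hdarts : (kdarts n m).card = Fintype.card (KV n m) * (n-m).choose m := by
    rw [pair_count (fun a b => (kneser n m).Adj a b) (kdarts n m)
      (fun p => by rw [mem_kdarts, kneser_adj n m hm])
      (fun a => Finset.univ.filter (fun b => (kneser n m).Adj a b)) (fun a b => by simp)]
    refine (Finset.sum_congr rfl (fun a _ => dg_kneser n m hm a)).trans ?_
    rw [Finset.sum_const, Finset.card_univ, smul_eq_mul]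
  obtain ⟨H, hHG, hcol, hgir⟩ := greedy (kneser n m) (k+2) g ((2*m+(k+2)+1)^(2*((k+2)+1)))
    ((n-m).choose m) (by omega) (Nat.one_le_pow _ _ (by omega)) (dg_kneser n m hm) (by
      intro f
      have h1 := mono_fraction n m (k+2) hm (by omega) f
      rw [hdarts] at h1
      refine h1.trans (Nat.mul_le_mul_left _ (Finset.card_le_card ?_))
      intro p hp
      rw [Finset.mem_filter, mem_kdarts] at hp
      rw [Finset.mem_filter, kneser_adj n m hm]
      exact ⟨Finset.mem_univ _, hp⟩) hD
  refine ⟨SimpleGraph.toSubgraph H hHG, ?_, ?_⟩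
  · rw [SimpleGraph.le_chromaticNumber_iff_colorable]
    intro j hj
    by_contra hlt
    have hjk : j < k := by
      by_contra h
      exact hlt (by exact_mod_cast (not_lt.1 h))
    apply hcol
    refine SimpleGraph.Colorable.mono (by omega : j ≤ k+2) ?_
    exact hj.of_hom ((SimpleGraph.toSubgraph H hHG).spanningCoeEquivCoeOfSpanning
      (SimpleGraph.toSubgraph.isSpanning H hHG)).toHom
  · have e := ((SimpleGraph.toSubgraph H hHG).spanningCoeEquivCoeOfSpanning
      (SimpleGraph.toSubgraph.isSpanning H hHG)).girth_eq
    rw [← e]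
    have hac : ¬ H.IsAcyclic := fun h =>
      hcol (SimpleGraph.Colorable.mono (by omega : 2 ≤ k+2) h.colorable_two)
    obtain ⟨a, w, hw, hl⟩ := SimpleGraph.exists_girth_eq_length.2 hac
    have := bigGirth_cycle hgir a w hw
    rw [← hl] at this
    exact_mod_cast this
end
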